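/- There exists a finitely presented group G = ⟨A | R⟩ whose Dehn function is equivalent to n^2 (i.e., G has quadratic Dehn function) and whose conjugacy problem is undecidable (the set of pairs of words over A^{±1} that are conjugate in G is not recursive). -/

import Mathlib

/-- `AreaLE R w N` says that the word `w` (in the alphabet `(Fin a)^{±1}`) is equal, in
the free group on `Fin a`, to a product of at most `N` conjugates of relators from
`R^{±1}`; i.e. that `Area(w) ≤ N`. -/
def AreaLE {a : ℕ} (R : Finset (FreeGroup (Fin a)))
    (w : List (Fin a × Bool)) (N : ℕ) : Prop :=
  ∃ g r : Fin N → FreeGroup (Fin a),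
    (∀ i, r i ∈ R ∨ (r i)⁻¹ ∈ R) ∧
      FreeGroup.mk w = (List.ofFn fun i => g i * r i * (g i)⁻¹).prod

/-- the area of a word (representing `1` in the presented group) -/
noncomputable def wordArea {a : ℕ} (R : Finset (FreeGroup (Fin a)))
    (w : List (Fin a × Bool)) : ℕ :=
  sInf {N | AreaLE R w N}

/-- the Dehn function of the finite presentation `⟨Fin a ∣ R⟩`:
`d(n) = max {Area(w) : ‖w‖ ≤ n, w = 1 in the group}` -/
noncomputable def dehn {a : ℕ} (R : Finset (FreeGroup (Fin a))) (n : ℕ) : ℕ :=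
  sSup {N | ∃ w : List (Fin a × Bool), w.length ≤ n ∧
    FreeGroup.mk w ∈ Subgroup.normalClosure (R : Set (FreeGroup (Fin a))) ∧
    N = wordArea R w}

/-- equivalence of functions: `(1/A) f(n/B) − Cn − D < g(n) < A f(Bn) + Cn + D`
for some constants `A, B, C, D ≥ 1` -/
def FunEquiv (f g : ℕ → ℕ) : Prop :=
  ∃ A B C D : ℕ, 1 ≤ A ∧ 1 ≤ B ∧ 1 ≤ C ∧ 1 ≤ D ∧
    ∀ n, f (n / B) < A * (g n + C * n + D) ∧ g n < A * f (B * n) + C * n + D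

/-!
Let `A = ℤ[1/6]^(k+1)`, on which `ℤ²` acts by the scalars `2 ^ a * 3 ^ b`. The group `G` is a
multiple HNN extension of `A ⋊ ℤ²` whose stable letters conjugate by the affine rules of a modular
machine with `k` registers; the modulus of the machine is prime to `6`. Conjugation of a translation
vector by a stable letter performs a step of the machine, so an undecidable reachability problem for
the machine is a conjugacy problem in `G`.

The Dehn function is quadratic because of the three places `∞`, `2`, `3` of `ℤ[1/6]`. The group acts
on its Bass-Serre tree, on `ℤ²` by translations and on `ℚ^(k+1)` by affine maps, and an element is
coarsely determined by a vertex, a level in `ℤ²` and a vector at each of the three places. For each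
place there is a direction of `ℤ²` that contracts distances at the two other places. Hence a loop
whose vector at this place stays nearly constant can be coned off in this direction with quadratic
area. A combing that changes the vectors at the three places one at a time reduces triangles, and
by bisection all loops, to loops of this kind. For the lower bound, a homomorphism to `ℤ²` along
which two commuting elements have independent images is lifted to the Heisenberg group.
-/

namespace QuadraticDehn

/-! ### Area -/

section Area

variable {F : Type*} [Group F] {R : Set F} {m n : ℕ}

/-- `HasArea R n z`: the element `z` is a product of `n` conjugates of elements of `R`. This is the
version of `AreaLE` for an arbitrary ambient group; inverses of relators are only allowed if they
lie in `R`. -/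
inductive HasArea (R : Set F) : ℕ → F → Prop
  | one : HasArea R 0 1
  | conj_mul {n : ℕ} {z : F} (hz : HasArea R n z) (g r : F) (hr : r ∈ R) :
      HasArea R (n + 1) (g * r * g⁻¹ * z)

namespace HasArea

variable {z z' : F}

theorem mul (hz : HasArea R n z) (hz' : HasArea R m z') : HasArea R (n + m) (z * z') := by
  induction hz with
  | one => simpa using hz'
  | conj_mul _ g r hr ih => simpa [mul_assoc, add_right_comm] using ih.conj_mul g r hr

theorem conj (hz : HasArea R n z) (g : F) : HasArea R n (g * z * g⁻¹) := by
  induction hz with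
  | one => simpa using HasArea.one
  | conj_mul _ g' r hr ih => simpa [mul_assoc] using ih.conj_mul (g * g') r hr

theorem of_mem {r : F} (hr : r ∈ R) : HasArea R 1 r := by
  simpa using HasArea.one.conj_mul 1 r hr

theorem mono (one_mem : (1 : F) ∈ R) (hnm : n ≤ m) (hz : HasArea R n z) : HasArea R m z := by
  induction hnm with
  | refl => exact hz
  | step _ ih => simpa using ih.conj_mul 1 1 one_mem

theorem inv (inv_mem : ∀ r ∈ R, r⁻¹ ∈ R) (hz : HasArea R n z) : HasArea R n z⁻¹ := by
  induction hz with
  | one => simpa using HasArea.one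
  | conj_mul _ g r hr ih =>
    simpa [mul_assoc] using ih.mul ((of_mem (inv_mem r hr)).conj g)

theorem mem_normalClosure (hz : HasArea R n z) : z ∈ Subgroup.normalClosure R := by
  induction hz with
  | one => exact one_mem _
  | conj_mul _ g r hr ih =>
    exact mul_mem (Subgroup.normalClosure_normal.conj_mem r (Subgroup.subset_normalClosure hr) g) ih

theorem exists_prod_conj (hz : HasArea R n z) :
    ∃ g r : Fin n → F, (∀ i, r i ∈ R) ∧ z = (List.ofFn fun i => g i * r i * (g i)⁻¹).prod := by
  induction hz with
  | one => exact ⟨1, 1, fun i => i.elim0, by simp⟩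
  | conj_mul _ g r hr ih =>
    obtain ⟨gs, rs, hrs, hprod⟩ := ih
    refine ⟨Fin.cons g gs, Fin.cons r rs, Fin.cases hr hrs, ?_⟩
    simp [List.ofFn_succ, hprod]

theorem areaLE {a : ℕ} {R : Finset (FreeGroup (Fin a))} {w : List (Fin a × Bool)}
    (hw : HasArea (R : Set (FreeGroup (Fin a))) n (FreeGroup.mk w)) : AreaLE R w n := by
  obtain ⟨g, r, hr, hprod⟩ := hw.exists_prod_conj
  exact ⟨g, r, fun i => Or.inl (by simpa using hr i), hprod⟩

end HasArea

/-- `AreaClose R n x y`: the elements `x` and `y` agree up to `n` applications of relators. -/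
def AreaClose (R : Set F) (n : ℕ) (x y : F) : Prop := HasArea R n (x * y⁻¹)

namespace AreaClose

variable {x y z x' y' : F}

theorem refl (x : F) : AreaClose R 0 x x := by simpa [AreaClose] using HasArea.one

theorem mono (one_mem : (1 : F) ∈ R) (hnm : n ≤ m) (h : AreaClose R n x y) : AreaClose R m x y :=
  HasArea.mono one_mem hnm h

theorem symm (inv_mem : ∀ r ∈ R, r⁻¹ ∈ R) (h : AreaClose R n x y) : AreaClose R n y x := by
  simpa [AreaClose] using HasArea.inv inv_mem h

theorem trans (h : AreaClose R n x y) (h' : AreaClose R m y z) : AreaClose R (n + m) x z := by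
  simpa [AreaClose, mul_assoc] using HasArea.mul h h'

theorem mul_left (h : AreaClose R n x y) (a : F) : AreaClose R n (a * x) (a * y) := by
  simpa [AreaClose, mul_assoc] using HasArea.conj h a

theorem mul_right (h : AreaClose R n x y) (a : F) : AreaClose R n (x * a) (y * a) := by
  simpa [AreaClose, mul_assoc] using h

theorem mul (h : AreaClose R n x y) (h' : AreaClose R m x' y') :
    AreaClose R (n + m) (x * x') (y * y') :=
  (h.mul_right x').trans (h'.mul_left y)

end AreaClose

end Area

/-! ### The taxicab norm, tree adjacency -/

section Taxicab

/-- The taxicab norm on `ℤ²`. -/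
def taxicab (k : ℤ × ℤ) : ℕ := k.1.natAbs + k.2.natAbs

theorem taxicab_zero : taxicab 0 = 0 := by simp [taxicab]

theorem taxicab_neg (k : ℤ × ℤ) : taxicab (-k) = taxicab k := by simp [taxicab]

theorem taxicab_add_le (k l : ℤ × ℤ) : taxicab (k + l) ≤ taxicab k + taxicab l := by
  simp only [taxicab, Prod.fst_add, Prod.snd_add]; omega

theorem taxicab_sub_le (k l : ℤ × ℤ) : taxicab (k - l) ≤ taxicab k + taxicab l := by
  simp only [taxicab, Prod.fst_sub, Prod.snd_sub]; omega

theorem taxicab_sub_comm (k l : ℤ × ℤ) : taxicab (k - l) = taxicab (l - k) := by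
  rw [← taxicab_neg, neg_sub]

theorem taxicab_nsmul (n : ℕ) (k : ℤ × ℤ) : taxicab (n • k) = n * taxicab k := by
  simp [taxicab, Int.natAbs_mul, mul_add]

/-- The nearest-point projection of `ℤ²` onto the box `[-s, s]²`. -/
def clampBox (s : ℕ) (k : ℤ × ℤ) : ℤ × ℤ := (max (-s) (min s k.1), max (-s) (min s k.2))

theorem clampBox_zero (k : ℤ × ℤ) : clampBox 0 k = 0 := by
  ext <;> simp only [clampBox, Prod.fst_zero, Prod.snd_zero] <;> omega

theorem clampBox_eq_self {s : ℕ} {k : ℤ × ℤ} (h : taxicab k ≤ s) : clampBox s k = k := by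
  simp only [taxicab] at h
  ext <;> simp only [clampBox] <;> omega

theorem taxicab_clampBox_le (s : ℕ) (k : ℤ × ℤ) : taxicab (clampBox s k) ≤ taxicab k := by
  simp only [taxicab, clampBox]; omega

theorem taxicab_clampBox_sub_clampBox_le (s : ℕ) (k l : ℤ × ℤ) :
    taxicab (clampBox s k - clampBox s l) ≤ taxicab (k - l) := by
  simp only [taxicab, clampBox, Prod.fst_sub, Prod.snd_sub]; omega

theorem taxicab_clampBox_sub_clampBox_succ_le (s : ℕ) (k : ℤ × ℤ) :
    taxicab (clampBox s k - clampBox (s + 1) k) ≤ 2 := by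
  simp only [taxicab, clampBox, Prod.fst_sub, Prod.snd_sub]; omega

end Taxicab

section TreeAdj

variable {α : Type*} {l l' : List α}

/-- Two lists are adjacent if they are equal or joined by an edge in the rooted tree in which the
parent of a nonempty list is its tail. -/
def TreeAdj (l l' : List α) : Prop := l = l' ∨ (∃ a, l' = a :: l) ∨ ∃ a, l = a :: l'

theorem TreeAdj.symm (h : TreeAdj l l') : TreeAdj l' l := by
  rcases h with h | h | h
  exacts [.inl h.symm, .inr (.inr h), .inr (.inl h)]

theorem length_rtake (s : ℕ) (l : List α) : (l.rtake s).length = min s l.length := by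
  simp only [List.rtake, List.length_drop]; omega

theorem rtake_eq_self {s : ℕ} (h : l.length ≤ s) : l.rtake s = l := by
  simp [List.rtake, Nat.sub_eq_zero_of_le h]

theorem treeAdj_rtake_rtake_cons (s : ℕ) (a : α) (l : List α) :
    TreeAdj (l.rtake s) ((a :: l).rtake s) := by
  by_cases h : s ≤ l.length
  · exact .inl (by rw [List.rtake, List.rtake, List.length_cons, Nat.succ_sub h,
      List.drop_succ_cons])
  · refine .inr (.inl ⟨a, ?_⟩)
    rw [rtake_eq_self (by rw [List.length_cons]; omega), rtake_eq_self (by omega)]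

theorem TreeAdj.rtake (h : TreeAdj l l') (s : ℕ) : TreeAdj (l.rtake s) (l'.rtake s) := by
  rcases h with rfl | ⟨a, rfl⟩ | ⟨a, rfl⟩
  · exact .inl rfl
  · exact treeAdj_rtake_rtake_cons s a l
  · exact (treeAdj_rtake_rtake_cons s a l').symm

theorem treeAdj_rtake_rtake_succ (s : ℕ) (l : List α) :
    TreeAdj (l.rtake s) (l.rtake (s + 1)) := by
  by_cases h : s + 1 ≤ l.length
  · have hlt : l.length - (s + 1) < l.length := by omega
    refine .inr (.inl ⟨l[l.length - (s + 1)], ?_⟩)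
    rw [List.rtake, List.rtake, List.drop_eq_getElem_cons hlt]
    congr 2
    omega
  · exact .inl (by rw [rtake_eq_self (by omega), rtake_eq_self (by omega)])

end TreeAdj

/-! ### Framed actions -/

section FramedAction

/-- A group `G` acting on a set `V` together with the data that locates an element of `G` up to a
bounded error: a vertex of a rooted tree (encoded as a list, see `TreeAdj`), a level in `ℤ²`, and
the image of the base point of `V` with respect to three pseudometrics on `V`, one for each place.
An element acts on the `i`-th pseudometric with Lipschitz constant `modulus i` of its level, up to
a factor coming from its vertex. The direction `dir j` is one in which all places but `j` contract
uniformly. -/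
structure FramedAction (G V α : Type*) [Group G] [MulAction G V] where
  origin : V
  vertex : G → List α
  Reduced : List α → Prop
  level : G → ℤ × ℤ
  dist : Fin 3 → V → V → ℝ
  modulus : Fin 3 → ℤ × ℤ → ℝ
  base : ℝ
  radius : ℝ
  dir : Fin 3 → ℤ × ℤ
  level_mul : ∀ g h, level (g * h) = level g + level h
  dist_self : ∀ i a, dist i a a = 0
  dist_comm : ∀ i a b, dist i a b = dist i b a
  dist_triangle : ∀ i a b c, dist i a c ≤ dist i a b + dist i b c
  two_le_base : 2 ≤ base
  radius_nonneg : 0 ≤ radius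
  dist_smul_le : ∀ i s a b,
    dist i (s • a) (s • b) ≤ base ^ (vertex s).length * modulus i (level s) * dist i a b
  dist_inv_smul_le : ∀ i s a b,
    dist i (s⁻¹ • a) (s⁻¹ • b) ≤ base ^ (vertex s).length * modulus i (-level s) * dist i a b
  modulus_add : ∀ i k l, modulus i (k + l) = modulus i k * modulus i l
  modulus_pos : ∀ i k, 0 < modulus i k
  modulus_le : ∀ i k, modulus i k ≤ base ^ taxicab k
  base_le_modulus_dir : ∀ i j, i ≠ j → base ≤ modulus i (dir j)
  vertex_one : vertex 1 = []
  reduced_vertex : ∀ g, Reduced (vertex g)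
  reduced_of_cons : ∀ a l, Reduced (a :: l) → Reduced l
  length_vertex_mul_le : ∀ g h, (vertex (g * h)).length ≤ (vertex g).length + (vertex h).length
  treeAdj_vertex_mul : ∀ g s, (vertex s).length ≤ 1 → TreeAdj (vertex g) (vertex (g * s))
  length_vertex_inv_mul_le_one : ∀ g h,
    TreeAdj (vertex g) (vertex h) → (vertex (g⁻¹ * h)).length ≤ 1
  vertex_inv_mul_eq_nil : ∀ g h, vertex g = vertex h → vertex (g⁻¹ * h) = []
  exists_framed : ∀ l, Reduced l → ∀ (k : ℤ × ℤ) (c : Fin 3 → V),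
    ∃ g, vertex g = l ∧ level g = k ∧ ∀ i, dist i origin (g⁻¹ • c i) ≤ radius
  finite_ball : ∀ D : ℕ, {s : G | (vertex s).length ≤ 1 ∧ taxicab (level s) ≤ D ∧
    ∀ i, dist i origin (s • origin) ≤ D}.Finite

/-- A coarse position of an element under a `FramedAction`: a tree vertex, a level and one centre
for each place. -/
structure Frame (V α : Type*) where
  vertex : List α
  level : ℤ × ℤ
  centre : Fin 3 → V

namespace FramedAction

variable {G V α : Type*} [Group G] [MulAction G V] (X : FramedAction G V α)

theorem level_one : X.level 1 = 0 := by simpa using X.level_mul 1 1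

theorem level_inv (g : G) : X.level g⁻¹ = -X.level g := by
  rw [eq_neg_iff_add_eq_zero, ← X.level_mul, inv_mul_cancel, X.level_one]

theorem dist_nonneg (i : Fin 3) (a b : V) : 0 ≤ X.dist i a b := by
  have := X.dist_triangle i a b a
  rw [X.dist_self, X.dist_comm i b a] at this
  linarith

theorem base_pos : 0 < X.base := by linarith [X.two_le_base]

theorem one_le_base : 1 ≤ X.base := by linarith [X.two_le_base]

theorem base_pow_le_base_pow {m n : ℕ} (h : m ≤ n) : X.base ^ m ≤ X.base ^ n :=
  pow_le_pow_right₀ X.one_le_base h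

theorem one_le_base_pow (m : ℕ) : 1 ≤ X.base ^ m := one_le_pow₀ X.one_le_base

theorem base_pow_pos (m : ℕ) : 0 < X.base ^ m := pow_pos X.base_pos m

theorem base_pow_nonneg (m : ℕ) : 0 ≤ X.base ^ m := (X.base_pow_pos m).le

theorem modulus_zero (i : Fin 3) : X.modulus i 0 = 1 := by
  have h := X.modulus_add i 0 0
  rw [add_zero] at h
  exact (mul_eq_left₀ (X.modulus_pos i 0).ne').1 h.symm

theorem modulus_nsmul (i : Fin 3) (n : ℕ) (k : ℤ × ℤ) :
    X.modulus i (n • k) = X.modulus i k ^ n := by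
  induction n with
  | zero => simp [X.modulus_zero]
  | succ n ih => rw [succ_nsmul, X.modulus_add, ih, pow_succ]

theorem modulus_neg (i : Fin 3) (k : ℤ × ℤ) : X.modulus i (-k) = (X.modulus i k)⁻¹ := by
  refine eq_inv_of_mul_eq_one_right ?_
  rw [← X.modulus_add, add_neg_cancel, X.modulus_zero]

theorem modulus_neg_nsmul_dir_le {i j : Fin 3} (h : i ≠ j) (n : ℕ) :
    X.modulus i (-(n • X.dir j)) ≤ (X.base ^ n)⁻¹ := by
  rw [X.modulus_neg, X.modulus_nsmul]
  exact inv_anti₀ (X.base_pow_pos n)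
    (pow_le_pow_left₀ X.base_pos.le (X.base_le_modulus_dir i j h) n)

theorem reduced_nil : X.Reduced [] := X.vertex_one ▸ X.reduced_vertex 1

theorem reduced_rtake (s : ℕ) {l : List α} (h : X.Reduced l) : X.Reduced (l.rtake s) := by
  rw [List.rtake]
  generalize l.length - s = n
  induction n generalizing l with
  | zero => simpa using h
  | succ n ih =>
    cases l with
    | nil => simpa using h
    | cons a l => simpa using ih (X.reduced_of_cons _ _ h)

/-- The element `g` is located at the frame `d`. -/
def IsFramed (d : Frame V α) (g : G) : Prop :=
  X.vertex g = d.vertex ∧ X.level g = d.level ∧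
    ∀ i, X.dist i X.origin (g⁻¹ • d.centre i) ≤ X.radius

open Classical in
/-- A chosen element located at the frame `d`; it is `1` if the vertex of `d` is not reduced. -/
noncomputable def place (d : Frame V α) : G :=
  if h : X.Reduced d.vertex then (X.exists_framed d.vertex h d.level d.centre).choose else 1

variable {X} in
theorem isFramed_place {d : Frame V α} (hd : X.Reduced d.vertex) : X.IsFramed d (X.place d) := by
  rw [place, dif_pos hd]
  exact (X.exists_framed d.vertex hd d.level d.centre).choose_spec

/-- Elements whose `j`-th centre is, up to bounded error, the point `c`. -/
def InTube (j : Fin 3) (c : V) (g : G) : Prop := X.dist j X.origin (g⁻¹ • c) ≤ X.radius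

variable {X} in
theorem InTube.smul {j : Fin 3} {c : V} {g : G} (hg : X.InTube j c g) (h : G) :
    X.InTube j (h • c) (h * g) := by
  rwa [InTube, mul_inv_rev, mul_smul, inv_smul_smul]

/-- The finite set of elements of size at most `D` with respect to the frame of `1`. -/
def stepSet (D : ℕ) : Set G :=
  {s : G | (X.vertex s).length ≤ 1 ∧ taxicab (X.level s) ≤ D ∧
    ∀ i, X.dist i X.origin (s • X.origin) ≤ D}

theorem stepSet_mono {D D' : ℕ} (h : D ≤ D') : X.stepSet D ⊆ X.stepSet D' :=
  fun _ ⟨hvertex, hlevel, hdist⟩ =>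
    ⟨hvertex, hlevel.trans h, fun i => (hdist i).trans (by exact_mod_cast h)⟩

theorem one_mem_stepSet (D : ℕ) : (1 : G) ∈ X.stepSet D := by
  refine ⟨by simp [X.vertex_one], by simp [X.level_one, taxicab_zero], fun i => ?_⟩
  rw [one_smul, X.dist_self]
  positivity

variable {X} in
theorem inv_mul_mem_stepSet {d d' : Frame V α} {g g' : G} {D m : ℕ} {δ : ℝ}
    (h : X.IsFramed d g) (h' : X.IsFramed d' g') (hvertex : TreeAdj d.vertex d'.vertex)
    (hlevel : taxicab (d.level - d'.level) ≤ D)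
    (hcentre : ∀ i, X.dist i (g⁻¹ • d.centre i) (g⁻¹ • d'.centre i) ≤ δ) (hD : D ≤ m)
    (hm : X.radius + δ + X.base ^ (1 + D) * X.radius ≤ m) : g⁻¹ * g' ∈ X.stepSet m := by
  obtain ⟨hgv, hgl, hgc⟩ := h
  obtain ⟨hgv', hgl', hgc'⟩ := h'
  have hlen : (X.vertex (g⁻¹ * g')).length ≤ 1 :=
    X.length_vertex_inv_mul_le_one _ _ (by rwa [hgv, hgv'])
  have htaxi : taxicab (X.level (g⁻¹ * g')) ≤ D := by
    rwa [X.level_mul, X.level_inv, neg_add_eq_sub, taxicab_sub_comm, hgl, hgl']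
  refine ⟨hlen, htaxi.trans hD, fun i => le_trans ?_ hm⟩
  have hlip : X.dist i (g⁻¹ • d'.centre i) ((g⁻¹ * g') • X.origin) ≤
      X.base ^ (1 + D) * X.radius := by
    calc X.dist i (g⁻¹ • d'.centre i) ((g⁻¹ * g') • X.origin)
        = X.dist i ((g⁻¹ * g') • g'⁻¹ • d'.centre i) ((g⁻¹ * g') • X.origin) := by
          rw [smul_smul, mul_inv_cancel_right]
      _ ≤ _ := X.dist_smul_le i _ _ _
      _ ≤ X.base ^ (1 + D) * X.radius := by
        rw [X.dist_comm i _ X.origin, pow_add]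
        gcongr
        · exact X.dist_nonneg _ _ _
        · exact mul_nonneg (X.base_pow_nonneg _) (X.base_pow_nonneg _)
        · exact (X.modulus_pos _ _).le
        · exact X.base_pow_nonneg _
        · exact X.one_le_base
        · exact (X.modulus_le i _).trans (X.base_pow_le_base_pow htaxi)
        · exact hgc' i
  have htri := X.dist_triangle i X.origin (g⁻¹ • d.centre i) ((g⁻¹ * g') • X.origin)
  have htri' := X.dist_triangle i (g⁻¹ • d.centre i) (g⁻¹ • d'.centre i) ((g⁻¹ * g') • X.origin)
  linarith [hgc i, hcentre i]

/-- A bound for the change of level between consecutive frames of a path. -/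
noncomputable def levelStep : ℕ := 2 + ∑ i, taxicab (X.dir i)

/-- The steps of paths lie in `stepSet shortStep`. -/
noncomputable def shortStep : ℕ :=
  ⌈X.radius + 1 + X.base ^ (1 + X.levelStep) * X.radius⌉₊ + X.levelStep

/-- The elements of `stepSet longStep` generate the group; they include the sides of the unit
squares between the columns over neighbouring points of a path. -/
noncomputable def longStep : ℕ :=
  ⌈X.radius + X.shortStep + X.base ^ (1 + X.shortStep) * X.radius⌉₊ + X.shortStep

theorem two_le_levelStep : 2 ≤ X.levelStep := Nat.le_add_right _ _

theorem taxicab_dir_le (i : Fin 3) : taxicab (X.dir i) ≤ X.levelStep :=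
  (Finset.single_le_sum (f := fun i => taxicab (X.dir i)) (fun _ _ => Nat.zero_le _)
    (Finset.mem_univ i)).trans (Nat.le_add_left _ _)

theorem shortStep_le_longStep : X.shortStep ≤ X.longStep := Nat.le_add_left _ _

variable {X} in
theorem inv_mul_mem_stepSet_shortStep {d d' : Frame V α} {g g' : G}
    (h : X.IsFramed d g) (h' : X.IsFramed d' g') (hvertex : TreeAdj d.vertex d'.vertex)
    (hlevel : taxicab (d.level - d'.level) ≤ X.levelStep)
    (hcentre : ∀ i, X.dist i (g⁻¹ • d.centre i) (g⁻¹ • d'.centre i) ≤ 1) :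
    g⁻¹ * g' ∈ X.stepSet X.shortStep := by
  refine inv_mul_mem_stepSet h h' hvertex hlevel hcentre (Nat.le_add_left _ _) ?_
  rw [shortStep, Nat.cast_add]
  exact le_add_of_le_of_nonneg (Nat.le_ceil _) (Nat.cast_nonneg _)

variable {X} in
theorem inv_mul_mem_stepSet_longStep {d d' : Frame V α} {g g' : G}
    (h : X.IsFramed d g) (h' : X.IsFramed d' g') (hvertex : TreeAdj d.vertex d'.vertex)
    (hlevel : taxicab (d.level - d'.level) ≤ X.shortStep)
    (hcentre : ∀ i, X.dist i (g⁻¹ • d.centre i) (g⁻¹ • d'.centre i) ≤ X.shortStep) :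
    g⁻¹ * g' ∈ X.stepSet X.longStep := by
  refine inv_mul_mem_stepSet h h' hvertex hlevel hcentre X.shortStep_le_longStep ?_
  rw [longStep, Nat.cast_add]
  exact le_add_of_le_of_nonneg (Nat.le_ceil _) (Nat.cast_nonneg _)

end FramedAction

end FramedAction

/-! ### Filling loops in a tube -/

section Marking

variable {G V α : Type*} [Group G] [MulAction G V]

/-- A group `F` (in the application, a free group) with a homomorphism to `G`, lifts of the elements
of `X.stepSet X.longStep`, and a symmetric set of relators containing all squares
`s₁ s₂ = s₃ s₄` in these lifts. -/
structure Marking (X : FramedAction G V α) (F : Type*) [Group F] where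
  eval : F →* G
  letter : G → F
  rels : Set F
  eval_letter : ∀ s ∈ X.stepSet X.longStep, eval (letter s) = s
  letter_one : letter 1 = 1
  one_mem_rels : 1 ∈ rels
  inv_mem_rels : ∀ r ∈ rels, r⁻¹ ∈ rels
  square_mem_rels : ∀ s₁ ∈ X.stepSet X.longStep, ∀ s₂ ∈ X.stepSet X.longStep,
    ∀ s₃ ∈ X.stepSet X.longStep, ∀ s₄ ∈ X.stepSet X.longStep, s₁ * s₂ = s₃ * s₄ →
      letter s₁ * letter s₂ * (letter s₃ * letter s₄)⁻¹ ∈ rels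

namespace Marking

variable {X : FramedAction G V α} {F : Type*} [Group F] (P : Marking X F)

/-- The word read along the first `n` steps of a sequence of group elements. -/
def word (f : ℕ → G) : ℕ → F
  | 0 => 1
  | n + 1 => word f n * P.letter ((f n)⁻¹ * f (n + 1))

theorem areaClose_ladder (f f' : ℕ → G) (N : ℕ)
    (hf : ∀ i < N, (f i)⁻¹ * f (i + 1) ∈ X.stepSet X.longStep)
    (hf' : ∀ i < N, (f' i)⁻¹ * f' (i + 1) ∈ X.stepSet X.longStep)
    (hff' : ∀ i ≤ N, (f i)⁻¹ * f' i ∈ X.stepSet X.longStep) :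
    AreaClose P.rels N (P.letter ((f 0)⁻¹ * f' 0) * P.word f' N)
      (P.word f N * P.letter ((f N)⁻¹ * f' N)) := by
  induction N with
  | zero => simpa [word] using AreaClose.refl _
  | succ N ih =>
    have hrung := ih (fun i hi => hf i (by omega)) (fun i hi => hf' i (by omega))
      (fun i hi => hff' i (by omega))
    have hsquare : AreaClose P.rels 1 _ _ := HasArea.of_mem <|
      P.square_mem_rels _ (hff' N (by omega)) _ (hf' N (by omega)) _ (hf N (by omega)) _
        (hff' (N + 1) le_rfl) (by group)
    simpa [word, mul_assoc] using (hrung.mul_right (P.letter ((f' N)⁻¹ * f' (N + 1)))).trans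
      (by rw [mul_assoc]; exact hsquare.mul_left (P.word f N))

/-- `P.Path Q n p q x`: the element `x` is read along a path of `n` short steps in `Q` from `p`
to `q`. -/
inductive Path (Q : Set G) : ℕ → G → G → F → Prop
  | nil (p : G) (hp : p ∈ Q) : Path Q 0 p p 1
  | cons {n : ℕ} (p p' : G) {q : G} {x : F} (hp : p ∈ Q)
      (hstep : p⁻¹ * p' ∈ X.stepSet X.shortStep) (h : Path Q n p' q x) :
      Path Q (n + 1) p q (P.letter (p⁻¹ * p') * x)

namespace Path

variable {P} {Q Q' : Set G} {m n : ℕ} {p q r : G} {x y : F}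

theorem mono (h : P.Path Q n p q x) (hQ : Q ⊆ Q') : P.Path Q' n p q x := by
  induction h with
  | nil p hp => exact .nil p (hQ hp)
  | cons p p' hp hstep _ ih => exact .cons p p' (hQ hp) hstep ih

theorem start_mem (h : P.Path Q n p q x) : p ∈ Q := by cases h <;> assumption

theorem end_mem (h : P.Path Q n p q x) : q ∈ Q := by induction h <;> assumption

theorem pad (h : P.Path Q n p q x) (hnm : n ≤ m) : P.Path Q m p q x := by
  induction hnm with
  | refl => exact h
  | step _ ih =>
    simpa [P.letter_one] using
      Path.cons p p ih.start_mem (by simpa using X.one_mem_stepSet _) ih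

theorem trans (h : P.Path Q n p q x) (h' : P.Path Q m q r y) :
    P.Path Q (n + m) p r (x * y) := by
  induction h with
  | nil => simpa using h'
  | cons p p' hp hstep _ ih =>
    simpa [mul_assoc, add_right_comm] using Path.cons p p' hp hstep (ih h')

theorem smul (h : P.Path Q n p q x) (g : G) (hQ : ∀ p ∈ Q, g * p ∈ Q') :
    P.Path Q' n (g * p) (g * q) x := by
  induction h with
  | nil p hp => exact .nil _ (hQ p hp)
  | cons p p' hp hstep _ ih =>
    have hmul : (g * p)⁻¹ * (g * p') = p⁻¹ * p' := by group
    simpa [hmul] using Path.cons (P := P) (g * p) (g * p') (hQ p hp) (by rwa [hmul]) ih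

theorem eval_eq (h : P.Path Q n p q x) : P.eval x = p⁻¹ * q := by
  induction h with
  | nil => simp
  | cons p p' hp hstep _ ih =>
    rw [map_mul, ih, P.eval_letter _ (X.stepSet_mono X.shortStep_le_longStep hstep)]
    group

theorem exists_of_seq (f : ℕ → G) (N : ℕ) (hQ : ∀ i ≤ N, f i ∈ Q)
    (hstep : ∀ i < N, (f i)⁻¹ * f (i + 1) ∈ X.stepSet X.shortStep) :
    ∃ x, P.Path Q N (f 0) (f N) x := by
  induction N with
  | zero => exact ⟨1, .nil _ (hQ 0 le_rfl)⟩
  | succ N ih =>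
    obtain ⟨x, hx⟩ := ih (fun i hi => hQ i (by omega)) (fun i hi => hstep i (by omega))
    exact ⟨_, hx.trans (.cons (f N) (f (N + 1)) (hQ N (by omega)) (hstep N (by omega))
      (.nil _ (hQ (N + 1) le_rfl)))⟩

theorem exists_of_frames (d : ℕ → Frame V α) {N : ℕ} (hN : 0 < N)
    (hp : X.IsFramed (d 0) p) (hq : X.IsFramed (d N) q) (hd : ∀ i, X.Reduced (d i).vertex)
    (hQ : ∀ i ≤ N, ∀ g, X.IsFramed (d i) g → g ∈ Q)
    (hvertex : ∀ i < N, TreeAdj (d i).vertex (d (i + 1)).vertex)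
    (hlevel : ∀ i < N, taxicab ((d i).level - (d (i + 1)).level) ≤ X.levelStep)
    (hcentre : ∀ i < N, ∀ j, X.base ^ (d i).vertex.length * X.modulus j (-(d i).level) *
      X.dist j ((d i).centre j) ((d (i + 1)).centre j) ≤ 1) :
    ∃ x, P.Path Q N p q x := by
  set f : ℕ → G := fun i => if i = 0 then p else if i = N then q else X.place (d i) with hf
  have hframed : ∀ i, X.IsFramed (d i) (f i) := by
    intro i
    simp only [hf]
    split_ifs with h h'
    exacts [h ▸ hp, h' ▸ hq, X.isFramed_place (hd i)]
  have hf0 : f 0 = p := by simp [hf]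
  have hfN : f N = q := by simp [hf, hN.ne']
  rw [← hf0, ← hfN]
  refine exists_of_seq f N (fun i hi => hQ i hi _ (hframed i)) fun i hi => ?_
  refine X.inv_mul_mem_stepSet_shortStep (hframed i) (hframed (i + 1)) (hvertex i hi)
    (hlevel i hi) fun j => (X.dist_inv_smul_le _ _ _ _).trans ?_
  rw [(hframed i).1, (hframed i).2.1]
  exact hcentre i hi j

end Path

end Marking

end Marking

namespace FramedAction

variable {G V α : Type*} [Group G] [MulAction G V] (X : FramedAction G V α)

/-- An element whose vertex, level and displacement of the origin are of size `m` on a linear,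
linear and exponential scale, respectively. -/
def Bounded (m : ℕ) (p : G) : Prop :=
  (X.vertex p).length ≤ m ∧ taxicab (X.level p) ≤ m ∧
    ∀ i, X.dist i X.origin (p⁻¹ • X.origin) ≤ X.base ^ m

/-- The bounded elements in a tube of the `j`-th place. -/
def tube (m : ℕ) (j : Fin 3) (c : V) : Set G := {g | X.Bounded m g ∧ X.InTube j c g}

/-- The lower half of the column over `p` in the tube of `c`: move in the direction `dir j`, which
contracts the centres at the other two places. -/
def ascent (j : Fin 3) (c : V) (p : G) (s : ℕ) : Frame V α where
  vertex := X.vertex p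
  level := X.level p + s • X.dir j
  centre := Function.update (fun _ => p • X.origin) j c

/-- The upper half of the column over `p` in the tube of `c`, traversed from the common apex of all
columns at `t = 0`: here the other two centres are at the origin. -/
def descent (j : Fin 3) (c : V) (m : ℕ) (p : G) (t : ℕ) : Frame V α where
  vertex := (X.vertex p).rtake t
  level := clampBox t (X.level p) + m • X.dir j
  centre := Function.update (fun _ => X.origin) j c

/-- The column over `p` leading to the apex of the tube of `c`, of height `2 * m + 1`. -/
def columnFrame (j : Fin 3) (c : V) (m : ℕ) (p : G) (s : ℕ) : Frame V α :=
  if s ≤ m then X.ascent j c p s else X.descent j c m p (2 * m + 1 - s)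

/-- Elements located at the frames of the column over `p`, starting from `p` itself. -/
noncomputable def column (j : Fin 3) (c : V) (m : ℕ) (p : G) (s : ℕ) : G :=
  if s = 0 then p else X.place (X.columnFrame j c m p s)

theorem column_zero (j : Fin 3) (c : V) (m : ℕ) (p : G) : X.column j c m p 0 = p := if_pos rfl

theorem column_top (j : Fin 3) (c : V) (m : ℕ) (p p' : G) :
    X.column j c m p (2 * m + 1) = X.column j c m p' (2 * m + 1) := by
  have : ¬ 2 * m + 1 ≤ m := by omega
  simp [column, columnFrame, descent, this, clampBox_zero, List.rtake_zero]

variable {X} {i j : Fin 3} {c : V} {m s : ℕ} {p p' g g' : G}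

theorem isFramed_column (hp : X.InTube j c p) (s : ℕ) :
    X.IsFramed (X.columnFrame j c m p s) (X.column j c m p s) := by
  rcases eq_or_ne s 0 with rfl | hs
  · rw [column_zero, columnFrame, if_pos (Nat.zero_le _)]
    refine ⟨rfl, by simp [ascent], fun i => ?_⟩
    by_cases hi : i = j
    · subst hi
      simpa only [ascent, Function.update_self] using show _ ≤ _ from hp
    · simp [ascent, hi, X.dist_self, X.radius_nonneg]
  · rw [column, if_neg hs]
    refine isFramed_place ?_
    unfold columnFrame
    split_ifs
    exacts [X.reduced_vertex p, X.reduced_rtake _ (X.reduced_vertex p)]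

theorem dist_inv_smul_le_of_ascent (hg : X.IsFramed (X.ascent j c p s) g) (hi : i ≠ j) (a b : V) :
    X.dist i (g⁻¹ • a) (g⁻¹ • b) ≤ (X.base ^ s)⁻¹ * X.dist i (p⁻¹ • a) (p⁻¹ • b) := by
  have hlevel : X.level (g⁻¹ * p) = -(s • X.dir j) := by
    simp [X.level_mul, X.level_inv, hg.2.1, ascent]
  calc X.dist i (g⁻¹ • a) (g⁻¹ • b)
      = X.dist i ((g⁻¹ * p) • p⁻¹ • a) ((g⁻¹ * p) • p⁻¹ • b) := by simp [mul_smul]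
    _ ≤ _ := X.dist_smul_le i _ _ _
    _ ≤ (X.base ^ s)⁻¹ * X.dist i (p⁻¹ • a) (p⁻¹ • b) := by
      rw [X.vertex_inv_mul_eq_nil _ _ hg.1, hlevel, List.length_nil, pow_zero, one_mul]
      exact mul_le_mul_of_nonneg_right (X.modulus_neg_nsmul_dir_le hi s) (X.dist_nonneg _ _ _)

theorem ascent_step_mem (hg : X.IsFramed (X.ascent j c p s) g)
    (hg' : X.IsFramed (X.ascent j c p (s + 1)) g') : g⁻¹ * g' ∈ X.stepSet X.shortStep := by
  refine inv_mul_mem_stepSet_shortStep hg hg' (.inl rfl) ?_ fun i => ?_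
  · have : X.level p + s • X.dir j - (X.level p + (s + 1) • X.dir j) = -X.dir j := by
      rw [succ_nsmul]; abel
    simpa only [ascent, this, taxicab_neg] using X.taxicab_dir_le j
  · simp [ascent, X.dist_self]

theorem turn_step_mem (hp : X.Bounded m p) (hg : X.IsFramed (X.ascent j c p m) g)
    (hg' : X.IsFramed (X.descent j c m p m) g') : g⁻¹ * g' ∈ X.stepSet X.shortStep := by
  refine inv_mul_mem_stepSet_shortStep hg hg' (.inl ?_) ?_ fun i => ?_
  · exact (rtake_eq_self hp.1).symm
  · simp [ascent, descent, clampBox_eq_self hp.2.1, taxicab_zero]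
  · by_cases hi : i = j
    · simp [ascent, descent, hi, X.dist_self]
    · refine (dist_inv_smul_le_of_ascent hg hi _ _).trans ?_
      rw [inv_mul_le_iff₀ (X.base_pow_pos m)]
      simpa [ascent, descent, hi] using hp.2.2 i

theorem descent_step_mem (hg : X.IsFramed (X.descent j c m p (s + 1)) g)
    (hg' : X.IsFramed (X.descent j c m p s) g') : g⁻¹ * g' ∈ X.stepSet X.shortStep := by
  refine inv_mul_mem_stepSet_shortStep hg hg' (treeAdj_rtake_rtake_succ _ _).symm ?_ fun i => ?_
  · simp only [descent, add_sub_add_right_eq_sub]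
    rw [taxicab_sub_comm]
    exact (taxicab_clampBox_sub_clampBox_succ_le _ _).trans X.two_le_levelStep
  · simp [descent, X.dist_self]

theorem column_step_mem (hp : p ∈ X.tube m j c) (hs : s < 2 * m + 1) :
    (X.column j c m p s)⁻¹ * X.column j c m p (s + 1) ∈ X.stepSet X.longStep := by
  apply X.stepSet_mono X.shortStep_le_longStep
  have h := isFramed_column (m := m) hp.2 s
  have h' := isFramed_column (m := m) hp.2 (s + 1)
  rcases lt_trichotomy s m with hsm | rfl | hsm
  · rw [columnFrame, if_pos (by omega)] at h h'
    exact ascent_step_mem h h'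
  · rw [columnFrame, if_pos le_rfl] at h
    rw [columnFrame, if_neg (by omega), show 2 * s + 1 - (s + 1) = s by omega] at h'
    exact turn_step_mem hp.1 h h'
  · rw [columnFrame, if_neg (by omega),
      show 2 * m + 1 - s = 2 * m + 1 - (s + 1) + 1 by omega] at h
    rw [columnFrame, if_neg (by omega)] at h'
    exact descent_step_mem h h'

theorem treeAdj_vertex_of_mem_stepSet {D : ℕ} (hstep : p⁻¹ * p' ∈ X.stepSet D) :
    TreeAdj (X.vertex p) (X.vertex p') := by
  simpa using X.treeAdj_vertex_mul p _ hstep.1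

theorem taxicab_level_sub_le_of_mem_stepSet {D : ℕ} (hstep : p⁻¹ * p' ∈ X.stepSet D) :
    taxicab (X.level p - X.level p') ≤ D := by
  have := hstep.2.1
  rwa [X.level_mul, X.level_inv, neg_add_eq_sub, taxicab_sub_comm] at this

theorem ascent_rung_mem (hstep : p⁻¹ * p' ∈ X.stepSet X.shortStep)
    (hg : X.IsFramed (X.ascent j c p s) g) (hg' : X.IsFramed (X.ascent j c p' s) g') :
    g⁻¹ * g' ∈ X.stepSet X.longStep := by
  refine inv_mul_mem_stepSet_longStep hg hg' (treeAdj_vertex_of_mem_stepSet hstep) ?_ fun i => ?_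
  · simpa [ascent] using taxicab_level_sub_le_of_mem_stepSet hstep
  · by_cases hi : i = j
    · simp [ascent, hi, X.dist_self]
    · refine (dist_inv_smul_le_of_ascent hg hi _ _).trans ?_
      rw [inv_mul_le_iff₀ (X.base_pow_pos s)]
      refine le_trans ?_ (le_mul_of_one_le_left (Nat.cast_nonneg _) (X.one_le_base_pow s))
      simpa [ascent, hi, smul_smul] using hstep.2.2 i

theorem descent_rung_mem {t : ℕ} (hstep : p⁻¹ * p' ∈ X.stepSet X.shortStep)
    (hg : X.IsFramed (X.descent j c m p t) g) (hg' : X.IsFramed (X.descent j c m p' t) g') :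
    g⁻¹ * g' ∈ X.stepSet X.longStep := by
  refine inv_mul_mem_stepSet_longStep hg hg' ((treeAdj_vertex_of_mem_stepSet hstep).rtake t) ?_
    fun i => ?_
  · simp only [descent, add_sub_add_right_eq_sub]
    exact (taxicab_clampBox_sub_clampBox_le _ _ _).trans (taxicab_level_sub_le_of_mem_stepSet hstep)
  · simp [descent, X.dist_self]

theorem column_rung_mem (hp : X.InTube j c p) (hp' : X.InTube j c p')
    (hstep : p⁻¹ * p' ∈ X.stepSet X.shortStep) (s : ℕ) :
    (X.column j c m p s)⁻¹ * X.column j c m p' s ∈ X.stepSet X.longStep := by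
  have h := isFramed_column (m := m) hp s
  have h' := isFramed_column (m := m) hp' s
  unfold columnFrame at h h'
  split_ifs at h h'
  exacts [ascent_rung_mem hstep h h', descent_rung_mem hstep h h']

end FramedAction

namespace Marking

variable {G V α : Type*} [Group G] [MulAction G V] {X : FramedAction G V α}
variable {F : Type*} [Group F] {P : Marking X F} {j : Fin 3} {c : V} {m n n' : ℕ} {p q : G}
variable {x y : F}

theorem Path.areaClose_word_column (h : P.Path (X.tube m j c) n p q x) :
    AreaClose P.rels (n * (2 * m + 1)) (x * P.word (X.column j c m q) (2 * m + 1))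
      (P.word (X.column j c m p) (2 * m + 1)) := by
  induction h with
  | nil p hp => simpa using AreaClose.refl _
  | cons p p' hp hstep h ih =>
    have hladder := P.areaClose_ladder (X.column j c m p) (X.column j c m p') (2 * m + 1)
      (fun i hi => FramedAction.column_step_mem hp hi)
      (fun i hi => FramedAction.column_step_mem h.start_mem hi)
      (fun i _ => FramedAction.column_rung_mem hp.2 h.start_mem.2 hstep i)
    rw [X.column_top j c m p p', inv_mul_cancel, P.letter_one, mul_one, X.column_zero,
      X.column_zero] at hladder
    simpa [mul_assoc, add_mul] using (ih.mul_left (P.letter (p⁻¹ * p'))).trans hladder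

theorem Path.areaClose_of_tube (h : P.Path (X.tube m j c) n p q x)
    (h' : P.Path (X.tube m j c) n' p q y) :
    AreaClose P.rels ((n + n') * (2 * m + 1)) x y := by
  have := (h.areaClose_word_column.trans (h'.areaClose_word_column.symm P.inv_mem_rels)).mul_right
    (P.word (X.column j c m q) (2 * m + 1))⁻¹
  simpa [mul_inv_cancel_right, add_mul] using this

end Marking

/-! ### Filling triangles -/

namespace FramedAction

variable {G V α : Type*} [Group G] [MulAction G V] (X : FramedAction G V α)

theorem exists_radius_le_base_pow : ∃ t : ℕ, X.radius ≤ X.base ^ t :=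
  (pow_unbounded_of_one_lt X.radius (by linarith [X.two_le_base])).imp fun _ h => h.le

/-- The radius of the framed action on the exponential scale. -/
noncomputable def radiusExp : ℕ := X.exists_radius_le_base_pow.choose

theorem radius_le : X.radius ≤ X.base ^ X.radiusExp := X.exists_radius_le_base_pow.choose_spec

theorem add_le_base_pow {a b n : ℕ} {x y : ℝ} (hx : x ≤ X.base ^ a) (hy : y ≤ X.base ^ b)
    (ha : a < n) (hb : b < n) : x + y ≤ X.base ^ n := by
  obtain ⟨n, rfl⟩ : ∃ d, n = d + 1 := ⟨n - 1, by omega⟩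
  have hxn := hx.trans (X.base_pow_le_base_pow (Nat.le_of_lt_succ ha))
  have hyn := hy.trans (X.base_pow_le_base_pow (Nat.le_of_lt_succ hb))
  have := mul_le_mul_of_nonneg_left X.two_le_base (X.base_pow_nonneg n)
  rw [pow_succ]
  linarith

theorem dist_smul_le_base_pow (i : Fin 3) (s : G) (a b : V) {M : ℕ}
    (h : (X.vertex s).length + taxicab (X.level s) ≤ M) :
    X.dist i (s • a) (s • b) ≤ X.base ^ M * X.dist i a b := by
  refine (X.dist_smul_le i s a b).trans (mul_le_mul_of_nonneg_right ?_ (X.dist_nonneg _ _ _))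
  refine le_trans ?_ (X.base_pow_le_base_pow h)
  rw [pow_add]
  exact mul_le_mul_of_nonneg_left (X.modulus_le _ _) (X.base_pow_nonneg _)

theorem dist_inv_smul_le_base_pow (i : Fin 3) (s : G) (a b : V) {M : ℕ}
    (h : (X.vertex s).length + taxicab (X.level s) ≤ M) :
    X.dist i (s⁻¹ • a) (s⁻¹ • b) ≤ X.base ^ M * X.dist i a b := by
  refine (X.dist_inv_smul_le i s a b).trans (mul_le_mul_of_nonneg_right ?_ (X.dist_nonneg _ _ _))
  refine le_trans ?_ (X.base_pow_le_base_pow h)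
  rw [pow_add, ← taxicab_neg (X.level s)]
  exact mul_le_mul_of_nonneg_left (X.modulus_le _ _) (X.base_pow_nonneg _)

theorem taxicab_nsmul_sub_nsmul_succ_dir_le (n : ℕ) (j : Fin 3) :
    taxicab (n • X.dir j - (n + 1) • X.dir j) ≤ X.levelStep := by
  rw [succ_nsmul, sub_add_cancel_left, taxicab_neg]
  exact X.taxicab_dir_le j

theorem taxicab_nsmul_dir_le {n N : ℕ} (h : n ≤ N) (j : Fin 3) :
    taxicab (n • X.dir j) ≤ X.levelStep * N := by
  rw [taxicab_nsmul, mul_comm]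
  exact Nat.mul_le_mul (X.taxicab_dir_le j) h

/-- A version of `Bounded` for `h⁻¹`; the extra summand `1` makes it multiplicative. -/
def HasSize (M : ℕ) (h : G) : Prop :=
  (X.vertex h).length + taxicab (X.level h) ≤ M ∧
    ∀ i, X.dist i X.origin (h • X.origin) + 1 ≤ X.base ^ M

theorem hasSize_one : X.HasSize 0 1 :=
  ⟨by simp [X.vertex_one, X.level_one, taxicab_zero], fun i => by simp [X.dist_self]⟩

/-- A set of points containing the origin, of diameter at most `base ^ N` at each place. -/
def IsCluster (N : ℕ) (S : Set V) : Prop :=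
  X.origin ∈ S ∧ ∀ i, ∀ a ∈ S, ∀ b ∈ S, X.dist i a b ≤ X.base ^ N

/-- The centres obtained from the constant centre `v` by moving the first `i` of them to `u`. -/
def mix (v u : V) (i : ℕ) : Fin 3 → V := fun j => if (j : ℕ) < i then u else v

/-- The bounded elements whose `j`-th centre is near `c j` for all `j ∈ S`. -/
def region (m : ℕ) (c : Fin 3 → V) (S : Set (Fin 3)) : Set G :=
  {g | X.Bounded m g ∧ ∀ j ∈ S, X.InTube j (c j) g}

variable {X} {m n M N E : ℕ} {d : Frame V α} {g h p : G} {v u w : V}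

theorem Bounded.mono (hp : X.Bounded m p) (hmn : m ≤ n) : X.Bounded n p :=
  ⟨hp.1.trans hmn, hp.2.1.trans hmn, fun i => (hp.2.2 i).trans (X.base_pow_le_base_pow hmn)⟩

theorem IsFramed.bounded (hg : X.IsFramed d g) (hd : d.vertex.length + taxicab d.level ≤ M)
    (hcentre : ∀ i, X.dist i X.origin (d.centre i) ≤ X.base ^ N)
    (hE : X.radiusExp + M + N < E) : X.Bounded E g := by
  obtain ⟨hvertex, hlevel, hg⟩ := hg
  rw [← hvertex, ← hlevel] at hd
  refine ⟨by omega, by omega, fun i => ?_⟩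
  have hfar : X.dist i (g⁻¹ • d.centre i) (g⁻¹ • X.origin) ≤ X.base ^ (M + N) := by
    refine (X.dist_inv_smul_le_base_pow i g _ _ hd).trans ?_
    rw [pow_add, X.dist_comm]
    exact mul_le_mul_of_nonneg_left (hcentre i) (X.base_pow_nonneg _)
  exact (X.dist_triangle i X.origin (g⁻¹ • d.centre i) (g⁻¹ • X.origin)).trans
    (X.add_le_base_pow ((hg i).trans X.radius_le) hfar (by omega) (by omega))

theorem IsCluster.dist_origin_le {S : Set V} (hS : X.IsCluster N S) (i : Fin 3) {a : V}
    (ha : a ∈ S) : X.dist i X.origin a ≤ X.base ^ N := hS.2 i _ hS.1 a ha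

theorem HasSize.dist_le (hh : X.HasSize M h) (i : Fin 3) :
    X.dist i X.origin (h • X.origin) ≤ X.base ^ M := by linarith [hh.2 i]

theorem HasSize.mono (hh : X.HasSize M h) (hMN : M ≤ N) : X.HasSize N h :=
  ⟨hh.1.trans hMN, fun i => (hh.2 i).trans (X.base_pow_le_base_pow hMN)⟩

theorem HasSize.mul (hh : X.HasSize M h) (hg : X.HasSize N g) : X.HasSize (M + N) (h * g) := by
  refine ⟨?_, fun i => ?_⟩
  · have hvertex := X.length_vertex_mul_le h g
    have hlevel := taxicab_add_le (X.level h) (X.level g)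
    rw [X.level_mul]
    linarith [hh.1, hg.1]
  · have htri := X.dist_triangle i X.origin (h • X.origin) ((h * g) • X.origin)
    have hlip := X.dist_smul_le_base_pow i h X.origin (g • X.origin) hh.1
    rw [smul_smul] at hlip
    have hmul : X.base ^ M * (X.dist i X.origin (g • X.origin) + 1) ≤ X.base ^ (M + N) := by
      rw [pow_add]
      exact mul_le_mul_of_nonneg_left (hg.2 i) (X.base_pow_nonneg _)
    linarith [hh.2 i]

theorem HasSize.bounded_mul (hh : X.HasSize M h) (hp : X.Bounded m p)
    (hE : 2 * m + 2 * M < E) : X.Bounded E (h * p) := by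
  have hsize := hh.1
  obtain ⟨hvertex, hlevel, hdist⟩ := hp
  refine ⟨(X.length_vertex_mul_le h p).trans (by omega), ?_, fun i => ?_⟩
  · rw [X.level_mul]
    exact (taxicab_add_le _ _).trans (by omega)
  · have hh' : X.dist i X.origin (h⁻¹ • X.origin) ≤ X.base ^ (2 * M) := by
      have := X.dist_inv_smul_le_base_pow i h (h • X.origin) X.origin hsize
      rw [inv_smul_smul, X.dist_comm i (h • _)] at this
      rw [two_mul, pow_add]
      exact this.trans (mul_le_mul_of_nonneg_left (hh.dist_le i) (X.base_pow_nonneg _))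
    have hfar : X.dist i (p⁻¹ • X.origin) ((h * p)⁻¹ • X.origin) ≤
        X.base ^ (2 * m + 2 * M) := by
      rw [mul_inv_rev, mul_smul, pow_add]
      exact (X.dist_inv_smul_le_base_pow i p _ _ (by omega)).trans
        (mul_le_mul_of_nonneg_left hh' (X.base_pow_nonneg _))
    exact (X.dist_triangle i _ _ _).trans
      (X.add_le_base_pow (hdist i) hfar (by omega) (by omega))

theorem inv_mul_mem_stepSet_of_update {i j : Fin 3} (hij : j ≠ i) {c : Fin 3 → V} {a : V}
    (hp : X.IsFramed ⟨[], N • X.dir i, c⟩ p)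
    (hq : X.IsFramed ⟨[], N • X.dir i, Function.update c j a⟩ g)
    (ha : X.dist j (c j) a ≤ X.base ^ N) : p⁻¹ * g ∈ X.stepSet X.shortStep := by
  refine inv_mul_mem_stepSet_shortStep hp hq (.inl rfl) (by simp [taxicab_zero]) fun k => ?_
  rcases eq_or_ne k j with rfl | hk
  · refine (X.dist_inv_smul_le k p _ _).trans ?_
    rw [hp.1, hp.2.1, List.length_nil, pow_zero, one_mul]
    calc X.modulus k (-(N • X.dir i)) * X.dist k (c k) (Function.update c k a k)
        ≤ (X.base ^ N)⁻¹ * X.base ^ N :=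
          mul_le_mul (X.modulus_neg_nsmul_dir_le hij N) (by simpa using ha) (X.dist_nonneg _ _ _)
            (inv_nonneg.2 (X.base_pow_nonneg N))
      _ = 1 := inv_mul_cancel₀ (X.base_pow_pos N).ne'
  · simp [hk, X.dist_self]

theorem IsFramed.smul (hg : X.IsFramed d g) (s : G) :
    X.IsFramed ⟨X.vertex (s * g), X.level (s * g), fun i => s • d.centre i⟩ (s * g) :=
  ⟨rfl, rfl, fun i => InTube.smul (hg.2.2 i) s⟩

theorem isFramed_self (X : FramedAction G V α) (g : G) :
    X.IsFramed ⟨X.vertex g, X.level g, fun _ => g • X.origin⟩ g :=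
  ⟨rfl, rfl, fun i => by rw [inv_smul_smul, X.dist_self]; exact X.radius_nonneg⟩

theorem isFramed_one (X : FramedAction G V α) : X.IsFramed ⟨[], 0, fun _ => X.origin⟩ 1 := by
  simpa [X.vertex_one, X.level_one] using X.isFramed_self 1

theorem region_subset_region {c c' : Fin 3 → V} {S S' : Set (Fin 3)} (hmn : m ≤ n)
    (hS : S' ⊆ S) (hc : ∀ j ∈ S', c j = c' j) : X.region m c S ⊆ X.region n c' S' :=
  fun _ hg => ⟨hg.1.mono hmn, fun j hj => hc j hj ▸ hg.2 j (hS hj)⟩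

theorem region_subset_tube {c : Fin 3 → V} {S : Set (Fin 3)} {j : Fin 3} {a : V} (hj : j ∈ S)
    (ha : c j = a) : X.region m c S ⊆ X.tube m j a :=
  fun _ hg => ⟨hg.1, ha ▸ hg.2 j hj⟩

theorem HasSize.mul_mem_region (hh : X.HasSize M h) {c : Fin 3 → V} {S : Set (Fin 3)}
    (hp : p ∈ X.region m c S) (hE : 2 * m + 2 * M < E) :
    h * p ∈ X.region E (fun i => h • c i) S :=
  ⟨hh.bounded_mul hp.1 hE, fun j hj => (hp.2 j hj).smul h⟩

end FramedAction

namespace Marking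

open FramedAction

variable {G V α : Type*} [Group G] [MulAction G V] {X : FramedAction G V α}
variable {F : Type*} [Group F] {P : Marking X F} {c : Fin 3 → V} {m n N M E : ℕ} {p q g h : G}

theorem Path.exists_of_centre (l : ℕ → List α) (k : ℕ → ℤ × ℤ) (hN : 0 < N)
    (hp : X.IsFramed ⟨l 0, k 0, c⟩ p) (hq : X.IsFramed ⟨l N, k N, c⟩ q)
    (hred : ∀ i, X.Reduced (l i)) (hvertex : ∀ i < N, TreeAdj (l i) (l (i + 1)))
    (hlevel : ∀ i < N, taxicab (k i - k (i + 1)) ≤ X.levelStep)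
    (hsize : ∀ i ≤ N, (l i).length + taxicab (k i) ≤ M)
    (hc : ∀ i, X.dist i X.origin (c i) ≤ X.base ^ m) (hE : X.radiusExp + M + m < E) :
    ∃ x, P.Path (X.region E c Set.univ) N p q x :=
  Path.exists_of_frames (fun s => ⟨l s, k s, c⟩) hN hp hq hred
    (fun i hi _ hg => ⟨hg.bounded (hsize i hi) hc hE, fun j _ => hg.2.2 j⟩) hvertex hlevel
    (fun i _ j => by simp [X.dist_self])

theorem Path.exists_relocation {l : List α} {k : ℤ × ℤ} (hN : 0 < N)
    (hp : X.IsFramed ⟨[], 0, c⟩ p) (hq : X.IsFramed ⟨l, k, c⟩ q)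
    (hsize : l.length + taxicab k ≤ N) (hc : ∀ i, X.dist i X.origin (c i) ≤ X.base ^ N)
    (hE : X.radiusExp + 2 * N < E) :
    ∃ x, P.Path (X.region E c Set.univ) N p q x := by
  refine Path.exists_of_centre (M := N) (m := N) (fun s => l.rtake s) (fun s => clampBox s k) hN
    (by simpa [List.rtake_zero, clampBox_zero] using hp)
    (by simpa only [rtake_eq_self (l := l) (s := N) (by omega),
      clampBox_eq_self (k := k) (s := N) (by omega)] using hq)
    (fun s => X.reduced_rtake s (hq.1.subst (X.reduced_vertex q)))
    (fun s _ => treeAdj_rtake_rtake_succ s l)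
    (fun s _ => (taxicab_clampBox_sub_clampBox_succ_le s k).trans X.two_le_levelStep)
    (fun s _ => ?_) hc (by omega)
  have := taxicab_clampBox_le s k
  rw [length_rtake]
  omega

theorem Path.exists_ascent (j : Fin 3) (hN : 0 < N) (hp : X.IsFramed ⟨[], 0, c⟩ p)
    (hq : X.IsFramed ⟨[], N • X.dir j, c⟩ q)
    (hc : ∀ i, X.dist i X.origin (c i) ≤ X.base ^ N)
    (hE : X.radiusExp + X.levelStep * N + N < E) :
    ∃ x, P.Path (X.region E c Set.univ) N p q x :=
  Path.exists_of_centre (fun _ => []) (fun s => s • X.dir j) hN (by simpa using hp) hq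
    (fun _ => X.reduced_nil) (fun _ _ => .inl rfl)
    (fun s _ => X.taxicab_nsmul_sub_nsmul_succ_dir_le s j)
    (fun s hs => by simpa using X.taxicab_nsmul_dir_le hs j) hc hE

theorem Path.exists_descent (j : Fin 3) (hN : 0 < N) (hp : X.IsFramed ⟨[], N • X.dir j, c⟩ p)
    (hq : X.IsFramed ⟨[], 0, c⟩ q)
    (hc : ∀ i, X.dist i X.origin (c i) ≤ X.base ^ N)
    (hE : X.radiusExp + X.levelStep * N + N < E) :
    ∃ x, P.Path (X.region E c Set.univ) N p q x := by
  refine Path.exists_of_centre (fun _ => []) (fun s => (N - s) • X.dir j) hN hp (by simpa using hq)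
    (fun _ => X.reduced_nil) (fun _ _ => .inl rfl) (fun s hs => ?_)
    (fun s _ => by simpa using X.taxicab_nsmul_dir_le (Nat.sub_le N s) j) hc hE
  rw [taxicab_sub_comm, show N - s = N - (s + 1) + 1 by omega]
  exact X.taxicab_nsmul_sub_nsmul_succ_dir_le _ j

theorem Path.exists_excursion {S : Set V} {j : Fin 3} {a : V} (hS : X.IsCluster N S) (hN : 0 < N)
    (hp : X.IsFramed ⟨[], 0, c⟩ p) (hq : X.IsFramed ⟨[], 0, Function.update c j a⟩ q)
    (hc : ∀ i, c i ∈ S) (ha : a ∈ S) (hE : X.radiusExp + X.levelStep * N + N < E) :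
    ∃ x, P.Path (X.region E c {j}ᶜ) (3 * N) p q x := by
  have hne : ∀ j : Fin 3, j ≠ j + 1 := by decide
  have hc' : ∀ i, Function.update c j a i ∈ S := fun i => by
    rcases eq_or_ne i j with rfl | hi
    · simpa using ha
    · simpa [hi] using hc i
  have hp' := isFramed_place (d := ⟨[], N • X.dir (j + 1), c⟩) X.reduced_nil
  have hq' := isFramed_place (d := ⟨[], N • X.dir (j + 1), Function.update c j a⟩) X.reduced_nil
  obtain ⟨x, hx⟩ := Path.exists_ascent (P := P) (j + 1) hN hp hp'
    (fun i => hS.dist_origin_le i (hc i)) hE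
  obtain ⟨y, hy⟩ := Path.exists_descent (P := P) (j + 1) hN hq' hq
    (fun i => hS.dist_origin_le i (hc' i)) hE
  have hx' := hx.mono (region_subset_region (S' := {j}ᶜ) le_rfl (Set.subset_univ _)
    fun _ _ => rfl)
  have hy' := hy.mono (region_subset_region (c' := c) (S' := {j}ᶜ) le_rfl (Set.subset_univ _)
    fun i hi => Function.update_of_ne hi _ _)
  have hmid := Path.cons (P := P) _ _ hx'.end_mem
    (inv_mul_mem_stepSet_of_update (hne j) hp' hq' (hS.2 j _ (hc j) _ ha)) hy'
  exact ⟨_, (hx'.trans hmid).pad (by omega)⟩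

end Marking

namespace FramedAction

variable {G V α : Type*} [Group G] [MulAction G V] {X : FramedAction G V α}
variable {M : ℕ} {h : G} {v u : V}

theorem mix_zero (v u : V) : mix v u 0 = fun _ => v := rfl

theorem mix_three (v u : V) : mix v u 3 = fun _ => u := by
  funext j
  simp [mix, j.is_lt]

theorem mix_succ (v u : V) (i : Fin 3) :
    mix v u (i + 1 : ℕ) = Function.update (mix v u i) i u := by
  funext j
  rcases eq_or_ne j i with rfl | hj
  · simp [mix]
  · have : (j : ℕ) ≠ i := Fin.val_ne_of_ne hj
    simp only [mix, Function.update_of_ne hj]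
    exact if_congr (by omega) rfl rfl

theorem mix_mem {S : Set V} (hv : v ∈ S) (hu : u ∈ S) (i : ℕ) (j : Fin 3) : mix v u i j ∈ S := by
  unfold mix
  split_ifs <;> assumption

theorem exists_isFramed_mix {p q : G} (hp : X.IsFramed ⟨[], 0, fun _ => v⟩ p)
    (hq : X.IsFramed ⟨[], 0, fun _ => u⟩ q) :
    ∃ b : Fin 4 → G, b 0 = p ∧ b 3 = q ∧ ∀ i : Fin 4, X.IsFramed ⟨[], 0, mix v u i⟩ (b i) := by
  refine ⟨![p, X.place ⟨[], 0, mix v u 1⟩, X.place ⟨[], 0, mix v u 2⟩, q], rfl, rfl, fun i => ?_⟩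
  fin_cases i
  exacts [hp, isFramed_place X.reduced_nil, isFramed_place X.reduced_nil,
    (mix_three v u).symm ▸ hq]

theorem smul_mix (h : G) (v u : V) (i : ℕ) :
    (fun j => h • mix v u i j) = mix (h • v) (h • u) i := by
  funext j
  exact apply_ite (h • ·) _ _ _

theorem HasSize.isCluster (hh : X.HasSize M h) : X.IsCluster M {X.origin, h • X.origin} := by
  have hdist := hh.dist_le
  refine ⟨by simp, fun i => ?_⟩
  have hnonneg := X.base_pow_nonneg M
  simp only [Set.mem_insert_iff, Set.mem_singleton_iff]
  rintro a (rfl | rfl) b (rfl | rfl)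
  · rwa [X.dist_self]
  · exact hdist i
  · rw [X.dist_comm]
    exact hdist i
  · rwa [X.dist_self]

theorem HasSize.isCluster_triangle {N : ℕ} {h' : G} (hh : X.HasSize N h) (hh' : X.HasSize N h')
    (hN : 0 < N) : X.IsCluster (3 * N) {X.origin, h • X.origin, (h * h') • X.origin} := by
  have hu := fun i => (hh.dist_le i)
  have hw := fun i => ((hh.mul hh').dist_le i)
  have huw : ∀ i, X.dist i (h • X.origin) ((h * h') • X.origin) ≤ X.base ^ (3 * N) := fun i => by
    refine (X.dist_triangle i _ X.origin _).trans ?_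
    rw [X.dist_comm i _ X.origin]
    exact X.add_le_base_pow (hu i) (hw i) (by omega) (by omega)
  have hu' := fun i => (hu i).trans (X.base_pow_le_base_pow (show N ≤ 3 * N by omega))
  have hw' := fun i => (hw i).trans (X.base_pow_le_base_pow (show N + N ≤ 3 * N by omega))
  have hnonneg := X.base_pow_nonneg (3 * N)
  refine ⟨by simp, fun i => ?_⟩
  simp only [Set.mem_insert_iff, Set.mem_singleton_iff]
  rintro a (rfl | rfl | rfl) b (rfl | rfl | rfl) <;>
    first
      | rwa [X.dist_self]
      | exact hu' i
      | exact hw' i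
      | exact huw i
      | exact X.dist_comm i _ _ ▸ hu' i
      | exact X.dist_comm i _ _ ▸ hw' i
      | exact X.dist_comm i _ _ ▸ huw i

end FramedAction

namespace Marking

open FramedAction

variable {G V α : Type*} [Group G] [MulAction G V] {X : FramedAction G V α}
variable {F : Type*} [Group F] (P : Marking X F)

/-- A broken path with corners `p` and sides `x` along which the centres move from `v` to `u`, one
place at a time. -/
def IsSweep (E n : ℕ) (v u : V) (p : Fin 4 → G) (x : Fin 3 → F) : Prop :=
  ∀ i : Fin 3, P.Path (X.region E (mix v u i) {i}ᶜ) n (p i.castSucc) (p i.succ) (x i)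

/-- A word for `h` read along a sweep from the origin to `h • origin`, followed by a path whose
centres stay put. -/
structure Combing (N : ℕ) (h : G) (x : F) where
  corner : Fin 4 → G
  side : Fin 3 → F
  tail : F
  corner_zero : corner 0 = 1
  isFramed_corner : ∀ i : Fin 4, X.IsFramed ⟨[], 0, mix X.origin (h • X.origin) i⟩ (corner i)
  isSweep : P.IsSweep N N X.origin (h • X.origin) corner side
  path_tail : P.Path (X.region N (fun _ => h • X.origin) Set.univ) N (corner 3) h tail
  eq_mul : x = side 0 * side 1 * side 2 * tail

variable {P} {m n M N E : ℕ} {v u w : V} {p a b e : Fin 4 → G} {x y z : Fin 3 → F} {q h h' : G}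

theorem IsSweep.mono (hx : P.IsSweep m n v u p x) (hE : m ≤ E) (hN : n ≤ N) :
    P.IsSweep E N v u p x := fun i =>
  ((hx i).mono (region_subset_region hE subset_rfl fun _ _ => rfl)).pad hN

theorem IsSweep.smul (hx : P.IsSweep m n v u p x) (hh : X.HasSize M h) (hE : 2 * m + 2 * M < E) :
    P.IsSweep E n (h • v) (h • u) (fun i => h * p i) x := fun i =>
  (hx i).smul h fun _ hp => smul_mix h v u i ▸ hh.mul_mem_region hp hE

theorem exists_isSweep {S : Set V} (hS : X.IsCluster N S) (hN : 0 < N) (hv : v ∈ S) (hu : u ∈ S)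
    (hp : ∀ i : Fin 4, X.IsFramed ⟨[], 0, mix v u i⟩ (p i))
    (hE : X.radiusExp + X.levelStep * N + N < E) : ∃ x, P.IsSweep E (3 * N) v u p x :=
  Classical.skolem.1 fun i => Path.exists_excursion hS hN (hp i.castSucc)
    (mix_succ v u i ▸ hp i.succ) (mix_mem hv hu i) hu hE

theorem Path.toTube {c : Fin 3 → V} {S : Set (Fin 3)} {j : Fin 3} {q q' : G} {f : F}
    (h : P.Path (X.region m c S) n q q' f) (hj : j ∈ S) (ha : c j = v) :
    P.Path (X.tube m j v) n q q' f := h.mono (region_subset_tube hj ha)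

theorem IsSweep.areaClose_mul {S : Set V} {o : V} (hS : X.IsCluster N S) (hN : 0 < N)
    (ho : o ∈ S) (hu : u ∈ S) (hw : w ∈ S) (hE : X.radiusExp + X.levelStep * N + N < E)
    (hx : P.IsSweep E (3 * N) o u a x) (hz : P.IsSweep E (3 * N) u w b z)
    (hy : P.IsSweep E (3 * N) o w e y) (hab : a 3 = b 0) (hae : a 0 = e 0) (hbe : b 3 = e 3)
    (ha2 : X.IsFramed ⟨[], 0, mix o u 2⟩ (a 2)) (hb1 : X.IsFramed ⟨[], 0, mix u w 1⟩ (b 1))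
    (he2 : X.IsFramed ⟨[], 0, mix o w 2⟩ (e 2)) :
    AreaClose P.rels (45 * N * (2 * E + 1)) (x 0 * x 1 * x 2 * (z 0 * z 1 * z 2))
      (y 0 * y 1 * y 2) := by
  set c := Function.update (mix o u 2) 0 w with hc
  have hcS : ∀ i, c i ∈ S := by
    intro i
    fin_cases i <;> simpa [hc, mix]
  have hd := isFramed_place (X := X) (d := ⟨[], 0, c⟩) X.reduced_nil
  obtain ⟨f, hf⟩ := Path.exists_excursion (P := P) (j := 0) hS hN ha2 hd (mix_mem ho hu 2) hw hE
  have hcb : Function.update c 2 u = mix u w 1 := by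
    funext i
    fin_cases i <;> simp [hc, mix]
  obtain ⟨g, hg⟩ := Path.exists_excursion (P := P) (j := 2) hS hN hd (hcb ▸ hb1) hcS hu hE
  have hce : Function.update c 1 w = mix o w 2 := by
    funext i
    fin_cases i <;> simp [hc, mix]
  obtain ⟨k, hk⟩ := Path.exists_excursion (P := P) (j := 1) hS hN hd (hce ▸ he2) hcS hw hE
  have hone : AreaClose P.rels _ (x 2 * z 0) (f * g) := Path.areaClose_of_tube (j := 1) (c := u)
    (((hx 2).toTube (by simp) rfl).trans (hab ▸ (hz 0).toTube (by simp) rfl))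
    ((hf.toTube (by simp) rfl).trans (hg.toTube (by simp) rfl))
  have hzero : AreaClose P.rels _ (g * z 1 * z 2) (k * y 2) :=
    Path.areaClose_of_tube (j := 0) (c := w)
      (((hg.toTube (by simp) rfl).trans ((hz 1).toTube (by simp) rfl)).trans
        ((hz 2).toTube (by simp) rfl))
      ((hk.toTube (by simp) rfl).trans (hbe ▸ (hy 2).toTube (by simp) rfl))
  have htwo : AreaClose P.rels _ (x 0 * x 1 * f * k) (y 0 * y 1) :=
    Path.areaClose_of_tube (j := 2) (c := o)
      (((((hx 0).toTube (by simp) rfl).trans ((hx 1).toTube (by simp) rfl)).trans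
        (hf.toTube (by simp) rfl)).trans (hk.toTube (by simp) rfl))
      (hae ▸ ((hy 0).toTube (by simp) rfl).trans ((hy 1).toTube (by simp) rfl))
  have := (((hone.mul_left (x 0 * x 1)).mul_right (z 1 * z 2)).trans
    (by simpa [mul_assoc] using hzero.mul_left (x 0 * x 1 * f))).trans
    (by simpa [mul_assoc] using htwo.mul_right (y 2))
  convert this using 1
  · ring
  · group
  · group

theorem IsSweep.areaClose_of_parallel {t s f f' : F} (hx : P.IsSweep E n v u a x)
    (hz : P.IsSweep E n v u b z)
    (ht : P.Path (X.region E (fun _ => v) Set.univ) n (b 0) (a 0) t)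
    (hs : P.Path (X.region E (mix v u 2) Set.univ) n (b 2) (a 2) s)
    (hf : P.Path (X.region E (fun _ => u) Set.univ) n (a 3) q f)
    (hf' : P.Path (X.region E (fun _ => u) Set.univ) n (b 3) q f') :
    AreaClose P.rels (11 * n * (2 * E + 1)) (t * (x 0 * x 1 * x 2) * f)
      (z 0 * z 1 * z 2 * f') := by
  have hlow : AreaClose P.rels _ (t * x 0 * x 1) (z 0 * z 1 * s) :=
    Path.areaClose_of_tube (j := 2) (c := v)
      (((ht.toTube (by simp) rfl).trans ((hx 0).toTube (by simp) rfl)).trans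
        ((hx 1).toTube (by simp) rfl))
      ((((hz 0).toTube (by simp) rfl).trans ((hz 1).toTube (by simp) rfl)).trans
        (hs.toTube (by simp) rfl))
  have hhigh : AreaClose P.rels _ (s * x 2 * f) (z 2 * f') :=
    Path.areaClose_of_tube (j := 0) (c := u)
      (((hs.toTube (by simp) rfl).trans ((hx 2).toTube (by simp) rfl)).trans
        (hf.toTube (by simp) rfl))
      (((hz 2).toTube (by simp) rfl).trans (hf'.toTube (by simp) rfl))
  have := (hlow.mul_right (x 2 * f)).trans
    (by simpa [mul_assoc] using hhigh.mul_left (z 0 * z 1))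
  convert this using 1
  · ring
  · group
  · group

/-- The ratio of the size of a combing to the size of the element. -/
noncomputable def combingFactor (X : FramedAction G V α) : ℕ := X.radiusExp + X.levelStep + 20

theorem exists_combing (P : Marking X F) (hM : 0 < M) (hh : X.HasSize M h) :
    ∃ x, Nonempty (P.Combing (combingFactor X * M) h x) := by
  have hE : X.radiusExp + X.levelStep * M + 2 * M < combingFactor X * M := by
    unfold combingFactor
    nlinarith
  have hlen : 3 * M ≤ combingFactor X * M := Nat.mul_le_mul_right M (by unfold combingFactor; omega)
  set p : Fin 4 → G :=
    Fin.cons 1 fun i => X.place ⟨[], 0, mix X.origin (h • X.origin) i.succ⟩ with hp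
  have hframed : ∀ i : Fin 4, X.IsFramed ⟨[], 0, mix X.origin (h • X.origin) i⟩ (p i) :=
    Fin.cases (by simpa [hp, mix_zero] using X.isFramed_one)
      fun i => isFramed_place X.reduced_nil
  obtain ⟨x, hx⟩ := exists_isSweep (P := P) hh.isCluster hM (by simp) (by simp) hframed
    (show _ < combingFactor X * M by omega)
  obtain ⟨z, hz⟩ := Path.exists_relocation (P := P) hM
    (mix_three X.origin (h • X.origin) ▸ hframed 3) (X.isFramed_self h) hh.1 hh.dist_le
    (show _ < combingFactor X * M by omega)
  exact ⟨_, ⟨⟨p, x, z, rfl, hframed, hx.mono le_rfl hlen, hz.pad (by omega), rfl⟩⟩⟩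

theorem Path.exists_of_translate {S : Set V} {c : Fin 3 → V} (hS : X.IsCluster (3 * N) S)
    (hN : 0 < N) (hh : X.HasSize N h) (hp : X.IsFramed ⟨[], 0, fun i => h • c i⟩ q)
    (hq : X.IsFramed ⟨[], 0, c⟩ h') (hc : ∀ i, h • c i ∈ S)
    (hE : X.radiusExp + 2 * (3 * N) < E) :
    ∃ s, P.Path (X.region E (fun i => h • c i) Set.univ) (3 * N) q (h * h') s := by
  have hlen := X.length_vertex_mul_le h h'
  rw [hq.1, List.length_nil] at hlen
  have := hh.1
  refine Path.exists_relocation (by omega) hp (hq.smul h) ?_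
    (fun i => hS.dist_origin_le i (hc i)) hE
  rw [X.level_mul, hq.2.1, add_zero]
  omega

theorem Combing.areaClose_tail_mul {f f' k : F} {S : Set V} (hS : X.IsCluster (3 * N) S)
    (hu : h • X.origin ∈ S) (hw : (h * h') • X.origin ∈ S) (hN : 0 < N) (hh : X.HasSize N h)
    (hf : P.Combing N h f) (hf' : P.Combing N h' f') (hk : P.Combing N (h * h') k)
    (hE : X.radiusExp + 2 * (3 * N) < E)
    (hz : P.IsSweep E (3 * (3 * N)) (h • X.origin) ((h * h') • X.origin) b z)
    (hb0 : b 0 = hf.corner 3) (hb3 : b 3 = hk.corner 3)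
    (hb2 : X.IsFramed ⟨[], 0, mix (h • X.origin) ((h * h') • X.origin) 2⟩ (b 2)) :
    AreaClose P.rels (11 * (3 * (3 * N)) * (2 * E + 1)) (hf.tail * f')
      (z 0 * z 1 * z 2 * hk.tail) := by
  obtain ⟨a, x, t, ha0, ha, hx, ht, rfl⟩ := hf'
  have hr := hk.path_tail
  simp only [mul_smul] at hb2 hw hz hr
  have hmix := fun i => smul_mix h X.origin (h' • X.origin) i
  have hx' := (hx.smul hh (show _ < E by omega)).mono le_rfl (show N ≤ 3 * (3 * N) by omega)
  obtain ⟨s, hs⟩ := Path.exists_of_translate (P := P) (c := mix X.origin (h' • X.origin) 2) hS hN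
    hh (by rwa [hmix]) (ha 2) (fun i => congrFun (hmix 2) i ▸ mix_mem hu hw 2 i) hE
  rw [hmix] at hs
  have htail := (ht.smul h (Q' := X.region E _ _) fun _ hp => hh.mul_mem_region hp (by omega)).pad
    (show N ≤ 3 * (3 * N) by omega)
  have hstart := (hf.path_tail.mono (region_subset_region (n := E) (by omega) subset_rfl
    fun _ _ => rfl)).pad (show N ≤ 3 * (3 * N) by omega)
  have hend := (hr.mono (region_subset_region (n := E) (by omega) subset_rfl
    fun _ _ => rfl)).pad (show N ≤ 3 * (3 * N) by omega)
  simpa [mul_assoc] using hx'.areaClose_of_parallel hz (by simpa [hb0, ha0] using hstart)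
    (hs.pad (by omega)) htail (hb3 ▸ hend)

theorem Combing.areaClose_mul {f f' k : F} (hN : 0 < N) (hh : X.HasSize N h)
    (hh' : X.HasSize N h') (hf : P.Combing N h f) (hf' : P.Combing N h' f')
    (hk : P.Combing N (h * h') k) :
    AreaClose P.rels (1638 * combingFactor X * N ^ 2) (f * f') k := by
  set S : Set V := {X.origin, h • X.origin, (h * h') • X.origin} with hSdef
  have hS : X.IsCluster (3 * N) S := hh.isCluster_triangle hh' hN
  have hu : h • X.origin ∈ S := by simp [hSdef]
  have hw : (h * h') • X.origin ∈ S := by simp [hSdef]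
  have hC : 20 ≤ combingFactor X := Nat.le_add_left _ _
  obtain ⟨E, hEdef⟩ : ∃ E, E = combingFactor X * (3 * N) := ⟨_, rfl⟩
  have hE : X.radiusExp + X.levelStep * (3 * N) + 2 * (3 * N) < E := by
    rw [hEdef]
    unfold combingFactor
    nlinarith
  have hNE : N ≤ E := by omega
  obtain ⟨b, hb0, hb3, hb⟩ : ∃ b : Fin 4 → G, b 0 = hf.corner 3 ∧ b 3 = hk.corner 3 ∧
      ∀ i : Fin 4, X.IsFramed ⟨[], 0, mix (h • X.origin) ((h * h') • X.origin) i⟩ (b i) := by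
    refine exists_isFramed_mix (mix_three X.origin (h • X.origin) ▸ hf.isFramed_corner 3) ?_
    exact mix_three X.origin ((h * h') • X.origin) ▸ hk.isFramed_corner 3
  obtain ⟨z, hz⟩ := exists_isSweep (P := P) hS (by omega) hu hw hb (show _ < E by omega)
  have hcone := IsSweep.areaClose_mul hS (by omega) hS.1 hu hw (by omega)
    (hf.isSweep.mono hNE (by omega)) hz (hk.isSweep.mono hNE (by omega)) hb0.symm
    (hf.corner_zero.trans hk.corner_zero.symm) hb3 (hf.isFramed_corner 2) (hb 1)
    (hk.isFramed_corner 2)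
  have htail := hf.areaClose_tail_mul hS hu hw hN hh hf' hk (by omega) hz hb0 hb3 (hb 2)
  have := (htail.mul_left (hf.side 0 * hf.side 1 * hf.side 2)).trans
    (by simpa only [mul_assoc] using hcone.mul_right hk.tail)
  rw [hf.eq_mul, hk.eq_mul, mul_assoc _ hf.tail]
  refine (by simpa only [mul_assoc] using this : AreaClose P.rels _ _ _).mono P.one_mem_rels ?_
  subst hEdef
  nlinarith [Nat.mul_le_mul hC hN]

end Marking

/-! ### Quadratic isoperimetric inequality -/

section QuadraticFilling

open FramedAction

variable {G V α β : Type*} [Group G] [MulAction G V] {X : FramedAction G V α}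

theorem FramedAction.exists_hasSize (X : FramedAction G V α) (h : G) : ∃ M, X.HasSize M h := by
  have hdist (i : Fin 3) : ∃ M : ℕ, X.dist i X.origin (h • X.origin) + 1 ≤ X.base ^ M :=
    (pow_unbounded_of_one_lt _ (by linarith [X.two_le_base])).imp fun _ h => h.le
  choose M hM using hdist
  refine ⟨(X.vertex h).length + taxicab (X.level h) + ∑ i, M i, Nat.le_add_right _ _, fun i => ?_⟩
  exact (hM i).trans (X.base_pow_le_base_pow
    ((Finset.single_le_sum (fun _ _ => Nat.zero_le _) (Finset.mem_univ i)).trans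
      (Nat.le_add_left _ _)))

theorem FramedAction.HasSize.eval_mk {M : ℕ} {f : FreeGroup β →* G}
    (hf : ∀ b, X.HasSize M (f (.mk [b]))) (w : List (β × Bool)) :
    X.HasSize (M * w.length) (f (.mk w)) := by
  induction w with
  | nil => simpa [← FreeGroup.one_eq_mk] using X.hasSize_one
  | cons b w ih =>
    have := (hf b).mul ih
    rw [← map_mul, FreeGroup.mul_mk, List.singleton_append] at this
    exact this.mono (by rw [List.length_cons, mul_add_one, add_comm])

theorem exists_hasSize_eval [Finite β] (X : FramedAction G V α) (f : FreeGroup β →* G) :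
    ∃ M, 0 < M ∧ ∀ w : List (β × Bool), X.HasSize (M * w.length) (f (.mk w)) := by
  have := Fintype.ofFinite β
  choose M hM using fun b : β × Bool => X.exists_hasSize (f (.mk [b]))
  refine ⟨∑ b, M b + 1, Nat.succ_pos _, HasSize.eval_mk fun b => (hM b).mono ?_⟩
  exact (Finset.single_le_sum (fun _ _ => Nat.zero_le _) (Finset.mem_univ b)).trans
    (Nat.le_succ _)

namespace Marking

namespace Combing

variable {F : Type*} [Group F] {P : Marking X F} {N N' : ℕ} {h : G} {x : F}

/-- A combing regarded as a combing of a larger size. -/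
def enlarge (c : P.Combing N h x) (hN : N ≤ N') : P.Combing N' h x where
  corner := c.corner
  side := c.side
  tail := c.tail
  corner_zero := c.corner_zero
  isFramed_corner := c.isFramed_corner
  isSweep := c.isSweep.mono hN hN
  path_tail := (c.path_tail.mono (region_subset_region hN subset_rfl fun _ _ => rfl)).pad hN
  eq_mul := c.eq_mul

theorem eval_eq (c : P.Combing N h x) : P.eval x = h := by
  have hside i := (c.isSweep i).eval_eq
  have hzero := hside 0
  have hone := hside 1
  have htwo := hside 2
  have htail := c.path_tail.eval_eq
  simp only [Fin.castSucc_zero, Fin.succ_zero_eq_one, Fin.castSucc_one, Fin.succ_one_eq_two,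
    c.corner_zero] at hzero hone
  rw [c.eq_mul, map_mul, map_mul, map_mul, hzero, hone, htwo, htail]
  change 1⁻¹ * c.corner 1 * ((c.corner 1)⁻¹ * c.corner 2) * ((c.corner 2)⁻¹ * c.corner 3) *
    ((c.corner 3)⁻¹ * h) = h
  group

end Combing

variable [DecidableEq β] {P : Marking X (FreeGroup β)} {n N M : ℕ} {h p q : G} {x : FreeGroup β}

theorem Path.norm_le (hP : ∀ s, (P.letter s).norm ≤ 1) {Q : Set G} (hx : P.Path Q n p q x) :
    x.norm ≤ n := by
  induction hx with
  | nil => simp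
  | cons _ _ _ _ _ ih =>
    exact (FreeGroup.norm_mul_le _ _).trans (by rw [add_comm]; exact add_le_add ih (hP _))

theorem Combing.norm_le (hP : ∀ s, (P.letter s).norm ≤ 1) (c : P.Combing N h x) :
    x.norm ≤ 4 * N := by
  have hside i := (c.isSweep i).norm_le hP
  have htail := c.path_tail.norm_le hP
  rw [c.eq_mul]
  calc _ ≤ (c.side 0).norm + (c.side 1).norm + (c.side 2).norm + c.tail.norm :=
        (FreeGroup.norm_mul_le _ _).trans <| add_le_add_left ((FreeGroup.norm_mul_le _ _).trans <|
          add_le_add_left (FreeGroup.norm_mul_le _ _) _) _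
    _ ≤ 4 * N := by linarith [hside 0, hside 1, hside 2]

/-- The constant in the quadratic isoperimetric inequality if the generators have size `M`. -/
noncomputable def dehnFactor (X : FramedAction G V α) (M : ℕ) : ℕ :=
  1638 * combingFactor X * (combingFactor X * M) ^ 2

theorem combingFactor_pos (X : FramedAction G V α) : 0 < combingFactor X := Nat.succ_pos _

theorem dehnFactor_pos (hM : 0 < M) : 0 < dehnFactor X M := by
  have := combingFactor_pos X
  unfold dehnFactor
  positivity

theorem dehnFactor_mul_four_pow (s : ℕ) :
    1638 * combingFactor X * (combingFactor X * (M * 2 ^ s)) ^ 2 = dehnFactor X M * 4 ^ s := by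
  rw [dehnFactor, show 4 = 2 ^ 2 from rfl, ← pow_mul, mul_comm 2 s, pow_mul]
  ring

-- A word is compared with a combing by halving it repeatedly.
theorem Combing.areaClose_mk (hP : ∀ s, (P.letter s).norm ≤ 1) (hM : 0 < M)
    (hsize : ∀ w, X.HasSize (M * w.length) (P.eval (.mk w)))
    (hrels : ∀ z, z.norm ≤ 4 * (combingFactor X * M) + 1 → P.eval z = 1 → z ∈ P.rels)
    {s : ℕ} {w : List (β × Bool)} (hw : w.length ≤ 2 ^ s)
    (c : P.Combing (combingFactor X * (M * 2 ^ s)) (P.eval (.mk w)) x) :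
    AreaClose P.rels (dehnFactor X M * 4 * 4 ^ s) (.mk w) x := by
  have hsize {w : List (β × Bool)} {s : ℕ} (hw : w.length ≤ 2 ^ s) :
      X.HasSize (M * 2 ^ s) (P.eval (.mk w)) := (hsize w).mono (Nat.mul_le_mul_left M hw)
  induction s generalizing w x with
  | zero =>
    refine (HasArea.of_mem (hrels _ ?_ ?_)).mono P.one_mem_rels
      (Nat.mul_pos (Nat.mul_pos (dehnFactor_pos hM) four_pos) (by simp))
    · refine (FreeGroup.norm_mul_le _ _).trans ?_
      have hc := c.norm_le hP
      have hmk := FreeGroup.norm_mk_le (L₁ := w)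
      simp only [pow_zero, mul_one] at hw hc
      rw [FreeGroup.norm_inv_eq]
      omega
    · rw [map_mul, map_inv, c.eval_eq, mul_inv_cancel]
  | succ s ih =>
    have hsucc : 2 ^ (s + 1) = 2 ^ s + 2 ^ s := by rw [pow_succ, mul_two]
    have htake : (w.take (2 ^ s)).length ≤ 2 ^ s := by simp
    have hdrop : (w.drop (2 ^ s)).length ≤ 2 ^ s := by rw [List.length_drop]; omega
    have hsplit : FreeGroup.mk w = .mk (w.take (2 ^ s)) * .mk (w.drop (2 ^ s)) := by
      rw [FreeGroup.mul_mk, List.take_append_drop]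
    obtain ⟨y, ⟨cy⟩⟩ := exists_combing P (by positivity) (hsize htake)
    obtain ⟨z, ⟨cz⟩⟩ := exists_combing P (by positivity) (hsize hdrop)
    have hN : combingFactor X * (M * 2 ^ s) ≤ combingFactor X * (M * 2 ^ (s + 1)) := by
      gcongr <;> omega
    have hle {v : List (β × Bool)} (hv : v.length ≤ 2 ^ s) :
        X.HasSize (combingFactor X * (M * 2 ^ (s + 1))) (P.eval (.mk v)) :=
      (hsize (s := s + 1) (by omega)).mono (Nat.le_mul_of_pos_left _ (combingFactor_pos X))
    rw [hsplit, map_mul] at c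
    have htriangle := Combing.areaClose_mul (Nat.mul_pos (combingFactor_pos X) (by positivity))
      (hle htake) (hle hdrop) (cy.enlarge hN) (cz.enlarge hN) c
    rw [hsplit]
    refine (((ih htake cy).mul (ih hdrop cz)).trans htriangle).mono P.one_mem_rels ?_
    rw [dehnFactor_mul_four_pow, pow_succ]
    linarith [Nat.zero_le (dehnFactor X M * 4 ^ s)]

theorem hasArea_of_eval_eq_one (hP : ∀ s, (P.letter s).norm ≤ 1) (hM : 0 < M)
    (hsize : ∀ w, X.HasSize (M * w.length) (P.eval (.mk w)))
    (hrels : ∀ z, z.norm ≤ 4 * (combingFactor X * M) + 1 → P.eval z = 1 → z ∈ P.rels)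
    {w : List (β × Bool)} (hw : P.eval (.mk w) = 1) :
    HasArea P.rels (5 * dehnFactor X M * (2 * w.length + 1) ^ 2) (.mk w) := by
  obtain ⟨s, hws, hsw⟩ : ∃ s, w.length ≤ 2 ^ s ∧ 2 ^ s ≤ 2 * w.length + 1 := by
    rcases eq_or_ne w.length 0 with hzero | hne
    · exact ⟨0, by omega, by omega⟩
    · refine ⟨Nat.log 2 w.length + 1, (Nat.lt_pow_succ_log_self one_lt_two _).le, ?_⟩
      have := Nat.pow_log_le_self 2 hne
      rw [pow_succ]
      omega
  obtain ⟨x, ⟨c⟩⟩ := exists_combing P (by positivity)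
    ((hsize w).mono (Nat.mul_le_mul_left M hws))
  have hwx := c.areaClose_mk hP hM hsize hrels hws
  rw [hw] at c
  have hx : AreaClose P.rels (dehnFactor X M * 4 ^ s) x 1 := by
    have hone := X.hasSize_one.mono (Nat.zero_le (combingFactor X * (M * 2 ^ s)))
    have := Combing.areaClose_mul (Nat.mul_pos (combingFactor_pos X) (by positivity)) hone hone
      c c (by rwa [mul_one])
    rw [dehnFactor_mul_four_pow] at this
    simpa using this.mul_right x⁻¹
  have harea := hwx.trans hx
  rw [AreaClose, inv_one, mul_one] at harea
  refine harea.mono P.one_mem_rels ?_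
  have hpow : 4 ^ s ≤ (2 * w.length + 1) ^ 2 := by
    rw [show 4 = 2 ^ 2 from rfl, ← pow_mul, mul_comm 2 s, pow_mul]
    exact Nat.pow_le_pow_left hsw 2
  nlinarith [Nat.mul_le_mul_left (dehnFactor X M) hpow]

end Marking

/-- The evaluation homomorphism of the marking by the elements of `X.stepSet X.longStep`. -/
def stepEval (X : FramedAction G V α) (e : X.stepSet X.longStep ≃ β) : FreeGroup β →* G :=
  FreeGroup.lift fun b => (e.symm b : G)

open Classical in
/-- The letter of an element of `X.stepSet X.longStep`; the identity has the empty letter. -/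
noncomputable def stepLetter (X : FramedAction G V α) (e : X.stepSet X.longStep ≃ β) (s : G) :
    FreeGroup β :=
  if h : s ≠ 1 ∧ s ∈ X.stepSet X.longStep then .of (e ⟨s, h.2⟩) else 1

variable {e : X.stepSet X.longStep ≃ β} {L : ℕ}

theorem stepEval_stepLetter {s : G} (hs : s ∈ X.stepSet X.longStep) :
    stepEval X e (stepLetter X e s) = s := by
  by_cases h : s = 1 <;> simp [stepEval, stepLetter, h, hs]

variable [DecidableEq β]

theorem norm_stepLetter_le (s : G) : (stepLetter X e s).norm ≤ 1 := by
  unfold stepLetter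
  split_ifs <;> simp

theorem finite_setOf_norm_le [Finite β] (L : ℕ) : {z : FreeGroup β | z.norm ≤ L}.Finite := by
  refine ((List.finite_length_le (β × Bool) L).image FreeGroup.mk).subset fun z hz => ?_
  exact ⟨z.toWord, hz, FreeGroup.mk_toWord⟩

/-- The marking by the elements of `X.stepSet X.longStep`, whose relators are the elements of norm
at most `L` that are trivial in `G`. -/
noncomputable def stepMarking (X : FramedAction G V α) (e : X.stepSet X.longStep ≃ β)
    (hL : 4 ≤ L) : Marking X (FreeGroup β) where
  eval := stepEval X e
  letter := stepLetter X e
  rels := {z | z.norm ≤ L ∧ stepEval X e z = 1}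
  eval_letter _ := stepEval_stepLetter
  letter_one := by simp [stepLetter]
  one_mem_rels := by simp
  inv_mem_rels := by simp
  square_mem_rels s₁ hs₁ s₂ hs₂ s₃ hs₃ s₄ hs₄ h := by
    refine ⟨le_trans ?_ hL, ?_⟩
    · have hmul (s t : G) : (stepLetter X e s * stepLetter X e t).norm ≤ 1 + 1 :=
        (FreeGroup.norm_mul_le _ _).trans
          (add_le_add (norm_stepLetter_le s) (norm_stepLetter_le t))
      refine (FreeGroup.norm_mul_le _ _).trans ?_
      rw [FreeGroup.norm_inv_eq]
      exact add_le_add (hmul _ _) (hmul _ _)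
    · simp [stepEval_stepLetter, hs₁, hs₂, hs₃, hs₄, h]

theorem FramedAction.exists_quadratic_area_bound (X : FramedAction G V α) :
    ∃ (a : ℕ) (f : FreeGroup (Fin a) →* G) (R : Finset (FreeGroup (Fin a))) (K : ℕ),
      Function.Surjective f ∧ (∀ r ∈ R, f r = 1) ∧
        ∀ w : List (Fin a × Bool), f (.mk w) = 1 →
          HasArea (R : Set (FreeGroup (Fin a))) (K * (2 * w.length + 1) ^ 2) (.mk w) := by
  have : Finite (X.stepSet X.longStep) := X.finite_ball X.longStep
  obtain ⟨a, ⟨e⟩⟩ := Finite.exists_equiv_fin (X.stepSet X.longStep)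
  obtain ⟨M, hM, hsize⟩ := exists_hasSize_eval X (stepEval X e)
  have hL : 4 ≤ 4 * (Marking.combingFactor X * M) + 1 :=
    (Nat.le_mul_of_pos_right 4 (Nat.mul_pos (Marking.combingFactor_pos X) hM)).trans
      (Nat.le_succ _)
  have hfin : (stepMarking X e hL).rels.Finite :=
    (finite_setOf_norm_le _).subset fun z hz => hz.1
  refine ⟨a, stepEval X e, hfin.toFinset, 5 * Marking.dehnFactor X M, fun g => ?_, fun r hr => ?_,
    fun w hw => ?_⟩
  · obtain ⟨N, hN⟩ := X.exists_hasSize g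
    obtain ⟨x, ⟨c⟩⟩ := (stepMarking X e hL).exists_combing N.succ_pos (hN.mono N.le_succ)
    exact ⟨x, c.eval_eq⟩
  · exact (hfin.mem_toFinset.1 hr).2
  · rw [hfin.coe_toFinset]
    exact (stepMarking X e hL).hasArea_of_eval_eq_one norm_stepLetter_le hM hsize
      (fun z hz hz' => ⟨hz, hz'⟩) hw

end QuadraticFilling

open scoped commutatorElement

/-! ### The Dehn function of a finite presentation -/

section Dehn

variable {a : ℕ} {R : Finset (FreeGroup (Fin a))} {K : ℕ}

/-- The area of null-homotopic words is at most quadratic, with constant `K`. -/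
def HasQuadraticArea (R : Finset (FreeGroup (Fin a))) (K : ℕ) : Prop :=
  ∀ w : List (Fin a × Bool), FreeGroup.mk w ∈ Subgroup.normalClosure (R : Set (FreeGroup (Fin a))) →
    HasArea (R : Set (FreeGroup (Fin a))) (K * (2 * w.length + 1) ^ 2) (.mk w)

namespace HasQuadraticArea

theorem areaLE_wordArea (hK : HasQuadraticArea R K) {w : List (Fin a × Bool)}
    (hw : FreeGroup.mk w ∈ Subgroup.normalClosure (R : Set (FreeGroup (Fin a)))) :
    AreaLE R w (wordArea R w) :=
  Nat.sInf_mem (s := {N | AreaLE R w N}) ⟨_, (hK w hw).areaLE⟩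

theorem mem_upperBounds (hK : HasQuadraticArea R K) (n : ℕ) :
    K * (2 * n + 1) ^ 2 ∈ upperBounds {N | ∃ w : List (Fin a × Bool), w.length ≤ n ∧
      FreeGroup.mk w ∈ Subgroup.normalClosure (R : Set (FreeGroup (Fin a))) ∧
      N = wordArea R w} := by
  rintro _ ⟨w, hwn, hw, rfl⟩
  refine (Nat.sInf_le (hK w hw).areaLE).trans ?_
  gcongr

theorem dehn_le (hK : HasQuadraticArea R K) (n : ℕ) : dehn R n ≤ K * (2 * n + 1) ^ 2 :=
  csSup_le ⟨_, [], by simp, one_mem _, rfl⟩ (hK.mem_upperBounds n)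

theorem wordArea_le_dehn (hK : HasQuadraticArea R K) {n : ℕ} {w : List (Fin a × Bool)}
    (hwn : w.length ≤ n)
    (hw : FreeGroup.mk w ∈ Subgroup.normalClosure (R : Set (FreeGroup (Fin a)))) :
    wordArea R w ≤ dehn R n :=
  le_csSup ⟨_, hK.mem_upperBounds n⟩ ⟨w, hwn, hw, rfl⟩

theorem funEquiv_sq {B M : ℕ} (hK : HasQuadraticArea R K)
    (hlower : ∀ n, n ^ 2 ≤ dehn R (B * n) * M) : FunEquiv (dehn R) (fun n => n ^ 2) := by
  have hB : 1 ≤ B := by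
    by_contra! hB
    obtain rfl : B = 0 := by omega
    have := hlower (dehn R 0 * M + 1)
    rw [zero_mul] at this
    nlinarith
  refine ⟨9 * K + M + 1, B, 1, 1, by omega, hB, le_rfl, le_rfl, fun n => ⟨?_, ?_⟩⟩
  · calc dehn R (n / B) ≤ K * (2 * (n / B) + 1) ^ 2 := hK.dehn_le _
      _ ≤ K * (2 * n + 1) ^ 2 := by gcongr; exact Nat.div_le_self n B
      _ ≤ K * (9 * (n ^ 2 + 1 * n + 1)) := by gcongr; nlinarith
      _ < (9 * K + M + 1) * (n ^ 2 + 1 * n + 1) := by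
        nlinarith [Nat.zero_le (M * (n ^ 2 + 1 * n + 1))]
  · have := hlower n
    change n ^ 2 < (9 * K + M + 1) * dehn R (B * n) + 1 * n + 1
    nlinarith

end HasQuadraticArea

end Dehn

/-- The integral Heisenberg group. -/
@[ext]
structure Heisenberg where
  a : ℤ
  b : ℤ
  c : ℤ

namespace Heisenberg

instance : Mul Heisenberg := ⟨fun x y => ⟨x.a + y.a, x.b + y.b, x.c + y.c + x.a * y.b⟩⟩

instance : One Heisenberg := ⟨⟨0, 0, 0⟩⟩

instance : Inv Heisenberg := ⟨fun x => ⟨-x.a, -x.b, -x.c + x.a * x.b⟩⟩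

@[simp] theorem mul_a (x y : Heisenberg) : (x * y).a = x.a + y.a := rfl

@[simp] theorem mul_b (x y : Heisenberg) : (x * y).b = x.b + y.b := rfl

@[simp] theorem mul_c (x y : Heisenberg) : (x * y).c = x.c + y.c + x.a * y.b := rfl

@[simp] theorem one_a : (1 : Heisenberg).a = 0 := rfl

@[simp] theorem one_b : (1 : Heisenberg).b = 0 := rfl

@[simp] theorem one_c : (1 : Heisenberg).c = 0 := rfl

@[simp] theorem inv_a (x : Heisenberg) : x⁻¹.a = -x.a := rfl

@[simp] theorem inv_b (x : Heisenberg) : x⁻¹.b = -x.b := rfl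

@[simp] theorem inv_c (x : Heisenberg) : x⁻¹.c = -x.c + x.a * x.b := rfl

instance : Group Heisenberg :=
  Group.ofLeftAxioms (fun x y z => by ext <;> simp <;> ring) (fun x => by ext <;> simp)
    (fun x => by ext <;> simp)

theorem commutatorElement_c (x y : Heisenberg) : ⁅x, y⁆.c = x.a * y.b - y.a * x.b := by
  simp only [commutatorElement_def, mul_a, mul_c, inv_a, inv_b, inv_c]
  ring

/-- The projection modulo the center. -/
def toPlane : Heisenberg →* Multiplicative (ℤ × ℤ) where
  toFun x := .ofAdd (x.a, x.b)
  map_one' := rfl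
  map_mul' _ _ := rfl

theorem toPlane_eq_ofAdd_iff {x : Heisenberg} {p : ℤ × ℤ} :
    toPlane x = .ofAdd p ↔ x.a = p.1 ∧ x.b = p.2 := by
  simp [toPlane, Prod.ext_iff]

theorem mem_ker_toPlane {x : Heisenberg} : x ∈ toPlane.ker ↔ x.a = 0 ∧ x.b = 0 :=
  toPlane_eq_ofAdd_iff (p := 0)

theorem mul_mul_inv_eq_self {x : Heisenberg} (hx : x ∈ toPlane.ker) (g : Heisenberg) :
    g * x * g⁻¹ = x := by
  obtain ⟨ha, hb⟩ := mem_ker_toPlane.1 hx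
  ext <;> simp only [mul_a, mul_b, mul_c, inv_a, inv_b, inv_c, ha, hb] <;> ring

theorem abs_c_inv {x : Heisenberg} (hx : x ∈ toPlane.ker) : |x⁻¹.c| = |x.c| := by
  simp [(mem_ker_toPlane.1 hx).1]

theorem abs_c_prod_le {M : ℤ} {l : List Heisenberg} (hl : ∀ x ∈ l, x ∈ toPlane.ker ∧ |x.c| ≤ M) :
    |l.prod.c| ≤ l.length * M := by
  induction l with
  | nil => simp
  | cons x l ih =>
    obtain ⟨⟨hx, hxM⟩, hl⟩ := List.forall_mem_cons.1 hl
    rw [List.prod_cons, mul_c, (mem_ker_toPlane.1 hx).1, zero_mul, add_zero, List.length_cons]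
    push_cast
    linarith [abs_add_le x.c l.prod.c, ih hl]

end Heisenberg

section LowerBound

variable {a : ℕ} {R : Finset (FreeGroup (Fin a))}

-- In a central extension of `ℤ²`, relators only contribute bounded amounts to the center.
theorem abs_c_le_of_areaLE {w : List (Fin a × Bool)} {N : ℕ} (hw : AreaLE R w N)
    (f : FreeGroup (Fin a) →* Heisenberg) (hf : ∀ r ∈ R, f r ∈ Heisenberg.toPlane.ker) :
    |(f (.mk w)).c| ≤ N * ∑ r ∈ R, |(f r).c| := by
  obtain ⟨g, r, hr, hw⟩ := hw
  have hrel (s : FreeGroup (Fin a)) (hs : s ∈ R) : |(f s).c| ≤ ∑ r ∈ R, |(f r).c| :=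
    Finset.single_le_sum (f := fun r => |(f r).c|) (fun _ _ => abs_nonneg _) hs
  have hbound (i : Fin N) :
      f (r i) ∈ Heisenberg.toPlane.ker ∧ |(f (r i)).c| ≤ ∑ r ∈ R, |(f r).c| := by
    rcases hr i with h | h
    · exact ⟨hf _ h, hrel _ h⟩
    · have hker := hf _ h
      have hle := hrel _ h
      rw [map_inv] at hker hle
      exact ⟨inv_mem_iff.1 hker, Heisenberg.abs_c_inv (inv_mem_iff.1 hker) ▸ hle⟩
  have := Heisenberg.abs_c_prod_le (l := List.ofFn fun i => f (r i))
    (List.forall_mem_ofFn_iff.2 hbound)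
  rw [hw, map_list_prod, List.map_ofFn]
  simpa [Function.comp_def, Heisenberg.mul_mul_inv_eq_self, hbound] using this

theorem norm_pow_le {β : Type*} [DecidableEq β] (x : FreeGroup β) (n : ℕ) :
    (x ^ n).norm ≤ n * x.norm := by
  induction n with
  | zero => simp
  | succ n ih =>
    rw [pow_succ, add_one_mul]
    exact (FreeGroup.norm_mul_le _ _).trans (Nat.add_le_add_right ih _)

theorem norm_commutatorElement_le {β : Type*} [DecidableEq β] (x y : FreeGroup β) :
    ⁅x, y⁆.norm ≤ 2 * (x.norm + y.norm) := by
  calc ⁅x, y⁆.norm ≤ x.norm + y.norm + x⁻¹.norm + y⁻¹.norm :=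
        (FreeGroup.norm_mul_le _ _).trans <| Nat.add_le_add_right ((FreeGroup.norm_mul_le _ _).trans
          <| Nat.add_le_add_right (FreeGroup.norm_mul_le _ _) _) _
    _ = 2 * (x.norm + y.norm) := by
      rw [FreeGroup.norm_inv_eq, FreeGroup.norm_inv_eq]
      ring

theorem exists_lift_heisenberg {β : Type*} (k : FreeGroup β →* Multiplicative (ℤ × ℤ)) :
    ∃ f : FreeGroup β →* Heisenberg, Heisenberg.toPlane.comp f = k :=
  ⟨FreeGroup.lift fun b => ⟨(k (.of b)).toAdd.1, (k (.of b)).toAdd.2, 0⟩, by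
    ext b <;> simp [Heisenberg.toPlane]⟩

theorem HasQuadraticArea.exists_sq_le_dehn_mul {G : Type*} [Group G] {K : ℕ}
    (hK : HasQuadraticArea R K) {f : FreeGroup (Fin a) →* G} (hf : Function.Surjective f)
    (hker : Subgroup.normalClosure (R : Set (FreeGroup (Fin a))) = f.ker)
    (k : G →* Multiplicative (ℤ × ℤ)) {x y : G} (hx : k x = .ofAdd (1, 0))
    (hy : k y = .ofAdd (0, 1)) (hxy : Commute x y) :
    ∃ B M : ℕ, ∀ n, n ^ 2 ≤ dehn R (B * n) * M := by
  obtain ⟨x, rfl⟩ := hf x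
  obtain ⟨y, rfl⟩ := hf y
  obtain ⟨φ, hφ⟩ := exists_lift_heisenberg (k.comp f)
  have hplane (z) : Heisenberg.toPlane (φ z) = k (f z) := DFunLike.congr_fun hφ z
  refine ⟨2 * (x.norm + y.norm), (∑ r ∈ R, |(φ r).c|).toNat, fun n => ?_⟩
  have hlength : ⁅x ^ n, y ^ n⁆.toWord.length ≤ 2 * (x.norm + y.norm) * n :=
    (norm_commutatorElement_le _ _).trans (by linarith [norm_pow_le x n, norm_pow_le y n])
  have htrivial : FreeGroup.mk ⁅x ^ n, y ^ n⁆.toWord ∈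
      Subgroup.normalClosure (R : Set (FreeGroup (Fin a))) := by
    rw [hker, FreeGroup.mk_toWord, MonoidHom.mem_ker, map_commutatorElement, map_pow, map_pow]
    exact commutatorElement_eq_one_iff_commute.2 (hxy.pow_pow n n)
  have hcenter : (φ ⁅x ^ n, y ^ n⁆).c = (n : ℤ) ^ 2 := by
    have hxn : Heisenberg.toPlane (φ (x ^ n)) = .ofAdd (n, 0) := by
      rw [hplane, map_pow, map_pow, hx, ← ofAdd_nsmul]; simp
    have hyn : Heisenberg.toPlane (φ (y ^ n)) = .ofAdd (0, n) := by
      rw [hplane, map_pow, map_pow, hy, ← ofAdd_nsmul]; simp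
    rw [Heisenberg.toPlane_eq_ofAdd_iff] at hxn hyn
    rw [map_commutatorElement, Heisenberg.commutatorElement_c, hxn.1, hxn.2, hyn.1, hyn.2]
    ring
  have hrels (r) (hr : r ∈ R) : φ r ∈ Heisenberg.toPlane.ker := by
    have hfr : r ∈ f.ker := hker ▸ Subgroup.subset_normalClosure hr
    rw [MonoidHom.mem_ker, hplane, hfr, map_one]
  have harea := abs_c_le_of_areaLE (hK.areaLE_wordArea htrivial) φ hrels
  have hnonneg : 0 ≤ ∑ r ∈ R, |(φ r).c| := Finset.sum_nonneg fun _ _ => abs_nonneg _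
  rw [FreeGroup.mk_toWord, hcenter, abs_of_nonneg (sq_nonneg _)] at harea
  zify
  rw [Int.toNat_of_nonneg hnonneg]
  refine harea.trans (mul_le_mul_of_nonneg_right ?_ hnonneg)
  exact_mod_cast hK.wordArea_le_dehn hlength htrivial

end LowerBound

theorem normalClosure_eq_ker_of_hasArea {G : Type*} [Group G] {β : Type*} {R : Set (FreeGroup β)}
    {f : FreeGroup β →* G} (hR : ∀ r ∈ R, f r = 1)
    (harea : ∀ w, f (.mk w) = 1 → ∃ n, HasArea R n (.mk w)) :
    Subgroup.normalClosure R = f.ker := by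
  refine le_antisymm (Subgroup.normalClosure_le_normal hR) fun z hz => ?_
  obtain ⟨w, rfl⟩ := Quot.exists_rep z
  obtain ⟨n, hn⟩ := harea w hz
  exact hn.mem_normalClosure

theorem isConj_presentedGroup_iff {G : Type*} [Group G] {β : Type*} {R : Set (FreeGroup β)}
    {f : FreeGroup β →* G} (hf : Function.Surjective f) (hker : Subgroup.normalClosure R = f.ker)
    (x y : FreeGroup β) :
    IsConj (QuotientGroup.mk x : PresentedGroup R) (QuotientGroup.mk y) ↔ IsConj (f x) (f y) := by
  let e : PresentedGroup R ≃* G := (QuotientGroup.quotientMulEquivOfEq hker).trans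
    (QuotientGroup.quotientKerEquivOfSurjective f hf)
  have he (z : FreeGroup β) : e (PresentedGroup.mk R z) = f z := rfl
  change IsConj (PresentedGroup.mk R x) (PresentedGroup.mk R y) ↔ _
  rw [← he, ← he]
  refine ⟨e.toMonoidHom.map_isConj, fun h => ?_⟩
  obtain ⟨c, hc⟩ := isConj_iff.1 h
  refine isConj_iff.2 ⟨e.symm c, e.injective ?_⟩
  simpa using hc

/-! ### Multiple HNN extensions -/

/-- The data of a multiple HNN extension of `H`. The stable letter `j` conjugates the subgroup
`dom j` onto `dom (bar j)` by `map j`, and `bar j` is its inverse letter; the values of `map j`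
outside `dom j` are irrelevant. -/
structure HNNData (H J : Type*) [Group H] where
  bar : J → J
  bar_bar : ∀ j, bar (bar j) = j
  dom : J → Subgroup H
  map : J → H → H
  map_mem : ∀ j h, h ∈ dom j → map j h ∈ dom (bar j)
  map_bar : ∀ j h, h ∈ dom j → map (bar j) (map j h) = h
  map_mul : ∀ j h h', h ∈ dom j → h' ∈ dom j → map j (h * h') = map j h * map j h'

namespace HNNData

variable {H J : Type*} [Group H] (X : HNNData H J)

theorem map_one (j : J) : X.map j 1 = 1 := by
  simpa using X.map_mul j 1 1 (one_mem _) (one_mem _)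

section CosetRep

open Classical in
/-- The chosen representative of the coset `dom j * h`; the trivial coset is represented by `1`. -/
noncomputable def cosetRep (j : J) (h : H) : H :=
  if h ∈ X.dom j then 1 else (Quotient.mk (QuotientGroup.rightRel (X.dom j)) h).out

theorem cosetRep_of_mem {j : J} {h : H} (hh : h ∈ X.dom j) : X.cosetRep j h = 1 := if_pos hh

theorem mul_inv_cosetRep_mem (j : J) (h : H) : h * (X.cosetRep j h)⁻¹ ∈ X.dom j := by
  unfold cosetRep
  split_ifs with hh
  · simpa using hh
  · exact QuotientGroup.rightRel_apply.1
      (Quotient.mk_out (s := QuotientGroup.rightRel (X.dom j)) h)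

theorem cosetRep_mul {j : J} {d : H} (hd : d ∈ X.dom j) (h : H) :
    X.cosetRep j (d * h) = X.cosetRep j h := by
  have hiff : d * h ∈ X.dom j ↔ h ∈ X.dom j := (X.dom j).mul_mem_cancel_left hd
  by_cases hh : h ∈ X.dom j
  · rw [X.cosetRep_of_mem hh, X.cosetRep_of_mem (hiff.2 hh)]
  · rw [cosetRep, cosetRep, if_neg hh, if_neg (hiff.not.2 hh)]
    congr 1
    refine Quotient.sound (QuotientGroup.rightRel_apply.2 ?_)
    simpa using hd

theorem cosetRep_eq_of_mul_inv_mem {j : J} {h h' : H} (hh : h * h'⁻¹ ∈ X.dom j) :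
    X.cosetRep j h = X.cosetRep j h' := by
  simpa using X.cosetRep_mul hh h'

theorem cosetRep_cosetRep (j : J) (h : H) : X.cosetRep j (X.cosetRep j h) = X.cosetRep j h :=
  (X.cosetRep_eq_of_mul_inv_mem (X.mul_inv_cosetRep_mem j h)).symm

theorem cosetRep_mem_iff (j : J) (h : H) : X.cosetRep j h ∈ X.dom j ↔ h ∈ X.dom j := by
  simpa using ((X.dom j).mul_mem_cancel_left (X.mul_inv_cosetRep_mem j h)
    (y := X.cosetRep j h)).symm

theorem finite_range_cosetRep (j : J) {Q : Type*} [Finite Q] (q : H → Q)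
    (hq : ∀ h h', q h = q h' → h * h'⁻¹ ∈ X.dom j) : (Set.range (X.cosetRep j)).Finite := by
  refine (Set.finite_range fun x => X.cosetRep j (Function.invFun q x)).subset ?_
  rintro _ ⟨h, rfl⟩
  exact ⟨q h, X.cosetRep_eq_of_mul_inv_mem (hq _ _ (Function.invFun_eq ⟨h, rfl⟩))⟩

end CosetRep

section NormalForm

/-- Reduced lists of syllables `t j * r`: each `r` is a chosen coset representative, and no
subword `t j * 1 * t (bar j)` occurs. -/
def IsReduced : List (J × H) → Prop
  | [] => True
  | (j, r) :: l =>
    X.cosetRep j r = r ∧ (r ∈ X.dom j → ∀ r' l', l ≠ (X.bar j, r') :: l') ∧ IsReduced l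

theorem IsReduced.tail {a : J × H} {l : List (J × H)} (h : X.IsReduced (a :: l)) :
    X.IsReduced l := h.2.2

theorem finite_setOf_isReduced_length_le_one [Finite J]
    (hX : ∀ j, (Set.range (X.cosetRep j)).Finite) :
    {l | X.IsReduced l ∧ l.length ≤ 1}.Finite := by
  have hfin : (⋃ j, (fun r => [(j, r)]) '' Set.range (X.cosetRep j)).Finite :=
    Set.finite_iUnion fun j => (hX j).image _
  refine (hfin.insert []).subset ?_
  rintro (_ | ⟨⟨j, r⟩, _ | ⟨_, _⟩⟩) ⟨hred, hlen⟩
  · exact .inl rfl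
  · exact .inr (Set.mem_iUnion.2 ⟨j, r, ⟨r, hred.1⟩, rfl⟩)
  · simp at hlen

/-- The normal forms of the HNN extension: `(l, u)` stands for `u` times the product of the
syllables of `l`. -/
def NormalForm : Type _ := {p : List (J × H) × H // X.IsReduced p.1}

open Classical in
/-- Left multiplication by the stable letter `j` on normal forms. -/
noncomputable def stableAct (j : J) (p : List (J × H) × H) : List (J × H) × H :=
  if p.2 ∈ X.dom j then
    match p.1 with
    | [] => ([(j, 1)], X.map j p.2)
    | (j', r) :: l => if j' = X.bar j then (l, X.map j p.2 * r) else
        ((j, 1) :: (j', r) :: l, X.map j p.2)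
  else ((j, X.cosetRep j p.2) :: p.1, X.map j (p.2 * (X.cosetRep j p.2)⁻¹))

/-- Left multiplication by an element of `H` on normal forms. -/
def baseAct (u : H) (p : List (J × H) × H) : List (J × H) × H := (p.1, u * p.2)

theorem stableAct_of_cancel {j : J} {h : H} (hh : h ∈ X.dom j) (r : H) (l : List (J × H)) :
    X.stableAct j ((X.bar j, r) :: l, h) = (l, X.map j h * r) := by
  simp [stableAct, hh]

theorem stableAct_of_not_cancel {j : J} {h : H} {l : List (J × H)}
    (hh : h ∈ X.dom j → ∀ r' l', l ≠ (X.bar j, r') :: l') :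
    X.stableAct j (l, h) = ((j, X.cosetRep j h) :: l, X.map j (h * (X.cosetRep j h)⁻¹)) := by
  unfold stableAct
  split_ifs with hmem
  · simp only at hmem
    rw [X.cosetRep_of_mem hmem]
    rcases l with _ | ⟨⟨j', r⟩, l⟩
    · simp
    · have hne : j' ≠ X.bar j := by
        rintro rfl
        exact hh hmem r l rfl
      simp [hne]
  · rfl

theorem cancel_or_not_cancel (j : J) (p : List (J × H) × H) :
    (∃ h r l, p = ((X.bar j, r) :: l, h) ∧ h ∈ X.dom j) ∨
    (p.2 ∈ X.dom j → ∀ r' l', p.1 ≠ (X.bar j, r') :: l') := by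
  refine or_iff_not_imp_left.2 fun h hmem r l hl => h ⟨p.2, r, l, ?_, hmem⟩
  rw [← hl]

theorem isReduced_stableAct (j : J) (p : List (J × H) × H) (hp : X.IsReduced p.1) :
    X.IsReduced (X.stableAct j p).1 := by
  rcases X.cancel_or_not_cancel j p with ⟨h, r, l, rfl, hh⟩ | h
  · rw [X.stableAct_of_cancel hh]
    exact hp.tail
  · obtain ⟨l, u⟩ := p
    rw [X.stableAct_of_not_cancel h]
    exact ⟨X.cosetRep_cosetRep j u, by rwa [cosetRep_mem_iff], hp⟩

theorem stableAct_bar_stableAct (j : J) (p : List (J × H) × H) (hp : X.IsReduced p.1) :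
    X.stableAct (X.bar j) (X.stableAct j p) = p := by
  rcases X.cancel_or_not_cancel j p with ⟨h, r, l, rfl, hh⟩ | h
  · have hrep : X.cosetRep (X.bar j) (X.map j h * r) = r := by
      rw [X.cosetRep_mul (X.map_mem j h hh), hp.1]
    rw [X.stableAct_of_cancel hh, X.stableAct_of_not_cancel, hrep]
    · simp [X.map_bar j h hh]
    · rw [(X.dom _).mul_mem_cancel_left (X.map_mem j h hh)]
      exact hp.2.1
  · obtain ⟨l, u⟩ := p
    have hcancel := X.stableAct_of_cancel (X.map_mem j _ (X.mul_inv_cosetRep_mem j u))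
      (X.cosetRep j u) l
    rw [X.bar_bar] at hcancel
    rw [X.stableAct_of_not_cancel h, hcancel, X.map_bar j _ (X.mul_inv_cosetRep_mem j u)]
    simp

theorem stableAct_baseAct (j : J) {u : H} (hu : u ∈ X.dom j) (p : List (J × H) × H) :
    X.stableAct j (baseAct u p) = baseAct (X.map j u) (X.stableAct j p) := by
  rcases X.cancel_or_not_cancel j p with ⟨h, r, l, rfl, hh⟩ | h
  · rw [X.stableAct_of_cancel hh, baseAct, X.stableAct_of_cancel (mul_mem hu hh), baseAct,
      X.map_mul j u h hu hh, mul_assoc]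
  · obtain ⟨l, v⟩ := p
    rw [X.stableAct_of_not_cancel h, baseAct, X.stableAct_of_not_cancel, baseAct]
    · rw [X.cosetRep_mul hu, mul_assoc, X.map_mul j _ _ hu (X.mul_inv_cosetRep_mem j v)]
    · rwa [(X.dom _).mul_mem_cancel_left hu]

theorem treeAdj_stableAct (j : J) (p : List (J × H) × H) : TreeAdj p.1 (X.stableAct j p).1 := by
  rcases X.cancel_or_not_cancel j p with ⟨h, r, l, rfl, hh⟩ | h
  · rw [X.stableAct_of_cancel hh]
    exact Or.inr (Or.inr ⟨_, rfl⟩)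
  · obtain ⟨l, u⟩ := p
    rw [X.stableAct_of_not_cancel h]
    exact Or.inr (Or.inl ⟨_, rfl⟩)

theorem length_stableAct_le (j : J) (p : List (J × H) × H) :
    (X.stableAct j p).1.length ≤ p.1.length + 1 := by
  rcases X.treeAdj_stableAct j p with h | ⟨a, h⟩ | ⟨a, h⟩
  · rw [← h]; omega
  · rw [h]; simp
  · rw [h]; simp; omega

/-- `baseAct` as a homomorphism to the permutations of the normal forms. -/
def basePerm : H →* Equiv.Perm X.NormalForm where
  toFun u :=
    { toFun := fun p => ⟨baseAct u p.1, p.2⟩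
      invFun := fun p => ⟨baseAct u⁻¹ p.1, p.2⟩
      left_inv := fun p => Subtype.ext (by simp [baseAct])
      right_inv := fun p => Subtype.ext (by simp [baseAct]) }
  map_one' := Equiv.ext fun p => Subtype.ext (Prod.ext rfl (one_mul p.1.2))
  map_mul' u v := Equiv.ext fun p => Subtype.ext (Prod.ext rfl (mul_assoc u v p.1.2))

/-- `stableAct` as a permutation of the normal forms. -/
noncomputable def stablePerm (j : J) : Equiv.Perm X.NormalForm where
  toFun p := ⟨X.stableAct j p.1, X.isReduced_stableAct j p.1 p.2⟩
  invFun p := ⟨X.stableAct (X.bar j) p.1, X.isReduced_stableAct _ p.1 p.2⟩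
  left_inv p := Subtype.ext (X.stableAct_bar_stableAct j p.1 p.2)
  right_inv p := Subtype.ext (by
    simpa only [X.bar_bar] using X.stableAct_bar_stableAct (X.bar j) p.1 p.2)

end NormalForm

section Extension

/-- The defining relators of the HNN extension. -/
inductive Rel : FreeGroup (H ⊕ J) → Prop
  | mul (u v : H) : Rel (FreeGroup.of (.inl u) * FreeGroup.of (.inl v) *
      (FreeGroup.of (.inl (u * v)))⁻¹)
  | conj (j : J) (u : H) (hu : u ∈ X.dom j) : Rel (FreeGroup.of (.inr j) * FreeGroup.of (.inl u) *
      (FreeGroup.of (.inr j))⁻¹ * (FreeGroup.of (.inl (X.map j u)))⁻¹)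
  | inv (j : J) : Rel (FreeGroup.of (.inr j) * FreeGroup.of (.inr (X.bar j)))

/-- The HNN extension. -/
def Extension : Type _ := PresentedGroup {z | X.Rel z}

instance : Group X.Extension := inferInstanceAs (Group (PresentedGroup {z | X.Rel z}))

/-- The stable letters of the HNN extension. -/
def stable (j : J) : X.Extension := PresentedGroup.of (rels := {z | X.Rel z}) (Sum.inr j)

theorem mk_eq_one_of_rel {z : FreeGroup (H ⊕ J)} (hz : X.Rel z) :
    PresentedGroup.mk {z | X.Rel z} z = 1 := PresentedGroup.one_of_mem hz

/-- The inclusion of the base group into the HNN extension. -/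
def of : H →* X.Extension := MonoidHom.mk'
  (fun u => (PresentedGroup.of (rels := {z | X.Rel z}) (Sum.inl u) : PresentedGroup {z | X.Rel z}))
  (by
    intro u v
    have hrel := X.mk_eq_one_of_rel (Rel.mul u v)
    rw [_root_.map_mul, map_inv, _root_.map_mul, mul_inv_eq_one] at hrel
    exact hrel.symm)

theorem stable_conj_of (j : J) {u : H} (hu : u ∈ X.dom j) :
    X.stable j * X.of u * (X.stable j)⁻¹ = X.of (X.map j u) := by
  have hrel := X.mk_eq_one_of_rel (Rel.conj j u hu)
  rw [_root_.map_mul, map_inv, _root_.map_mul, _root_.map_mul, map_inv, mul_inv_eq_one] at hrel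
  exact hrel

theorem stable_bar (j : J) : X.stable (X.bar j) = (X.stable j)⁻¹ := by
  have hrel := X.mk_eq_one_of_rel (Rel.inv j)
  rw [_root_.map_mul] at hrel
  exact (inv_eq_of_mul_eq_one_right hrel).symm

section Lift

variable {K : Type*} [Group K] (f : H →* K) (s : J → K)
  (hconj : ∀ j u, u ∈ X.dom j → s j * f u * (s j)⁻¹ = f (X.map j u))
  (hbar : ∀ j, s (X.bar j) = (s j)⁻¹)

/-- The universal property of the HNN extension. -/
def lift : X.Extension →* K :=
  PresentedGroup.toGroup (f := Sum.elim f s) (rels := {z | X.Rel z}) (by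
    intro z hz
    cases hz with
    | mul u v => simp
    | conj j u hu => simp [hconj j u hu]
    | inv j => simp [hbar j])

theorem lift_of (u : H) : X.lift f s hconj hbar (X.of u) = f u :=
  PresentedGroup.toGroup.of (f := Sum.elim f s) (rels := {z | X.Rel z}) _ (x := Sum.inl u)

theorem lift_stable (j : J) : X.lift f s hconj hbar (X.stable j) = s j :=
  PresentedGroup.toGroup.of (f := Sum.elim f s) (rels := {z | X.Rel z}) _ (x := Sum.inr j)

end Lift

theorem mem_of_forall_mem {S : Subgroup X.Extension} (hof : ∀ u, X.of u ∈ S)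
    (hstable : ∀ j, X.stable j ∈ S) (g : X.Extension) : g ∈ S := by
  have hle : Subgroup.closure (Set.range (PresentedGroup.of (rels := {z | X.Rel z}))) ≤ S := by
    refine (Subgroup.closure_le (G := PresentedGroup {z | X.Rel z}) (K := S)).2 ?_
    rintro _ ⟨x | x, rfl⟩
    · exact hof x
    · exact hstable x
  rw [PresentedGroup.closure_range_of] at hle
  exact hle (Subgroup.mem_top g)

/-- The action of the HNN extension on its normal forms. -/
noncomputable def actHom : X.Extension →* Equiv.Perm X.NormalForm :=
  X.lift X.basePerm X.stablePerm
    (fun j u hu => by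
      rw [mul_inv_eq_iff_eq_mul]
      ext p
      exact Subtype.ext (X.stableAct_baseAct j hu p.1))
    (fun _ => Equiv.ext fun _ => rfl)

noncomputable instance : MulAction X.Extension X.NormalForm :=
  MulAction.compHom X.NormalForm X.actHom

theorem of_smul (u : H) (p : X.NormalForm) : (X.of u • p).1 = baseAct u p.1 := by
  change (X.actHom (X.of u) p).1 = _
  rw [actHom, lift_of]
  rfl

theorem stable_smul (j : J) (p : X.NormalForm) : (X.stable j • p).1 = X.stableAct j p.1 := by
  change (X.actHom (X.stable j) p).1 = _
  rw [actHom, lift_stable]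
  rfl

end Extension

section Evaluation

/-- The product of a list of syllables. -/
def syllableProd : List (J × H) → X.Extension
  | [] => 1
  | (j, r) :: l => X.stable j * X.of r * syllableProd l

/-- The element represented by a normal form. -/
def evalForm (p : List (J × H) × H) : X.Extension := X.of p.2 * X.syllableProd p.1

theorem evalForm_stableAct (j : J) (p : List (J × H) × H) :
    X.evalForm (X.stableAct j p) = X.stable j * X.evalForm p := by
  rcases X.cancel_or_not_cancel j p with ⟨h, r, l, rfl, hh⟩ | h
  · rw [X.stableAct_of_cancel hh]
    simp only [evalForm, syllableProd, _root_.map_mul, stable_bar, ← X.stable_conj_of j hh]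
    group
  · obtain ⟨l, u⟩ := p
    rw [X.stableAct_of_not_cancel h]
    simp only [evalForm, syllableProd, ← X.stable_conj_of j (X.mul_inv_cosetRep_mem j u),
      _root_.map_mul, map_inv]
    group

theorem evalForm_smul (g : X.Extension) (p : X.NormalForm) :
    X.evalForm (g • p).1 = g * X.evalForm p.1 := by
  let S : Subgroup X.Extension :=
    { carrier := {g | ∀ p : X.NormalForm, X.evalForm (g • p).1 = g * X.evalForm p.1}
      one_mem' := fun p => by simp
      mul_mem' := fun {a b} ha hb p => by rw [mul_smul, ha, hb, mul_assoc]
      inv_mem' := fun {a} ha p => by rw [eq_inv_mul_iff_mul_eq, ← ha, smul_inv_smul] }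
  refine X.mem_of_forall_mem (S := S) (fun u p => ?_) (fun j p => ?_) g p
  · rw [of_smul, evalForm, baseAct, _root_.map_mul, evalForm, mul_assoc]
  · rw [stable_smul, evalForm_stableAct]

/-- The normal form of `1`. -/
def oneForm : X.NormalForm := ⟨([], 1), trivial⟩

theorem eq_of_mul_syllableProd (g : X.Extension) :
    g = X.of (g • X.oneForm).1.2 * X.syllableProd (g • X.oneForm).1.1 := by
  simpa [oneForm, evalForm, syllableProd] using (X.evalForm_smul g X.oneForm).symm

theorem syllableProd_smul_oneForm (l : List (J × H)) (hl : X.IsReduced l) :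
    (X.syllableProd l • X.oneForm).1 = (l, 1) := by
  induction l with
  | nil => rw [syllableProd, one_smul]; rfl
  | cons a l ih =>
    obtain ⟨j, r⟩ := a
    rw [syllableProd, mul_smul, mul_smul, stable_smul, of_smul, ih hl.tail, baseAct, mul_one,
      X.stableAct_of_not_cancel hl.2.1, hl.1, mul_inv_cancel, map_one]

theorem of_mul_syllableProd_smul_oneForm (l : List (J × H)) (hl : X.IsReduced l) (u : H) :
    ((X.of u * X.syllableProd l) • X.oneForm).1 = (l, u) := by
  rw [mul_smul, of_smul, syllableProd_smul_oneForm X l hl]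
  simp [baseAct]

theorem of_injective : Function.Injective X.of := by
  intro u v h
  have hu := X.of_mul_syllableProd_smul_oneForm [] trivial u
  rw [h, X.of_mul_syllableProd_smul_oneForm [] trivial v] at hu
  simpa using hu.symm

theorem length_syllableProd_smul_le (l : List (J × H)) (p : X.NormalForm) :
    (X.syllableProd l • p).1.1.length ≤ l.length + p.1.1.length := by
  induction l with
  | nil => simp [syllableProd]
  | cons a l ih =>
    obtain ⟨j, r⟩ := a
    rw [syllableProd, mul_smul, mul_smul, stable_smul, of_smul]
    refine (X.length_stableAct_le _ _).trans ?_
    simp only [baseAct, List.length_cons]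
    omega

end Evaluation

section Tree

/-- The vertex of the Bass–Serre tree, encoded by a reduced list, to which an element moves the
base vertex. It is read off from the inverse of the element, so that it depends only on the left
coset of the base group. -/
noncomputable def vertex (g : X.Extension) : List (J × H) := (g⁻¹ • X.oneForm).1.1

/-- The base-group part of the normal form of `g⁻¹`. -/
noncomputable def head (g : X.Extension) : H := (g⁻¹ • X.oneForm).1.2

theorem inv_eq_of_head_mul (g : X.Extension) :
    g⁻¹ = X.of (X.head g) * X.syllableProd (X.vertex g) := X.eq_of_mul_syllableProd g⁻¹

theorem eq_syllableProd_inv_mul_of (g : X.Extension) :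
    g = (X.syllableProd (X.vertex g))⁻¹ * X.of (X.head g)⁻¹ := by
  rw [map_inv, ← mul_inv_rev, ← inv_eq_of_head_mul, inv_inv]

theorem vertex_one : X.vertex 1 = [] := by
  rw [vertex, inv_one, one_smul]
  rfl

theorem isReduced_vertex (g : X.Extension) : X.IsReduced (X.vertex g) := (g⁻¹ • X.oneForm).2

theorem vertex_mul (g g' : X.Extension) :
    X.vertex (g * g') = (X.syllableProd (X.vertex g') • g⁻¹ • X.oneForm).1.1 := by
  rw [vertex, mul_inv_rev, mul_smul, X.inv_eq_of_head_mul g', mul_smul, of_smul, baseAct]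

theorem length_vertex_mul_le (g g' : X.Extension) :
    (X.vertex (g * g')).length ≤ (X.vertex g).length + (X.vertex g').length := by
  rw [vertex_mul, add_comm]
  exact X.length_syllableProd_smul_le (X.vertex g') (g⁻¹ • X.oneForm)

theorem treeAdj_vertex_mul (g s : X.Extension) (hs : (X.vertex s).length ≤ 1) :
    TreeAdj (X.vertex g) (X.vertex (g * s)) := by
  rw [vertex_mul]
  rcases h : X.vertex s with _ | ⟨⟨j, r⟩, l⟩
  · left; simp [syllableProd, vertex]
  · obtain rfl : l = [] := by simpa [h] using hs
    rw [syllableProd, syllableProd, mul_one, mul_smul, stable_smul, of_smul]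
    exact X.treeAdj_stableAct j (baseAct r _)

theorem vertex_of (u : H) : X.vertex (X.of u) = [] := by
  rw [vertex, ← map_inv, of_smul]
  rfl

theorem length_vertex_inv_le (u v : H) (j : J) :
    (X.vertex (X.of u * X.stable j * X.of v)⁻¹).length ≤ 1 := by
  rw [vertex, inv_inv, mul_smul, mul_smul, of_smul, stable_smul, of_smul]
  exact (X.length_stableAct_le _ _).trans (by simp [baseAct, oneForm])

theorem inv_mul_eq (g g' : X.Extension) :
    g⁻¹ * g' = (X.of (X.head g') * X.syllableProd (X.vertex g') *
      (X.syllableProd (X.vertex g))⁻¹ * X.of (X.head g)⁻¹)⁻¹ := by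
  rw [map_inv, mul_assoc, ← mul_inv_rev, ← inv_eq_of_head_mul, ← inv_eq_of_head_mul]
  group

theorem vertex_inv_mul_eq_nil {g g' : X.Extension} (h : X.vertex g = X.vertex g') :
    X.vertex (g⁻¹ * g') = [] := by
  rw [inv_mul_eq, h, mul_inv_cancel_right, ← _root_.map_mul, ← map_inv, vertex_of]

theorem length_vertex_inv_mul_le_one {g g' : X.Extension}
    (h : TreeAdj (X.vertex g) (X.vertex g')) : (X.vertex (g⁻¹ * g')).length ≤ 1 := by
  rcases h with h | ⟨⟨j, r⟩, h⟩ | ⟨⟨j, r⟩, h⟩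
  · simp [X.vertex_inv_mul_eq_nil h]
  · convert X.length_vertex_inv_le (X.head g') (r * (X.head g)⁻¹) j using 3
    rw [inv_mul_eq, h, syllableProd, _root_.map_mul]
    group
  · convert X.length_vertex_inv_le (X.head g' * r⁻¹) (X.head g)⁻¹ (X.bar j) using 3
    rw [inv_mul_eq, h, syllableProd, _root_.map_mul, stable_bar, map_inv X.of r]
    group

theorem vertex_of_mul_syllableProd_inv (l : List (J × H)) (hl : X.IsReduced l) (u : H) :
    X.vertex (X.of u * X.syllableProd l)⁻¹ = l := by
  rw [vertex, inv_inv, X.of_mul_syllableProd_smul_oneForm l hl]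

end Tree

section Conjugacy

theorem exists_of_syllableProd_cons_mul {j : J} {r : H} {l : List (J × H)}
    (hl : X.IsReduced ((j, r) :: l)) {u h : H}
    (heq : X.syllableProd ((j, r) :: l) * X.of u = X.of h * X.syllableProd ((j, r) :: l)) :
    ∃ v, X.syllableProd l * X.of u = X.of v * X.syllableProd l ∧
      r * v * r⁻¹ ∈ X.dom j ∧ X.map j (r * v * r⁻¹) = h := by
  have hform := X.of_mul_syllableProd_smul_oneForm _ hl h
  rw [← heq, syllableProd, mul_assoc _ _ (X.of u), mul_smul, mul_smul, stable_smul,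
    of_smul] at hform
  set y := (X.syllableProd l * X.of u) • X.oneForm with hy
  have hlength : y.1.1.length ≤ l.length := by
    rw [hy, mul_smul]
    refine (X.length_syllableProd_smul_le _ _).trans ?_
    rw [of_smul]
    simp [baseAct, oneForm]
  rcases X.cancel_or_not_cancel j (baseAct r y.1) with ⟨h', r', l', hcancel, hh'⟩ | hnot
  · have hlength' := congrArg (fun z => z.1.length) hform
    have hlength'' := congrArg (fun z => z.1.length) hcancel
    rw [hcancel, X.stableAct_of_cancel hh'] at hlength'
    simp only [baseAct, List.length_cons] at hlength' hlength''
    omega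
  · rw [baseAct] at hform hnot
    rw [X.stableAct_of_not_cancel hnot] at hform
    simp only [Prod.mk.injEq, List.cons.injEq, true_and] at hform
    obtain ⟨⟨hrep, hlist⟩, hmap⟩ := hform
    have hmem := X.mul_inv_cosetRep_mem j (r * y.1.2)
    rw [hrep] at hmem hmap
    have heval := X.eq_of_mul_syllableProd (X.syllableProd l * X.of u)
    rw [← hy, hlist] at heval
    exact ⟨y.1.2, heval, hmem, hmap⟩

theorem of_syllableProd_mul_eq {p : H → Prop}
    (hconj : ∀ u v, p u → p (v * u * v⁻¹)) (hmap : ∀ j u, u ∈ X.dom j → p u → p (X.map j u))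
    (l : List (J × H)) (hl : X.IsReduced l) {u h : H}
    (heq : X.syllableProd l * X.of u = X.of h * X.syllableProd l) (hu : p u) : p h := by
  induction l generalizing h with
  | nil =>
    simp only [syllableProd, one_mul, mul_one] at heq
    rwa [← X.of_injective heq]
  | cons a l ih =>
    obtain ⟨v, hv, hmem, rfl⟩ := X.exists_of_syllableProd_cons_mul hl heq
    exact hmap _ _ hmem (hconj _ _ (ih hl.tail hv))

theorem of_isConj {p : H → Prop}
    (hconj : ∀ u v, p u → p (v * u * v⁻¹)) (hmap : ∀ j u, u ∈ X.dom j → p u → p (X.map j u))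
    {u h : H} (hc : IsConj (X.of u) (X.of h)) (hu : p u) : p h := by
  obtain ⟨c, hc⟩ := isConj_iff.1 hc
  obtain ⟨v, l, hl, rfl⟩ : ∃ v l, X.IsReduced l ∧ c = X.of v * X.syllableProd l :=
    ⟨_, _, (c • X.oneForm).2, X.eq_of_mul_syllableProd c⟩
  have heq : X.syllableProd l * X.of u = X.of (v⁻¹ * h * v) * X.syllableProd l := by
    rw [_root_.map_mul, _root_.map_mul, map_inv, ← hc]
    group
  have hv := hconj _ v (X.of_syllableProd_mul_eq hconj hmap l hl heq hu)
  convert hv using 1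
  group

end Conjugacy

end HNNData

/-! ### The ring `ℤ[1/6]` and its three places -/

section InvSix

/-- The subring `ℤ[1/6]` of `ℚ`. -/
def intInvSix : Subring ℚ where
  carrier := {x | ∃ (n : ℕ) (a : ℤ), x * 6 ^ n = a}
  mul_mem' := by
    rintro x y ⟨n, a, h⟩ ⟨m, b, h'⟩
    exact ⟨n + m, a * b, by push_cast; rw [← h, ← h']; ring⟩
  one_mem' := ⟨0, 1, by simp⟩
  add_mem' := by
    rintro x y ⟨n, a, h⟩ ⟨m, b, h'⟩
    exact ⟨n + m, a * 6 ^ m + b * 6 ^ n, by push_cast; rw [← h, ← h']; ring⟩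
  zero_mem' := ⟨0, 0, by simp⟩
  neg_mem' := by
    rintro x ⟨n, a, h⟩
    exact ⟨n, -a, by push_cast; rw [← h]; ring⟩

theorem zpow_mem_intInvSix {x : ℚ} (hx : x ∈ intInvSix) (hx' : x⁻¹ ∈ intInvSix) (n : ℤ) :
    x ^ n ∈ intInvSix := by
  obtain ⟨m, rfl | rfl⟩ := n.eq_nat_or_neg
  · rw [zpow_natCast]
    exact pow_mem hx m
  · rw [zpow_neg, zpow_natCast, ← inv_pow]
    exact pow_mem hx' m

theorem two_zpow_mem_intInvSix (n : ℤ) : (2 : ℚ) ^ n ∈ intInvSix :=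
  zpow_mem_intInvSix (natCast_mem _ 2) ⟨1, 3, by norm_num⟩ n

theorem three_zpow_mem_intInvSix (n : ℤ) : (3 : ℚ) ^ n ∈ intInvSix :=
  zpow_mem_intInvSix (natCast_mem _ 3) ⟨1, 2, by norm_num⟩ n

/-- The unit `2 ^ a * 3 ^ b` of `ℤ[1/6]`. -/
def scale (k : ℤ × ℤ) : ℚ := 2 ^ k.1 * 3 ^ k.2

theorem scale_add (k l : ℤ × ℤ) : scale (k + l) = scale k * scale l := by
  simp only [scale, Prod.fst_add, Prod.snd_add]
  rw [zpow_add₀ (by norm_num), zpow_add₀ (by norm_num)]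
  ring

@[simp] theorem scale_zero : scale 0 = 1 := by simp [scale]

theorem scale_ne_zero (k : ℤ × ℤ) : scale k ≠ 0 := by unfold scale; positivity

theorem scale_mul_scale_neg (k : ℤ × ℤ) : scale k * scale (-k) = 1 := by
  rw [← scale_add, add_neg_cancel, scale_zero]

theorem scale_neg_mul_scale (k : ℤ × ℤ) : scale (-k) * scale k = 1 := by
  rw [mul_comm, scale_mul_scale_neg]

theorem scale_nsmul (n : ℕ) (k : ℤ × ℤ) : scale (n • k) = scale k ^ n := by
  induction n with
  | zero => simp
  | succ n ih => rw [succ_nsmul, scale_add, ih, pow_succ]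

theorem scale_mem_intInvSix (k : ℤ × ℤ) : scale k ∈ intInvSix :=
  mul_mem (two_zpow_mem_intInvSix _) (three_zpow_mem_intInvSix _)

theorem exists_eq_natCast_add_mul {m : ℕ} (hm : m.Coprime 6) (hpos : 0 < m) {x : ℚ}
    (hx : x ∈ intInvSix) : ∃ d < m, ∃ a ∈ intInvSix, x = d + m * a := by
  obtain ⟨n, a, h⟩ := hx
  obtain ⟨p, q, hpq⟩ : IsCoprime ((6 : ℤ) ^ n) (m : ℤ) :=
    .pow_left (by exact_mod_cast (Nat.isCoprime_iff_coprime.2 hm).symm)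
  have hdiv : (p : ℚ) * 6 ^ n + q * m = 1 := by exact_mod_cast hpq
  have hm0 : (m : ℚ) ≠ 0 := by positivity
  obtain ⟨d, hd⟩ : ∃ d : ℕ, a * p % m = d := Int.eq_ofNat_of_zero_le (Int.emod_nonneg _ (by omega))
  have hdm : d < m := by
    have := Int.emod_lt_of_pos (a * p) (show (0 : ℤ) < m by omega)
    omega
  have hmod : (a * p : ℚ) = d + m * (a * p / m : ℤ) := by
    have := Int.emod_add_mul_ediv (a * p) m
    rw [hd] at this
    exact_mod_cast this.symm
  refine ⟨d, hdm, (x - d) / m, ⟨n, a * q + 6 ^ n * (a * p / m), ?_⟩, by field_simp; ring⟩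
  rw [div_mul_eq_mul_div, div_eq_iff hm0]
  push_cast
  linear_combination h - (a : ℚ) * hdiv + 6 ^ n * hmod

theorem eq_of_natCast_sub_eq_mul {m d d' : ℕ} (hm : m.Coprime 6) (hd : d < m) (hd' : d' < m)
    {a : ℚ} (ha : a ∈ intInvSix) (h : (d : ℚ) - d' = m * a) : d = d' := by
  obtain ⟨n, b, hb⟩ := ha
  have hmul : ((d : ℤ) - d') * 6 ^ n = m * b := by
    have : ((d : ℚ) - d') * 6 ^ n = m * b := by rw [h, ← hb, mul_assoc]
    exact_mod_cast this
  have hc : IsCoprime (m : ℤ) ((6 : ℤ) ^ n) :=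
    .pow_right (by exact_mod_cast Nat.isCoprime_iff_coprime.2 hm)
  have := Int.eq_zero_of_abs_lt_dvd (hc.dvd_of_dvd_mul_right ⟨b, hmul⟩)
    (by rw [abs_lt]; constructor <;> omega)
  omega

end InvSix

section Places

/-- The places of `ℚ` that are nontrivial on the unit group of `ℤ[1/6]`: the usual absolute value,
the `2`-adic and the `3`-adic one. -/
noncomputable def placeAbs : Fin 3 → AbsoluteValue ℚ ℝ :=
  ![Rat.AbsoluteValue.real, Rat.AbsoluteValue.padic 2, Rat.AbsoluteValue.padic 3]

theorem placeAbs_zero_apply (x : ℚ) : placeAbs 0 x = |x| := Rat.AbsoluteValue.real_eq_abs x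

theorem placeAbs_one_apply (x : ℚ) : placeAbs 1 x = padicNorm 2 x := rfl

theorem placeAbs_two_apply (x : ℚ) : placeAbs 2 x = padicNorm 3 x := rfl

theorem placeAbs_two_eq (i : Fin 3) : placeAbs i 2 = ![2, 2⁻¹, 1] i := by
  match i with
  | 0 => simp [placeAbs_zero_apply]
  | 1 =>
    change (padicNorm 2 2 : ℝ) = 2⁻¹
    rw [show padicNorm 2 2 = 2⁻¹ from mod_cast padicNorm.padicNorm_p_of_prime (p := 2)]
    norm_num
  | 2 =>
    change (padicNorm 3 2 : ℝ) = 1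
    exact_mod_cast padicNorm.padicNorm_of_prime_of_ne (p := 3) (q := 2) (by norm_num)

theorem placeAbs_three_eq (i : Fin 3) : placeAbs i 3 = ![3, 1, 3⁻¹] i := by
  match i with
  | 0 => simp [placeAbs_zero_apply]
  | 1 =>
    change (padicNorm 2 3 : ℝ) = 1
    exact_mod_cast padicNorm.padicNorm_of_prime_of_ne (p := 2) (q := 3) (by norm_num)
  | 2 =>
    change (padicNorm 3 3 : ℝ) = 3⁻¹
    rw [show padicNorm 3 3 = 3⁻¹ from mod_cast padicNorm.padicNorm_p_of_prime (p := 3)]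
    norm_num

theorem placeAbs_scale (i : Fin 3) (k : ℤ × ℤ) :
    placeAbs i (scale k) = ![2, 2⁻¹, 1] i ^ k.1 * ![3, 1, 3⁻¹] i ^ k.2 := by
  rw [scale, map_mul, map_zpow₀, map_zpow₀, placeAbs_two_eq, placeAbs_three_eq]

theorem zpow_le_pow_natAbs {K : Type*} [Field K] [LinearOrder K] [IsStrictOrderedRing K]
    {x b : K} (hx : 0 < x) (hxb : x ≤ b) (hxb' : x⁻¹ ≤ b) (n : ℤ) :
    x ^ n ≤ b ^ n.natAbs := by
  obtain ⟨m, rfl | rfl⟩ := n.eq_nat_or_neg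
  · rw [zpow_natCast, Int.natAbs_natCast]
    exact pow_le_pow_left₀ hx.le hxb m
  · rw [zpow_neg, zpow_natCast, Int.natAbs_neg, Int.natAbs_natCast, ← inv_pow]
    exact pow_le_pow_left₀ (inv_pos.2 hx).le hxb' m

theorem placeAbs_scale_le (i : Fin 3) (k : ℤ × ℤ) : placeAbs i (scale k) ≤ 3 ^ taxicab k := by
  rw [placeAbs_scale, taxicab, pow_add]
  refine mul_le_mul (zpow_le_pow_natAbs ?_ ?_ ?_ _) (zpow_le_pow_natAbs ?_ ?_ ?_ _) ?_
    (by positivity) <;> fin_cases i <;> norm_num <;> positivity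

/-- Exponents for which `scale` has absolute value at least `2` at every place but `j`. -/
def expandingDir : Fin 3 → ℤ × ℤ := ![(-1, -1), (3, -1), (-1, 2)]

theorem two_le_placeAbs_scale_expandingDir {i j : Fin 3} (h : i ≠ j) :
    2 ≤ placeAbs i (scale (expandingDir j)) := by
  rw [placeAbs_scale]
  fin_cases i <;> fin_cases j <;> simp [expandingDir] at h ⊢ <;> norm_num

theorem padicNorm_div_prime_pow_le_one {p q : ℕ} [Fact p.Prime] [Fact q.Prime] (hpq : p ≠ q)
    (z : ℤ) (s : ℕ) : padicNorm p (z / (q : ℚ) ^ s) ≤ 1 := by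
  have h : padicNorm p ((q : ℚ) ^ s) = 1 := by
    have := map_pow (Rat.AbsoluteValue.padic p) (q : ℚ) s
    simp only [Rat.AbsoluteValue.padic_eq_padicNorm, padicNorm.padicNorm_of_prime_of_ne hpq,
      Rat.cast_one, one_pow] at this
    exact_mod_cast this
  rw [padicNorm.div, h, div_one]
  exact padicNorm.of_int z

/-- Partial fractions: remove the `p`-part of the denominator. -/
theorem exists_padicNorm_sub_div_pow_le_one (p : ℕ) [hp : Fact p.Prime] (x : ℚ) :
    ∃ (s : ℕ) (z : ℤ), padicNorm p (x - z / (p : ℚ) ^ s) ≤ 1 := by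
  obtain ⟨s, q, hq, hden⟩ := Nat.exists_eq_pow_mul_and_not_dvd x.den_nz p hp.out.ne_one
  obtain ⟨a, b, hab⟩ : IsCoprime (q : ℤ) ((p : ℤ) ^ s) :=
    .pow_right (Nat.isCoprime_iff_coprime.2 (hp.out.coprime_iff_not_dvd.2 hq).symm)
  have hp0 : (p : ℚ) ≠ 0 := mod_cast hp.out.ne_zero
  have hq0 : (q : ℚ) ≠ 0 := by
    rintro h
    obtain rfl : q = 0 := mod_cast h
    exact hq (dvd_zero p)
  have hx : x * (p ^ s * q) = x.num := by
    have := Rat.mul_den_eq_num x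
    rwa [hden, Nat.cast_mul, Nat.cast_pow] at this
  have hab' : (a : ℚ) * q + b * p ^ s = 1 := mod_cast hab
  have hsub : x - (x.num * a : ℤ) / (p : ℚ) ^ s = (x.num * b : ℤ) / (q : ℚ) := by
    push_cast
    field_simp
    linear_combination hx - (x.num : ℚ) * hab'
  refine ⟨s, x.num * a, ?_⟩
  rw [hsub, padicNorm.div, (padicNorm.nat_eq_one_iff q).2 hq, div_one]
  exact padicNorm.of_int _

theorem exists_mem_intInvSix_placeAbs_add_le_one (x : Fin 3 → ℚ) :
    ∃ a ∈ intInvSix, ∀ i, placeAbs i (x i + a) ≤ 1 := by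
  obtain ⟨s, z, hz⟩ := exists_padicNorm_sub_div_pow_le_one 2 (x 1)
  obtain ⟨t, w, hw⟩ := exists_padicNorm_sub_div_pow_le_one 3 (x 2)
  have hb : z / ((2 : ℕ) : ℚ) ^ s ∈ intInvSix := by
    simpa [div_eq_mul_inv] using mul_mem (intCast_mem intInvSix z) (two_zpow_mem_intInvSix (-s))
  have hc : w / ((3 : ℕ) : ℚ) ^ t ∈ intInvSix := by
    simpa [div_eq_mul_inv] using mul_mem (intCast_mem intInvSix w) (three_zpow_mem_intInvSix (-t))
  have hb3 := padicNorm_div_prime_pow_le_one (p := 3) (q := 2) (by norm_num) z s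
  have hc2 := padicNorm_div_prime_pow_le_one (p := 2) (q := 3) (by norm_num) w t
  generalize z / ((2 : ℕ) : ℚ) ^ s = b at *
  generalize w / ((3 : ℕ) : ℚ) ^ t = c at *
  have sub_le_one {p : ℕ} [Fact p.Prime] {u v : ℚ} (hu : padicNorm p u ≤ 1)
      (hv : padicNorm p v ≤ 1) : padicNorm p (u - v) ≤ 1 := padicNorm.sub.trans (max_le hu hv)
  let n := ⌊x 0 - b - c⌋
  refine ⟨-b - c - n, sub_mem (sub_mem (neg_mem hb) hc) (intCast_mem _ _), Fin.forall_fin_succ.2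
    ⟨?_, Fin.forall_fin_two.2 ⟨?_, ?_⟩⟩⟩
  · have h : |x 0 + (-b - c - n)| ≤ 1 := by
      rw [abs_le]
      constructor <;> linarith [Int.floor_le (x 0 - b - c), Int.lt_floor_add_one (x 0 - b - c)]
    rw [placeAbs_zero_apply]
    exact_mod_cast h
  · have h : x 1 + (-b - c - n) = x 1 - b - c - n := by ring
    change placeAbs 1 (x 1 + _) ≤ 1
    rw [placeAbs_one_apply, h]
    exact_mod_cast sub_le_one (sub_le_one hz hc2) (padicNorm.of_int n)
  · have h : x 2 + (-b - c - n) = x 2 - c - b - n := by ring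
    change placeAbs 2 (x 2 + _) ≤ 1
    rw [placeAbs_two_apply, h]
    exact_mod_cast sub_le_one (sub_le_one hw hb3) (padicNorm.of_int n)

theorem exists_intCast_eq_of_placeAbs_le_one {y : ℚ} (hy : y ∈ intInvSix)
    (hle : ∀ i ≠ 0, placeAbs i y ≤ 1) : ∃ z : ℤ, y = z := by
  obtain ⟨n, a, h⟩ := hy
  have h2 : (padicNorm 2 y : ℝ) ≤ 1 := hle 1 (by decide)
  have h3 : (padicNorm 3 y : ℝ) ≤ 1 := hle 2 (by decide)
  have prime_pow_dvd {p q : ℕ} [Fact p.Prime] (hpq : (6 : ℚ) = p * q) (hp : padicNorm p y ≤ 1) :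
      ((p ^ n : ℕ) : ℤ) ∣ a := by
    have ha : (a : ℚ) = p ^ n * (y * q ^ n) := by rw [← h, hpq]; ring
    have hpn : padicNorm p ((p : ℚ) ^ n) ≤ (p : ℚ) ^ (-n : ℤ) := by
      simpa using (padicNorm.dvd_iff_norm_le (p := p) (n := n) (z := (p : ℤ) ^ n)).1 (by simp)
    have hyq : padicNorm p (y * q ^ n) ≤ 1 := by
      rw [padicNorm.mul]
      exact mul_le_one₀ hp (padicNorm.nonneg _) (mod_cast padicNorm.of_nat (q ^ n))
    rw [padicNorm.dvd_iff_norm_le, ha, padicNorm.mul]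
    exact (mul_le_of_le_one_right (padicNorm.nonneg _) hyq).trans hpn
  obtain ⟨z, rfl⟩ : ((2 ^ n : ℕ) : ℤ) * ((3 ^ n : ℕ) : ℤ) ∣ a :=
    IsCoprime.mul_dvd (Nat.isCoprime_iff_coprime.2 (Nat.Coprime.pow n n (by norm_num)))
      (prime_pow_dvd (p := 2) (q := 3) (by norm_num) (mod_cast h2))
      (prime_pow_dvd (p := 3) (q := 2) (by norm_num) (mod_cast h3))
  refine ⟨z, mul_right_cancel₀ (pow_ne_zero n (show (6 : ℚ) ≠ 0 by norm_num)) ?_⟩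
  rw [h, show (6 : ℚ) = 2 * 3 by norm_num, mul_pow]
  push_cast
  ring

theorem finite_setOf_placeAbs_le (D : ℕ) :
    {x | x ∈ intInvSix ∧ ∀ i, placeAbs i x ≤ D}.Finite := by
  refine ((Set.finite_Icc (-(6 ^ D * D : ℤ)) (6 ^ D * D)).image
    (fun z : ℤ => (z : ℚ) / 6 ^ D)).subset ?_
  rintro x ⟨hx, hn⟩
  have hsix (i : Fin 3) (hi : i ≠ 0) : placeAbs i (x * 6 ^ D) ≤ 1 := by
    have h6 : placeAbs i 6 ≤ 2⁻¹ := by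
      rw [show (6 : ℚ) = 2 * 3 by norm_num, map_mul, placeAbs_two_eq, placeAbs_three_eq]
      fin_cases i <;> simp at hi ⊢; norm_num
    have hD : (D : ℝ) ≤ 2 ^ D := mod_cast Nat.lt_two_pow_self.le
    rw [map_mul, map_pow]
    calc placeAbs i x * placeAbs i 6 ^ D ≤ 2 ^ D * 2⁻¹ ^ D :=
          mul_le_mul ((hn i).trans hD) (pow_le_pow_left₀ (apply_nonneg _ _) h6 D)
            (by positivity) (by positivity)
      _ = 1 := by rw [← mul_pow]; norm_num
  have hmem : x * 6 ^ D ∈ intInvSix := mul_mem hx (pow_mem (natCast_mem intInvSix 6) D)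
  obtain ⟨z, hz⟩ := exists_intCast_eq_of_placeAbs_le_one hmem hsix
  have hz_le : |z| ≤ 6 ^ D * (D : ℤ) := by
    have h : |x * 6 ^ D| ≤ 6 ^ D * D := by
      rw [abs_mul, abs_of_pos (show (0 : ℚ) < 6 ^ D by positivity), mul_comm]
      exact mul_le_mul_of_nonneg_left
        (by have := hn 0; rw [placeAbs_zero_apply] at this; exact_mod_cast this) (by positivity)
    rw [hz] at h
    exact_mod_cast h
  refine ⟨z, abs_le.1 hz_le, ?_⟩
  simp only [← hz]
  field_simp

end Places

/-! ### Homotheties over `ℤ[1/6]` and systems of affine rules -/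

section Homothety

/-- The group `ℤ[1/6]^ι ⋊ ℤ²`, in which `k : ℤ²` multiplies vectors by `scale k`. It acts on `ℚ^ι`
by `x ↦ scale level • x + shift`. -/
@[ext] structure Homothety (ι : Type*) where
  shift : ι → ℚ
  level : ℤ × ℤ
  shift_mem : ∀ c, shift c ∈ intInvSix

namespace Homothety

variable {ι : Type*}

instance : Mul (Homothety ι) :=
  ⟨fun g h => ⟨g.shift + scale g.level • h.shift, g.level + h.level, fun c =>
    add_mem (g.shift_mem c) (mul_mem (scale_mem_intInvSix _) (h.shift_mem c))⟩⟩

instance : One (Homothety ι) := ⟨⟨0, 0, fun _ => zero_mem _⟩⟩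

instance : Inv (Homothety ι) :=
  ⟨fun g => ⟨-(scale (-g.level) • g.shift), -g.level, fun c =>
    neg_mem (mul_mem (scale_mem_intInvSix _) (g.shift_mem c))⟩⟩

@[simp] theorem mul_shift (g h : Homothety ι) :
    (g * h).shift = g.shift + scale g.level • h.shift := rfl

@[simp] theorem mul_level (g h : Homothety ι) : (g * h).level = g.level + h.level := rfl

@[simp] theorem one_shift : (1 : Homothety ι).shift = 0 := rfl

@[simp] theorem one_level : (1 : Homothety ι).level = 0 := rfl

@[simp] theorem inv_shift (g : Homothety ι) : g⁻¹.shift = -(scale (-g.level) • g.shift) := rfl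

@[simp] theorem inv_level (g : Homothety ι) : g⁻¹.level = -g.level := rfl

instance : Group (Homothety ι) :=
  Group.ofLeftAxioms
    (fun g h l => Homothety.ext (by simp [scale_add, mul_smul, add_assoc]) (by simp [add_assoc]))
    (fun g => Homothety.ext (by simp) (by simp))
    (fun g => Homothety.ext (by simp) (by simp))

instance : MulAction (Homothety ι) (ι → ℚ) where
  smul g x := scale g.level • x + g.shift
  one_smul x := show scale 0 • x + 0 = x by simp
  mul_smul g h x := by
    change scale (g.level + h.level) • x + (g.shift + scale g.level • h.shift) =
      scale g.level • (scale h.level • x + h.shift) + g.shift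
    rw [scale_add, mul_smul, smul_add]
    abel

theorem smul_eq (g : Homothety ι) (x : ι → ℚ) : g • x = scale g.level • x + g.shift := rfl

/-- The projection of `ℤ[1/6]^ι ⋊ ℤ²` to `ℤ²`. -/
def levelHom : Homothety ι →* Multiplicative (ℤ × ℤ) where
  toFun g := .ofAdd g.level
  map_one' := rfl
  map_mul' _ _ := rfl

/-- The translation by `u`. -/
def translation (u : ι → ℚ) (hu : ∀ c, u c ∈ intInvSix) : Homothety ι := ⟨u, 0, hu⟩

end Homothety

end Homothety

/-- A system of rules of a machine with one register for each element of `κ`. A configuration is a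
vector of `ℚ^(κ + 1)`, the coordinate `none` being `1`. Rule `j` applies if every register `c` has a
value of the form `residue j c + modulus ^ exponent j c * a`, which it replaces by
`residue (bar j) c + modulus ^ exponent (bar j) c * a`; the rule `bar j` undoes it. -/
structure AffineSystem (κ J : Type*) where
  modulus : ℕ
  coprime_six : modulus.Coprime 6
  bar : J → J
  bar_bar : ∀ j, bar (bar j) = j
  residue : J → κ → ℤ
  exponent : J → κ → ℕ

namespace AffineSystem

variable {κ J : Type*} (M : AffineSystem κ J)

section Rules

theorem modulus_pos : 0 < M.modulus :=
  Nat.pos_of_ne_zero fun h => by simpa [h] using M.coprime_six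

theorem modulus_ne_zero : (M.modulus : ℚ) ≠ 0 := mod_cast M.modulus_pos.ne'

/-- The linear extension of the rule `j` to all of `ℚ^(κ + 1)`. -/
def ruleMap (j : J) : (Option κ → ℚ) →ₗ[ℚ] (Option κ → ℚ) where
  toFun x
    | none => x none
    | some c => M.residue (M.bar j) c * x none +
        M.modulus ^ M.exponent (M.bar j) c / M.modulus ^ M.exponent j c *
          (x (some c) - M.residue j c * x none)
  map_add' x y := by
    ext (_ | c)
    · rfl
    · simp only [Pi.add_apply]; ring
  map_smul' a x := by
    ext (_ | c)
    · rfl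
    · simp only [Pi.smul_apply, smul_eq_mul, RingHom.id_apply]; ring

@[simp] theorem ruleMap_none (j : J) (x : Option κ → ℚ) : M.ruleMap j x none = x none := rfl

theorem ruleMap_some (j : J) (x : Option κ → ℚ) (c : κ) :
    M.ruleMap j x (some c) = M.residue (M.bar j) c * x none +
      M.modulus ^ M.exponent (M.bar j) c / M.modulus ^ M.exponent j c *
        (x (some c) - M.residue j c * x none) := rfl

theorem ruleMap_bar (j : J) (x : Option κ → ℚ) : M.ruleMap (M.bar j) (M.ruleMap j x) = x := by
  ext (_ | c)
  · rfl
  · have := M.modulus_ne_zero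
    rw [ruleMap_some, ruleMap_some, ruleMap_none, M.bar_bar]
    field_simp
    ring

/-- The vectors to which the rule `j` applies. -/
def lattice (j : J) : Submodule intInvSix (Option κ → ℚ) where
  carrier := {x | ∀ c, ∃ a ∈ intInvSix,
    x (some c) = M.residue j c * x none + M.modulus ^ M.exponent j c * a}
  add_mem' {x y} hx hy c := by
    obtain ⟨a, ha, hxa⟩ := hx c
    obtain ⟨b, hb, hyb⟩ := hy c
    exact ⟨a + b, add_mem ha hb, by simp only [Pi.add_apply, hxa, hyb]; ring⟩
  zero_mem' c := ⟨0, zero_mem _, by simp⟩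
  smul_mem' r x hx c := by
    obtain ⟨a, ha, hxa⟩ := hx c
    refine ⟨r * a, mul_mem r.2 ha, ?_⟩
    simp only [Pi.smul_apply, Subring.smul_def, smul_eq_mul, hxa]
    ring

theorem scale_smul_mem_lattice {j : J} {x : Option κ → ℚ} (hx : x ∈ M.lattice j) (k : ℤ × ℤ) :
    scale k • x ∈ M.lattice j :=
  (M.lattice j).smul_mem ⟨scale k, scale_mem_intInvSix k⟩ hx

theorem ruleMap_mem_lattice {j : J} {x : Option κ → ℚ} (hx : x ∈ M.lattice j) :
    M.ruleMap j x ∈ M.lattice (M.bar j) := by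
  intro c
  obtain ⟨a, ha, hxa⟩ := hx c
  refine ⟨a, ha, ?_⟩
  have := M.modulus_ne_zero
  rw [ruleMap_some, hxa, ruleMap_none]
  field_simp
  ring

theorem apply_mem_of_mem_lattice {j : J} {x : Option κ → ℚ} (hx : x ∈ M.lattice j)
    (hx0 : x none ∈ intInvSix) : ∀ c, x c ∈ intInvSix
  | none => hx0
  | some c => by
    obtain ⟨a, ha, hxa⟩ := hx c
    rw [hxa]
    exact add_mem (mul_mem (intCast_mem _ _) hx0) (mul_mem (pow_mem (natCast_mem _ _) _) ha)

theorem exists_residue_class (j : J) :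
    ∃ q : {x : Option κ → ℚ // ∀ c, x c ∈ intInvSix} →
        (c : κ) → Fin (M.modulus ^ M.exponent j c),
      ∀ x y, q x = q y → (x - y : Option κ → ℚ) ∈ M.lattice j := by
  have hpos c : 0 < M.modulus ^ M.exponent j c := pow_pos M.modulus_pos _
  choose d hd a ha hda using
    fun (x : {x : Option κ → ℚ // ∀ c, x c ∈ intInvSix}) (c : κ) =>
      exists_eq_natCast_add_mul (M.coprime_six.pow_left _) (hpos c)
        (sub_mem (x.2 (some c)) (mul_mem (intCast_mem intInvSix (M.residue j c)) (x.2 none)))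
  refine ⟨fun x c => ⟨d x c, hd x c⟩, ?_⟩
  intro x y hxy c
  have hdxy : d x c = d y c := by simpa using congrFun hxy c
  refine ⟨a x c - a y c, sub_mem (ha _ _) (ha _ _), ?_⟩
  have hx := hda x c
  have hy := hda y c
  rw [hdxy] at hx
  simp only [Pi.sub_apply]
  push_cast at hx hy ⊢
  linear_combination hx - hy

end Rules

section Group

open Classical in
/-- The HNN data whose stable letters conjugate the translations by vectors to which a rule applies
as that rule prescribes. -/
noncomputable def hnnData : HNNData (Homothety (Option κ)) J where
  bar := M.bar
  bar_bar := M.bar_bar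
  dom j :=
    { carrier := {h | h.shift ∈ M.lattice j}
      mul_mem' := fun {g h} hg hh =>
        (M.lattice j).add_mem hg (M.scale_smul_mem_lattice hh g.level)
      one_mem' := (M.lattice j).zero_mem
      inv_mem' := fun {h} hh => (M.lattice j).neg_mem (M.scale_smul_mem_lattice hh (-h.level)) }
  map j h :=
    if hh : h.shift ∈ M.lattice j then
      ⟨M.ruleMap j h.shift, h.level,
        M.apply_mem_of_mem_lattice (M.ruleMap_mem_lattice hh) (h.shift_mem none)⟩
    else 1
  map_mem j h hh := by
    have hh' : h.shift ∈ M.lattice j := hh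
    rw [dif_pos hh']
    exact M.ruleMap_mem_lattice hh'
  map_bar j h hh := by
    have hh' : h.shift ∈ M.lattice j := hh
    rw [dif_pos hh', dif_pos (M.ruleMap_mem_lattice hh')]
    exact Homothety.ext (M.ruleMap_bar j _) rfl
  map_mul j g h hg hh := by
    have hg' : g.shift ∈ M.lattice j := hg
    have hh' : h.shift ∈ M.lattice j := hh
    have hgh : (g * h).shift ∈ M.lattice j :=
      (M.lattice j).add_mem hg' (M.scale_smul_mem_lattice hh' g.level)
    rw [dif_pos hg', dif_pos hh', dif_pos hgh]
    exact Homothety.ext (by simp) rfl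

theorem mem_dom {j : J} {h : Homothety (Option κ)} :
    h ∈ M.hnnData.dom j ↔ h.shift ∈ M.lattice j := Iff.rfl

theorem hnnData_map_shift {j : J} {h : Homothety (Option κ)} (hh : h ∈ M.hnnData.dom j) :
    (M.hnnData.map j h).shift = M.ruleMap j h.shift := by
  simp only [hnnData, dif_pos (M.mem_dom.1 hh)]

theorem hnnData_map_level {j : J} {h : Homothety (Option κ)} (hh : h ∈ M.hnnData.dom j) :
    (M.hnnData.map j h).level = h.level := by
  simp only [hnnData, dif_pos (M.mem_dom.1 hh)]

/-- The rule `j` as a permutation of `ℚ^(κ + 1)`. -/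
def rulePerm (j : J) : Equiv.Perm (Option κ → ℚ) where
  toFun := M.ruleMap j
  invFun := M.ruleMap (M.bar j)
  left_inv := M.ruleMap_bar j
  right_inv x := by simpa [M.bar_bar] using M.ruleMap_bar (M.bar j) x

/-- The action of the HNN extension on `ℚ^(κ + 1)` by homotheties and rules. -/
noncomputable def actHom : M.hnnData.Extension →* Equiv.Perm (Option κ → ℚ) :=
  M.hnnData.lift (MulAction.toPermHom _ _) M.rulePerm
    (fun j u hu => by
      rw [mul_inv_eq_iff_eq_mul]
      ext1 x
      change M.ruleMap j (u • x) = M.hnnData.map j u • M.ruleMap j x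
      rw [Homothety.smul_eq, Homothety.smul_eq, M.hnnData_map_shift hu, M.hnnData_map_level hu,
        map_add, map_smul])
    (fun _ => Equiv.ext fun _ => rfl)

noncomputable instance : MulAction M.hnnData.Extension (Option κ → ℚ) :=
  MulAction.compHom _ M.actHom

theorem of_smul (h : Homothety (Option κ)) (x : Option κ → ℚ) : M.hnnData.of h • x = h • x := by
  change M.actHom (M.hnnData.of h) x = _
  rw [actHom, HNNData.lift_of]
  rfl

theorem stable_smul (j : J) (x : Option κ → ℚ) : M.hnnData.stable j • x = M.ruleMap j x := by
  change M.actHom (M.hnnData.stable j) x = _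
  rw [actHom, HNNData.lift_stable]
  rfl

/-- The homomorphism to `ℤ²` that kills the stable letters. -/
noncomputable def levelHom : M.hnnData.Extension →* Multiplicative (ℤ × ℤ) :=
  M.hnnData.lift Homothety.levelHom (fun _ => 1)
    (fun j u hu => by
      rw [one_mul, inv_one, mul_one]
      exact (congrArg Multiplicative.ofAdd (M.hnnData_map_level hu)).symm)
    (by simp)

/-- `levelHom`, written additively. -/
noncomputable def level (g : M.hnnData.Extension) : ℤ × ℤ := (M.levelHom g).toAdd

theorem level_mul (g h : M.hnnData.Extension) : M.level (g * h) = M.level g + M.level h := by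
  simp [level]

theorem level_inv (g : M.hnnData.Extension) : M.level g⁻¹ = -M.level g := by
  simp [level]

theorem levelHom_of (h : Homothety (Option κ)) :
    M.levelHom (M.hnnData.of h) = .ofAdd h.level := by
  rw [levelHom, HNNData.lift_of]
  rfl

theorem level_of (h : Homothety (Option κ)) : M.level (M.hnnData.of h) = h.level := by
  rw [level, levelHom_of, toAdd_ofAdd]

theorem level_stable (j : J) : M.level (M.hnnData.stable j) = 0 := by
  rw [level, levelHom, HNNData.lift_stable, toAdd_one]

theorem finite_range_cosetRep [Finite κ] (j : J) :
    (Set.range (M.hnnData.cosetRep j)).Finite := by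
  obtain ⟨q, hq⟩ := M.exists_residue_class j
  have hmem (h : Homothety (Option κ)) (c) : (scale (-h.level) • h.shift) c ∈ intInvSix :=
    mul_mem (scale_mem_intInvSix _) (h.shift_mem c)
  refine M.hnnData.finite_range_cosetRep j (fun h => q ⟨_, hmem h⟩) fun g h hgh => ?_
  have heq : (g * h⁻¹).shift =
      scale g.level • (scale (-g.level) • g.shift - scale (-h.level) • h.shift) := by
    rw [smul_sub, smul_smul, scale_mul_scale_neg, one_smul]
    simp [sub_eq_add_neg]
  rw [mem_dom, heq]
  exact M.scale_smul_mem_lattice (hq _ _ hgh) g.level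

end Group

end AffineSystem

/-! ### The framed action of the group of an affine system -/

section VectorNorm

variable {K ι : Type*} [Field K] [Fintype ι]

/-- The `ℓ¹` norm on `K^ι` defined by an absolute value of `K`. -/
def vecNorm (v : AbsoluteValue K ℝ) (x : ι → K) : ℝ := ∑ c, v (x c)

variable (v : AbsoluteValue K ℝ)

@[simp] theorem vecNorm_zero : vecNorm v (0 : ι → K) = 0 := by simp [vecNorm]

theorem vecNorm_nonneg (x : ι → K) : 0 ≤ vecNorm v x := Finset.sum_nonneg fun _ _ => v.nonneg _

theorem apply_le_vecNorm (x : ι → K) (c : ι) : v (x c) ≤ vecNorm v x :=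
  Finset.single_le_sum (f := fun c => v (x c)) (fun _ _ => v.nonneg _) (Finset.mem_univ c)

theorem vecNorm_smul (a : K) (x : ι → K) : vecNorm v (a • x) = v a * vecNorm v x := by
  simp only [vecNorm, Finset.mul_sum, Pi.smul_apply, smul_eq_mul, map_mul]

theorem vecNorm_add_le (x y : ι → K) : vecNorm v (x + y) ≤ vecNorm v x + vecNorm v y := by
  rw [vecNorm, vecNorm, vecNorm, ← Finset.sum_add_distrib]
  exact Finset.sum_le_sum fun c _ => v.add_le _ _

theorem vecNorm_neg (x : ι → K) : vecNorm v (-x) = vecNorm v x :=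
  Finset.sum_congr rfl fun _ _ => v.map_neg _

theorem vecNorm_sub_comm (x y : ι → K) : vecNorm v (x - y) = vecNorm v (y - x) := by
  rw [← neg_sub, vecNorm_neg]

theorem vecNorm_sub_le (x y z : ι → K) :
    vecNorm v (x - z) ≤ vecNorm v (x - y) + vecNorm v (y - z) := by
  simpa using vecNorm_add_le v (x - y) (y - z)

theorem exists_vecNorm_map_le (L : (ι → K) →ₗ[K] (ι → K)) :
    ∃ C : ℝ, ∀ x, vecNorm v (L x) ≤ C * vecNorm v x := by
  classical
  refine ⟨∑ d, vecNorm v (L (Pi.single d 1)), fun x => ?_⟩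
  have hx : L x = ∑ d, x d • L (Pi.single d 1) := by
    conv_lhs => rw [pi_eq_sum_univ' x, map_sum]
    simp only [map_smul]
  calc vecNorm v (L x) ≤ ∑ d, vecNorm v (x d • L (Pi.single d 1)) := by
        rw [hx]
        exact Finset.le_sum_of_subadditive _ (vecNorm_zero v).le (vecNorm_add_le v) _ _
    _ = ∑ d, vecNorm v (L (Pi.single d 1)) * v (x d) := by simp only [vecNorm_smul, mul_comm]
    _ ≤ ∑ d, vecNorm v (L (Pi.single d 1)) * vecNorm v x := by
        gcongr with d
        · exact vecNorm_nonneg _ _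
        · exact apply_le_vecNorm v x d
    _ = _ := (Finset.sum_mul ..).symm

end VectorNorm

theorem finite_setOf_taxicab_le (D : ℕ) : {k : ℤ × ℤ | taxicab k ≤ D}.Finite := by
  refine (Set.finite_Icc ((-D : ℤ), (-D : ℤ)) ((D : ℤ), (D : ℤ))).subset fun k hk => ?_
  simp only [Set.mem_ofPred_eq, taxicab] at hk
  simp only [Set.mem_Icc, Prod.le_def]
  omega

theorem Homothety.finite_ball {ι : Type*} [Fintype ι] (D D' : ℕ) :
    {h : Homothety ι | taxicab h.level ≤ D ∧ ∀ i, vecNorm (placeAbs i) h.shift ≤ D'}.Finite := by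
  refine (((finite_setOf_taxicab_le D).prod
    (Set.Finite.pi' fun _ : ι => finite_setOf_placeAbs_le D')).preimage
      (f := fun h : Homothety ι => (h.level, h.shift)) ?_).subset ?_
  · intro g _ h _ hgh
    exact Homothety.ext (congrArg Prod.snd hgh) (congrArg Prod.fst hgh)
  · rintro h ⟨hlevel, hshift⟩
    exact ⟨hlevel, fun c => ⟨h.shift_mem c, fun i => (apply_le_vecNorm _ _ c).trans (hshift i)⟩⟩

namespace AffineSystem

variable {κ J : Type*} (M : AffineSystem κ J) [Fintype κ]

section Lipschitz

theorem vecNorm_of_smul_sub (i : Fin 3) (h : Homothety (Option κ)) (a b : Option κ → ℚ) :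
    vecNorm (placeAbs i) (M.hnnData.of h • a - M.hnnData.of h • b) =
      placeAbs i (scale h.level) * vecNorm (placeAbs i) (a - b) := by
  rw [of_smul, of_smul, Homothety.smul_eq, Homothety.smul_eq, add_sub_add_right_eq_sub, ← smul_sub,
    vecNorm_smul]

variable [Finite J]

theorem exists_ruleMap_bound : ∃ C : ℕ, 3 ≤ C ∧ ∀ i j x,
    vecNorm (placeAbs i) (M.ruleMap j x) ≤ C * vecNorm (placeAbs i) x := by
  choose C hC using fun p : Fin 3 × J => exists_vecNorm_map_le (placeAbs p.1) (M.ruleMap p.2)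
  obtain ⟨C', hC'⟩ := (Set.finite_range C).bddAbove
  obtain ⟨N, hN⟩ := exists_nat_ge C'
  refine ⟨max 3 N, le_max_left _ _, fun i j x => (hC (i, j) x).trans ?_⟩
  gcongr
  · exact vecNorm_nonneg _ _
  · exact ((hC' ⟨_, rfl⟩).trans hN).trans (mod_cast le_max_right _ _)

/-- A common Lipschitz constant of the rules at the three places. It is at least `3` so that it also
bounds the growth of `scale`. -/
noncomputable def lipschitzConst : ℕ := M.exists_ruleMap_bound.choose

theorem three_le_lipschitzConst : 3 ≤ M.lipschitzConst := M.exists_ruleMap_bound.choose_spec.1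

theorem vecNorm_stable_smul_sub_le (i : Fin 3) (j : J) (a b : Option κ → ℚ) :
    vecNorm (placeAbs i) (M.hnnData.stable j • a - M.hnnData.stable j • b) ≤
      M.lipschitzConst * vecNorm (placeAbs i) (a - b) := by
  rw [stable_smul, stable_smul, ← map_sub]
  exact M.exists_ruleMap_bound.choose_spec.2 i j _

theorem vecNorm_syllableProd_smul_sub_le (i : Fin 3) (l : List (J × Homothety (Option κ)))
    (a b : Option κ → ℚ) :
    vecNorm (placeAbs i) (M.hnnData.syllableProd l • a - M.hnnData.syllableProd l • b) ≤
      M.lipschitzConst ^ l.length * placeAbs i (scale (M.level (M.hnnData.syllableProd l))) *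
        vecNorm (placeAbs i) (a - b) := by
  induction l with
  | nil => simp [HNNData.syllableProd, level]
  | cons x l ih =>
    obtain ⟨j, r⟩ := x
    simp only [HNNData.syllableProd, level_mul, level_stable, level_of, zero_add, mul_smul,
      List.length_cons]
    grw [vecNorm_stable_smul_sub_le, vecNorm_of_smul_sub, ih, scale_add, map_mul, pow_succ]
    exact le_of_eq (by ring)

theorem vecNorm_syllableProd_inv_smul_sub_le (i : Fin 3) (l : List (J × Homothety (Option κ)))
    (a b : Option κ → ℚ) :
    vecNorm (placeAbs i) ((M.hnnData.syllableProd l)⁻¹ • a - (M.hnnData.syllableProd l)⁻¹ • b) ≤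
      M.lipschitzConst ^ l.length * placeAbs i (scale (-M.level (M.hnnData.syllableProd l))) *
        vecNorm (placeAbs i) (a - b) := by
  induction l generalizing a b with
  | nil => simp [HNNData.syllableProd, level]
  | cons x l ih =>
    obtain ⟨j, r⟩ := x
    simp only [HNNData.syllableProd, level_mul, level_stable, level_of, zero_add, mul_smul,
      mul_inv_rev, ← HNNData.stable_bar, ← map_inv, List.length_cons]
    grw [ih, vecNorm_of_smul_sub, vecNorm_stable_smul_sub_le, neg_add, scale_add, map_mul, pow_succ]
    exact le_of_eq (by rw [Homothety.inv_level]; ring)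

theorem vecNorm_smul_sub_le (i : Fin 3) (s : M.hnnData.Extension) (a b : Option κ → ℚ) :
    vecNorm (placeAbs i) (s • a - s • b) ≤ M.lipschitzConst ^ (M.hnnData.vertex s).length *
      placeAbs i (scale (M.level s)) * vecNorm (placeAbs i) (a - b) := by
  have hs := M.hnnData.eq_syllableProd_inv_mul_of s
  generalize M.hnnData.vertex s = l at *
  generalize (M.hnnData.head s)⁻¹ = h at *
  subst hs
  rw [mul_smul, mul_smul, level_mul, level_inv, level_of, scale_add, map_mul]
  grw [vecNorm_syllableProd_inv_smul_sub_le, vecNorm_of_smul_sub]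
  exact le_of_eq (by ring)

theorem vecNorm_inv_smul_sub_le (i : Fin 3) (s : M.hnnData.Extension) (a b : Option κ → ℚ) :
    vecNorm (placeAbs i) (s⁻¹ • a - s⁻¹ • b) ≤ M.lipschitzConst ^ (M.hnnData.vertex s).length *
      placeAbs i (scale (-M.level s)) * vecNorm (placeAbs i) (a - b) := by
  rw [← level_inv, HNNData.inv_eq_of_head_mul, mul_smul, mul_smul, level_mul, level_of, scale_add,
    map_mul, vecNorm_of_smul_sub]
  grw [vecNorm_syllableProd_smul_sub_le]
  exact le_of_eq (by ring)

theorem finite_ball_of_coset (g : M.hnnData.Extension) (D : ℕ) :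
    {s | (∃ h, s = g * M.hnnData.of h) ∧ taxicab (M.level s) ≤ D ∧
      ∀ i, vecNorm (placeAbs i) (s • (0 : Option κ → ℚ)) ≤ D}.Finite := by
  choose N hN using fun i => exists_nat_ge (M.lipschitzConst ^ (M.hnnData.vertex g).length *
    placeAbs i (scale (-M.level g)) * (D + vecNorm (placeAbs i) (g • (0 : Option κ → ℚ))))
  have hshift h (hh : ∀ i, vecNorm (placeAbs i) ((g * M.hnnData.of h) • (0 : Option κ → ℚ)) ≤ D)
      (i) : vecNorm (placeAbs i) h.shift ≤ (∑ i, N i : ℕ) := by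
    have hzero : h.shift = g⁻¹ • (g * M.hnnData.of h) • (0 : Option κ → ℚ) - g⁻¹ • g • 0 := by
      simp [mul_smul, of_smul, Homothety.smul_eq]
    grw [hzero, vecNorm_inv_smul_sub_le, ← Finset.single_le_sum (f := N) (fun _ _ => Nat.zero_le _)
      (Finset.mem_univ i), ← hN i, vecNorm_sub_le _ _ 0, sub_zero, zero_sub, vecNorm_neg, hh i]
  refine ((Homothety.finite_ball (D + taxicab (M.level g)) (∑ i, N i)).image
    fun h => g * M.hnnData.of h).subset ?_
  rintro _ ⟨⟨h, rfl⟩, hlevel, hh⟩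
  refine ⟨h, ⟨?_, hshift h hh⟩, rfl⟩
  have hdiff : h.level = M.level (g * M.hnnData.of h) - M.level g := by simp [level_mul, level_of]
  grw [hdiff, taxicab_sub_le, hlevel]

theorem finite_ball (D : ℕ) :
    {s : M.hnnData.Extension | (M.hnnData.vertex s).length ≤ 1 ∧ taxicab (M.level s) ≤ D ∧
      ∀ i, vecNorm (placeAbs i) (s • (0 : Option κ → ℚ)) ≤ D}.Finite := by
  have hfin := M.hnnData.finite_setOf_isReduced_length_le_one M.finite_range_cosetRep
  refine (hfin.biUnion fun l _ => M.finite_ball_of_coset (M.hnnData.syllableProd l)⁻¹ D).subset ?_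
  rintro s ⟨hlen, hs⟩
  exact Set.mem_biUnion ⟨M.hnnData.isReduced_vertex s, hlen⟩
    ⟨⟨_, M.hnnData.eq_syllableProd_inv_mul_of s⟩, hs⟩

end Lipschitz

theorem exists_framed (l : List (J × Homothety (Option κ))) (hl : M.hnnData.IsReduced l)
    (k : ℤ × ℤ) (c : Fin 3 → Option κ → ℚ) :
    ∃ g : M.hnnData.Extension, M.hnnData.vertex g = l ∧ M.level g = k ∧
      ∀ i, vecNorm (placeAbs i) (g⁻¹ • c i) ≤ Fintype.card (Option κ) := by
  let k' := -k - M.level (M.hnnData.syllableProd l)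
  choose a ha hac using fun d : Option κ => exists_mem_intInvSix_placeAbs_add_le_one
    fun i => (scale k' • M.hnnData.syllableProd l • c i) d
  refine ⟨(M.hnnData.of ⟨a, k', ha⟩ * M.hnnData.syllableProd l)⁻¹,
    M.hnnData.vertex_of_mul_syllableProd_inv l hl _, ?_, fun i => ?_⟩
  · rw [level_inv, level_mul, level_of]
    simp [k']
  · rw [inv_inv, mul_smul, of_smul, Homothety.smul_eq]
    refine (Finset.sum_le_sum fun d _ => hac d i).trans ?_
    simp

variable [Finite J]

/-- The action of the group of an affine system on `ℚ^(κ + 1)`, framed by its Bass–Serre tree, the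
projection to `ℤ²`, and the real, `2`-adic and `3`-adic norms. -/
noncomputable def framedAction :
    FramedAction M.hnnData.Extension (Option κ → ℚ) (J × Homothety (Option κ)) where
  origin := 0
  vertex := M.hnnData.vertex
  Reduced := M.hnnData.IsReduced
  level := M.level
  dist i a b := vecNorm (placeAbs i) (a - b)
  modulus i k := placeAbs i (scale k)
  base := M.lipschitzConst
  radius := Fintype.card (Option κ)
  dir j := M.lipschitzConst • expandingDir j
  level_mul := M.level_mul
  dist_self i a := by simp
  dist_comm i a b := vecNorm_sub_comm _ a b
  dist_triangle i a b c := vecNorm_sub_le _ a b c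
  two_le_base := mod_cast (Nat.le_succ 2).trans M.three_le_lipschitzConst
  radius_nonneg := by positivity
  dist_smul_le := M.vecNorm_smul_sub_le
  dist_inv_smul_le := M.vecNorm_inv_smul_sub_le
  modulus_add i k l := by rw [scale_add, map_mul]
  modulus_pos i k := (placeAbs i).pos (scale_ne_zero k)
  modulus_le i k := (placeAbs_scale_le i k).trans <|
    pow_le_pow_left₀ (by norm_num) (mod_cast M.three_le_lipschitzConst) _
  base_le_modulus_dir i j hij := calc
    (M.lipschitzConst : ℝ) ≤ 2 ^ M.lipschitzConst := mod_cast Nat.lt_two_pow_self.le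
    _ ≤ placeAbs i (scale (expandingDir j)) ^ M.lipschitzConst :=
      pow_le_pow_left₀ (by norm_num) (two_le_placeAbs_scale_expandingDir hij) _
    _ = _ := by rw [scale_nsmul, map_pow]
  vertex_one := M.hnnData.vertex_one
  reduced_vertex := M.hnnData.isReduced_vertex
  reduced_of_cons _ _ hl := hl.tail
  length_vertex_mul_le := M.hnnData.length_vertex_mul_le
  treeAdj_vertex_mul := M.hnnData.treeAdj_vertex_mul
  length_vertex_inv_mul_le_one _ _ := M.hnnData.length_vertex_inv_mul_le_one
  vertex_inv_mul_eq_nil _ _ := M.hnnData.vertex_inv_mul_eq_nil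
  exists_framed l hl k c := by
    simpa only [vecNorm_sub_comm _ 0, sub_zero] using M.exists_framed l hl k c
  finite_ball D := by
    simpa only [vecNorm_sub_comm _ 0, sub_zero] using M.finite_ball D

end AffineSystem

/-! ### Modular machines and conjugacy -/

namespace AffineSystem

variable {κ J : Type*} (M : AffineSystem κ J) {x y : Option κ → ℚ}
  {hx : ∀ c, x c ∈ intInvSix} {hy : ∀ c, y c ∈ intInvSix}

theorem isConj_translation_ruleMap {j : J} (hj : x ∈ M.lattice j) (hxy : M.ruleMap j x = y) :
    IsConj (M.hnnData.of (.translation x hx)) (M.hnnData.of (.translation y hy)) := by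
  have hdom : Homothety.translation x hx ∈ M.hnnData.dom j := hj
  refine isConj_iff.2 ⟨M.hnnData.stable j, ?_⟩
  rw [M.hnnData.stable_conj_of j hdom]
  congr 1
  exact Homothety.ext ((M.hnnData_map_shift hdom).trans hxy) (M.hnnData_map_level hdom)

theorem of_isConj_translation {p : (Option κ → ℚ) → Prop} (hscale : ∀ k x, p x → p (scale k • x))
    (hrule : ∀ j x, x ∈ M.lattice j → p x → p (M.ruleMap j x))
    (hc : IsConj (M.hnnData.of (.translation x hx)) (M.hnnData.of (.translation y hy)))
    (h : p x) : p y := by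
  refine (M.hnnData.of_isConj (p := fun h => h.level = 0 ∧ p h.shift) ?_ ?_ hc ⟨rfl, h⟩).2
  · rintro u v ⟨hu, hpu⟩
    have hshift : (v * u * v⁻¹).shift = scale v.level • u.shift := by
      simp only [Homothety.mul_shift, Homothety.mul_level, Homothety.inv_shift, hu, add_zero,
        smul_neg, smul_smul, scale_mul_scale_neg, one_smul]
      abel
    exact ⟨by simp [hu], hshift ▸ hscale _ _ hpu⟩
  · rintro j u hj ⟨hu, hpu⟩
    rw [M.hnnData_map_level hj, M.hnnData_map_shift hj]
    exact ⟨hu, hrule j _ hj hpu⟩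

end AffineSystem

/-- A modular machine. It has one register, containing a natural number, for each element of `κ`.
A step replaces the contents `r c + modulus * q c` of the registers, where `r c < modulus`, by
`newResidue r c + modulus ^ newExponent r c * q c`. Each register is a stack of digits to the base
`modulus`, the top digit being the least significant one; thus a step pops the top digit of each
stack and pushes `newExponent r c` digits onto the stack `c`. -/
structure ModularMachine (κ : Type*) where
  modulus : ℕ
  coprime_six : modulus.Coprime 6
  newResidue : (κ → Fin modulus) → κ → ℕ
  newExponent : (κ → Fin modulus) → κ → ℕ

namespace ModularMachine

variable {κ : Type*} (M : ModularMachine κ)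

theorem modulus_pos : 0 < M.modulus :=
  Nat.pos_of_ne_zero fun h => by simpa [h] using M.coprime_six

/-- The last digits of the registers. -/
def residues (s : κ → ℕ) : κ → Fin M.modulus := fun c =>
  ⟨s c % M.modulus, Nat.mod_lt _ M.modulus_pos⟩

/-- One step of a modular machine. -/
def step (s : κ → ℕ) : κ → ℕ := fun c =>
  M.newResidue (M.residues s) c + M.modulus ^ M.newExponent (M.residues s) c * (s c / M.modulus)

/-- The affine rules of a modular machine: `(r, true)` is a step from a configuration with last
digits `r`, and `(r, false)` is its inverse. -/
def toAffineSystem : AffineSystem κ ((κ → Fin M.modulus) × Bool) where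
  modulus := M.modulus
  coprime_six := M.coprime_six
  bar j := (j.1, !j.2)
  bar_bar j := by simp
  residue
    | (r, true), c => (r c : ℕ)
    | (r, false), c => M.newResidue r c
  exponent
    | (_, true), _ => 1
    | (r, false), c => M.newExponent r c

/-- The vector of `ℚ^(κ + 1)` that represents a configuration of a modular machine. -/
def configuration (s : κ → ℕ) : Option κ → ℚ
  | none => 1
  | some c => s c

theorem configuration_injective : Function.Injective (configuration (κ := κ)) := fun s t h => by
  ext c
  exact Nat.cast_injective (R := ℚ) (congrFun h (some c))

theorem configuration_mem (s : κ → ℕ) : ∀ c, configuration s c ∈ intInvSix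
  | none => one_mem _
  | some _ => natCast_mem _ _

/-- A step of a modular machine from any vector to which it applies. -/
def RuleStep (x y : Option κ → ℚ) : Prop :=
  ∃ r, x ∈ M.toAffineSystem.lattice (r, true) ∧ M.toAffineSystem.ruleMap (r, true) x = y

variable {M}

theorem RuleStep.unique {x y z : Option κ → ℚ} (hx : x none = 1) (hy : M.RuleStep x y)
    (hz : M.RuleStep x z) : y = z := by
  obtain ⟨r, hr, rfl⟩ := hy
  obtain ⟨r', hr', rfl⟩ := hz
  obtain rfl : r = r' := by
    ext c
    obtain ⟨a, ha, hra⟩ := hr c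
    obtain ⟨a', ha', hra'⟩ := hr' c
    refine eq_of_natCast_sub_eq_mul M.coprime_six (r c).2 (r' c).2 (sub_mem ha' ha) ?_
    simp only [toAffineSystem, hx, pow_one, mul_one, Int.cast_natCast] at hra hra'
    linear_combination hra' - hra
  rfl

variable (M)

theorem ruleStep_configuration (s : κ → ℕ) :
    M.RuleStep (configuration s) (configuration (M.step s)) := by
  have hs (c) : (s c : ℚ) = (s c % M.modulus : ℕ) + M.modulus * (s c / M.modulus : ℕ) :=
    mod_cast (Nat.mod_add_div _ _).symm
  have hm : (M.modulus : ℚ) ≠ 0 := mod_cast M.modulus_pos.ne'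
  refine ⟨M.residues s, fun c => ⟨(s c / M.modulus : ℕ), natCast_mem _ _, ?_⟩, funext ?_⟩
  · simpa only [configuration, toAffineSystem, residues, Int.cast_natCast, pow_one, mul_one] using
      hs c
  · rintro (_ | c)
    · rfl
    · rw [AffineSystem.ruleMap_some]
      simp only [configuration, toAffineSystem, hs c, step, residues, Bool.not_true,
        Int.cast_natCast, mul_one, pow_one, add_sub_cancel_left]
      push_cast
      field_simp

theorem reflTransGen_ruleStep_iff {t : κ → ℕ} (ht : M.step t = t) {x y : Option κ → ℚ}
    (hx : x none = 1) (hxy : M.RuleStep x y) :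
    Relation.ReflTransGen M.RuleStep x (configuration t) ↔
      Relation.ReflTransGen M.RuleStep y (configuration t) := by
  refine ⟨fun h => ?_, .head hxy⟩
  rcases h.cases_head with rfl | ⟨z, hxz, hz⟩
  · rw [hxy.unique hx (M.ruleStep_configuration t), ht]
  · rwa [hxy.unique hx hxz]

theorem exists_iterate_of_reflTransGen {s t : κ → ℕ}
    (h : Relation.ReflTransGen M.RuleStep (configuration s) (configuration t)) :
    ∃ i, M.step^[i] s = t := by
  suffices ∀ z, Relation.ReflTransGen M.RuleStep (configuration s) z →
      ∃ i, z = configuration (M.step^[i] s) by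
    obtain ⟨i, hi⟩ := this _ h
    exact ⟨i, (configuration_injective hi).symm⟩
  intro z hz
  induction hz with
  | refl => exact ⟨0, rfl⟩
  | tail _ hstep ih =>
    obtain ⟨i, rfl⟩ := ih
    refine ⟨i + 1, ?_⟩
    rw [hstep.unique rfl (M.ruleStep_configuration _), Function.iterate_succ_apply']

/-- The vectors from which a configuration can be reached, up to homotheties. -/
def Reaches (t : κ → ℕ) (x : Option κ → ℚ) : Prop :=
  ∃ k z, scale k • z = x ∧ z none = 1 ∧ Relation.ReflTransGen M.RuleStep z (configuration t)

theorem Reaches.ruleMap {t : κ → ℕ} (ht : M.step t = t) {j} {x : Option κ → ℚ}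
    (hj : x ∈ M.toAffineSystem.lattice j) (hx : M.Reaches t x) :
    M.Reaches t (M.toAffineSystem.ruleMap j x) := by
  obtain ⟨k, z, rfl, hz, hzt⟩ := hx
  have hzj : z ∈ M.toAffineSystem.lattice j := by
    simpa [smul_smul, scale_neg_mul_scale] using
      M.toAffineSystem.scale_smul_mem_lattice hj (-k)
  refine ⟨k, M.toAffineSystem.ruleMap j z, (map_smul _ _ _).symm, hz, ?_⟩
  obtain ⟨r, _ | _⟩ := j
  · exact .head ⟨r, M.toAffineSystem.ruleMap_mem_lattice hzj,
      M.toAffineSystem.ruleMap_bar (r, false) z⟩ hzt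
  · exact (M.reflTransGen_ruleStep_iff ht hz ⟨r, hzj, rfl⟩).1 hzt

/-- The translation by the vector that represents a configuration. -/
noncomputable def configurationElement (s : κ → ℕ) : M.toAffineSystem.hnnData.Extension :=
  M.toAffineSystem.hnnData.of (.translation (configuration s) (configuration_mem s))

theorem isConj_configurationElement_iff {s t : κ → ℕ} (ht : M.step t = t) :
    IsConj (M.configurationElement s) (M.configurationElement t) ↔ ∃ i, M.step^[i] s = t := by
  refine ⟨fun hc => M.exists_iterate_of_reflTransGen ?_, ?_⟩
  · obtain ⟨k, z, hkz, hz, hzt⟩ : M.Reaches t (configuration s) := by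
      refine M.toAffineSystem.of_isConj_translation ?_ (fun j x => Reaches.ruleMap M ht) hc.symm
        ⟨0, configuration t, by simp, rfl, .refl⟩
      rintro k _ ⟨l, z, rfl, hz, hzt⟩
      exact ⟨k + l, z, by rw [scale_add, mul_smul], hz, hzt⟩
    have hk : scale k = 1 := by
      simpa [hz, configuration] using congrFun hkz none
    rwa [← hkz, hk, one_smul]
  · rintro ⟨i, rfl⟩
    clear ht
    induction i with
    | zero => exact .refl _
    | succ i ih =>
      obtain ⟨r, hr, hstep⟩ := M.ruleStep_configuration (M.step^[i] s)
      rw [Function.iterate_succ_apply']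
      exact ih.trans (M.toAffineSystem.isConj_translation_ruleMap hr hstep)

variable [DecidableEq κ]

/-- The translation by a basis vector. -/
noncomputable def unitElement (c : κ) : M.toAffineSystem.hnnData.Extension :=
  M.toAffineSystem.hnnData.of <| .translation (Pi.single (some c) 1) fun d => by
    obtain rfl | hd := eq_or_ne d (some c)
    · simp [one_mem]
    · simp [Pi.single_eq_of_ne hd, zero_mem]

theorem configurationElement_update (s : κ → ℕ) (c : κ) (n : ℕ) :
    M.configurationElement (Function.update s c (s c + n)) =
      M.configurationElement s * M.unitElement c ^ n := by
  induction n with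
  | zero => simp
  | succ n ih =>
    rw [pow_succ, ← mul_assoc, ← ih, configurationElement, configurationElement, unitElement,
      ← map_mul]
    congr 1
    refine Homothety.ext (funext ?_) rfl
    rintro (_ | d)
    · simp [Homothety.translation, configuration]
    · obtain rfl | hd := eq_or_ne d c
      · simp [Homothety.translation, configuration, add_assoc]
      · simp [Homothety.translation, configuration, hd]

end ModularMachine

section Presentation

theorem FramedAction.exists_presentation {G V α : Type*} [Group G] [MulAction G V]
    (X : FramedAction G V α) (k : G →* Multiplicative (ℤ × ℤ)) {x y : G}
    (hx : k x = .ofAdd (1, 0)) (hy : k y = .ofAdd (0, 1)) (hxy : Commute x y) :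
    ∃ (a : ℕ) (f : FreeGroup (Fin a) →* G) (R : Finset (FreeGroup (Fin a))),
      Function.Surjective f ∧ FunEquiv (dehn R) (fun n => n ^ 2) ∧
        ∀ x y, IsConj (QuotientGroup.mk x : PresentedGroup (R : Set (FreeGroup (Fin a))))
          (QuotientGroup.mk y) ↔ IsConj (f x) (f y) := by
  obtain ⟨a, f, R, K, hf, hR, harea⟩ := X.exists_quadratic_area_bound
  have hker := normalClosure_eq_ker_of_hasArea hR fun w hw => ⟨_, harea w hw⟩
  have hK : HasQuadraticArea R K := fun w hw => harea w (hker ▸ hw : FreeGroup.mk w ∈ f.ker)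
  obtain ⟨B, M, hlower⟩ := hK.exists_sq_le_dehn_mul hf hker k hx hy hxy
  exact ⟨a, f, R, hf, hK.funEquiv_sq hlower, isConj_presentedGroup_iff hf hker⟩

theorem AffineSystem.exists_presentation {κ J : Type*} [Finite κ] [Finite J]
    (M : AffineSystem κ J) :
    ∃ (a : ℕ) (f : FreeGroup (Fin a) →* M.hnnData.Extension) (R : Finset (FreeGroup (Fin a))),
      Function.Surjective f ∧ FunEquiv (dehn R) (fun n => n ^ 2) ∧
        ∀ x y, IsConj (QuotientGroup.mk x : PresentedGroup (R : Set (FreeGroup (Fin a))))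
          (QuotientGroup.mk y) ↔ IsConj (f x) (f y) := by
  have := Fintype.ofFinite κ
  refine M.framedAction.exists_presentation M.levelHom
    (x := M.hnnData.of ⟨0, (1, 0), fun _ => zero_mem _⟩)
    (y := M.hnnData.of ⟨0, (0, 1), fun _ => zero_mem _⟩) (M.levelHom_of _) (M.levelHom_of _) ?_
  rw [Commute, SemiconjBy, ← map_mul, ← map_mul]
  congr 1
  exact Homothety.ext (by simp) (by simp)

theorem mk_flatten_replicate {β : Type*} (w : List (β × Bool)) (n : ℕ) :
    FreeGroup.mk (List.replicate n w).flatten = FreeGroup.mk w ^ n := by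
  induction n with
  | zero => rfl
  | succ n ih => rw [List.replicate_succ, List.flatten_cons, ← FreeGroup.mul_mk, ih, pow_succ']

theorem computable_flatten_replicate {α : Type*} [Primcodable α] (w : List α) :
    Computable fun n => (List.replicate n w).flatten := by
  have h : Primrec fun n : ℕ => (Nat.rec [] (fun _ l => w ++ l) n : List α) :=
    Primrec.nat_rec₁ _ (Primrec.list_append.comp (Primrec.const w) Primrec.snd)
  refine (h.of_eq fun n => ?_).to_comp
  induction n with
  | zero => rfl
  | succ n ih => rw [List.replicate_succ, List.flatten_cons, ← ih]

theorem not_computablePred_isConj {G α : Type*} [Group G] [Primcodable α]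
    {f : FreeGroup α →* G} (hf : Function.Surjective f) {F : ℕ → ℕ} (hF : Computable F) {g u h : G}
    (hu : ¬ ComputablePred fun n => IsConj (g * u ^ F n) h) :
    ¬ ComputablePred fun p : List (α × Bool) × List (α × Bool) =>
      IsConj (f (.mk p.1)) (f (.mk p.2)) := by
  have hmk (g : G) : ∃ w, f (.mk w) = g := by
    obtain ⟨z, rfl⟩ := hf g
    obtain ⟨w, rfl⟩ := Quot.exists_rep z
    exact ⟨w, rfl⟩
  obtain ⟨v, rfl⟩ := hmk g
  obtain ⟨w, rfl⟩ := hmk u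
  obtain ⟨w', rfl⟩ := hmk h
  have hwords : Computable fun n => (v ++ (List.replicate (F n) w).flatten, w') :=
    (Computable.list_append.comp (.const v) ((computable_flatten_replicate w).comp hF)).pair
      (.const w')
  rintro ⟨_, hconj⟩
  refine hu ((hconj.comp hwords).computablePred.of_eq fun n => ?_)
  simp only [← FreeGroup.mul_mk, map_mul, mk_flatten_replicate, map_pow]

end Presentation

open Turing

/-! ### Stack machines and their simulation by modular machines -/

/-- A machine with a stack of letters of `Γ` for each element of `K` and with states in `Q`. A step
depends on the state and on the top letters of the stacks; it pops these letters and pushes a word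
onto each stack. -/
structure StackMachine (Q K Γ : Type*) where
  next : Q → (K → Option Γ) → Q × (K → List Γ)

namespace StackMachine

variable {Q K Γ : Type*}

/-- One step of a stack machine, on pairs of a state and the contents of the stacks. -/
def step (M : StackMachine Q K Γ) (x : Q × (K → List Γ)) : Q × (K → List Γ) :=
  let p := M.next x.1 fun k => (x.2 k).head?
  (p.1, fun k => p.2 k ++ (x.2 k).tail)

/-- The restriction of a stack machine to a set of states that it does not leave. -/
def restrict (M : StackMachine Q K Γ) (s : Set Q) (hs : ∀ q ∈ s, ∀ tops, (M.next q tops).1 ∈ s) :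
    StackMachine s K Γ where
  next q tops := (⟨_, hs q q.2 tops⟩, (M.next q tops).2)

theorem semiconj_restrict (M : StackMachine Q K Γ) (s : Set Q)
    (hs : ∀ q ∈ s, ∀ tops, (M.next q tops).1 ∈ s) :
    Function.Semiconj (Prod.map (Subtype.val : s → Q) id) (M.restrict s hs).step M.step :=
  fun _ => rfl

section Encoding

variable [Fintype Q] [Fintype Γ]

variable (Q Γ) in
/-- The base in which the stacks are encoded. -/
def base : ℕ := 6 * (Fintype.card Q + Fintype.card Γ) + 1

/-- The digit that encodes a letter; it is nonzero, as `0` stands for the bottom of a stack. -/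
noncomputable def digit (a : Γ) : ℕ := Fintype.equivFin Γ a + 1

variable (Q) in
theorem digit_lt_base (a : Γ) : digit a < base Q Γ := by
  have := (Fintype.equivFin Γ a).2
  grind [digit, base]

/-- The number that encodes a stack. -/
noncomputable def stackValue (m : ℕ) (l : List Γ) : ℕ := Nat.ofDigits m (l.map digit)

theorem stackValue_div_base (l : List Γ) :
    stackValue (base Q Γ) l / base Q Γ = stackValue (base Q Γ) l.tail := by
  have hpos : 0 < base Q Γ := Nat.succ_pos _
  rw [stackValue, Nat.ofDigits_div_eq_ofDigits_tail hpos, ← List.map_tail, stackValue]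
  simpa using fun a _ => digit_lt_base Q a

theorem stackValue_mod_base (l : List Γ) :
    stackValue (base Q Γ) l % base Q Γ = l.head?.elim 0 digit := by
  cases l with
  | nil => rfl
  | cons a l => simp [stackValue, Nat.ofDigits_cons, Nat.mod_eq_of_lt (digit_lt_base Q a)]

/-- The residues of a modular machine that encode a state and the top letters of the stacks. -/
noncomputable def topResidues (p : Q × (K → Option Γ)) : Option K → Fin (base Q Γ)
  | none => ⟨Fintype.equivFin Q p.1, by have := (Fintype.equivFin Q p.1).2; grind [base]⟩
  | some k => ⟨(p.2 k).elim 0 digit, by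
      cases p.2 k with
      | none => exact Nat.succ_pos _
      | some a => exact digit_lt_base Q a⟩

theorem topResidues_injective : Function.Injective (topResidues (Q := Q) (K := K) (Γ := Γ)) := by
  rintro ⟨q, tops⟩ ⟨q', tops'⟩ h
  congr 1
  · simpa [topResidues, Fin.val_inj] using congrFun h none
  · funext k
    have hk : (tops k).elim 0 digit = (tops' k).elim 0 digit :=
      congrArg Fin.val (congrFun h (some k))
    revert hk
    cases tops k <;> cases tops' k <;> simp [digit, Fin.val_inj]

/-- The modular machine that simulates a stack machine. The register `none` contains the state. -/
noncomputable def toModularMachine (M : StackMachine Q K Γ) : ModularMachine (Option K) where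
  modulus := base Q Γ
  coprime_six := by rw [base, Nat.coprime_mul_left_add_left]; exact Nat.coprime_one_left 6
  newResidue := Function.extend topResidues
    (fun p c => c.elim (Fintype.equivFin Q (M.next p.1 p.2).1)
      fun k => stackValue (base Q Γ) ((M.next p.1 p.2).2 k)) 0
  newExponent := Function.extend topResidues (fun p c => c.elim 1
    fun k => ((M.next p.1 p.2).2 k).length) 0

/-- The configuration of a modular machine that encodes a configuration of a stack machine. -/
noncomputable def encode (x : Q × (K → List Γ)) (c : Option K) : ℕ :=
  c.elim (Fintype.equivFin Q x.1) fun k => stackValue (base Q Γ) (x.2 k)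

theorem fst_eq_of_encode_eq {x y : Q × (K → List Γ)} (h : encode x = encode y) :
    x.1 = y.1 := by
  simpa [encode, Fin.val_inj] using congrFun h none

variable (M : StackMachine Q K Γ)

theorem residues_encode (x : Q × (K → List Γ)) :
    M.toModularMachine.residues (encode x) = topResidues (x.1, fun k => (x.2 k).head?) := by
  funext c
  refine Fin.ext ?_
  cases c with
  | none => exact Nat.mod_eq_of_lt (topResidues (x.1, fun k => (x.2 k).head?) none).2
  | some k => exact stackValue_mod_base (x.2 k)

theorem semiconj_encode : Function.Semiconj encode M.step M.toModularMachine.step := by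
  intro x
  funext c
  rw [ModularMachine.step, residues_encode]
  simp only [toModularMachine, topResidues_injective.extend_apply]
  cases c with
  | none =>
    have hlt : (Fintype.equivFin Q x.1 : ℕ) < base Q Γ :=
      (topResidues (x.1, fun k => (x.2 k).head?) none).2
    simp [encode, step, Nat.div_eq_of_lt hlt]
  | some k =>
    simp only [encode, step, Option.elim_some, stackValue_div_base]
    simp [stackValue, Nat.ofDigits_append]

end Encoding

section TM2

variable {Λ σ : Type*}

theorem some_mem_stmts (M : Λ → TM2.Stmt (fun _ : K => Γ) Λ σ) {S : Finset Λ} {l : Λ}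
    (hl : l ∈ S) : some (M l) ∈ TM2.stmts M S := by
  classical
  simp only [TM2.stmts, Finset.some_mem_insertNone, Finset.mem_biUnion]
  exact ⟨l, hl, TM2.stmts₁_self⟩

theorem toList_head?_append_tail (l : List Γ) : l.head?.toList ++ l.tail = l := by cases l <;> rfl

variable [DecidableEq K]

/-- The stack machine that executes the program `M` one statement at a time. Its state consists of
the statement that is to be executed, if any, and the internal memory. -/
def ofTM2 (M : Λ → TM2.Stmt (fun _ : K => Γ) Λ σ) :
    StackMachine (Option (TM2.Stmt (fun _ : K => Γ) Λ σ) × σ) K Γ where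
  next
    | (some (.push k f q), v), tops =>
      ((some q, v), Function.update (fun k => (tops k).toList) k (f v :: (tops k).toList))
    | (some (.peek k f q), v), tops => ((some q, f v (tops k)), fun k => (tops k).toList)
    | (some (.pop k f q), v), tops =>
      ((some q, f v (tops k)), Function.update (fun k => (tops k).toList) k [])
    | (some (.load f q), v), tops => ((some q, f v), fun k => (tops k).toList)
    | (some (.branch f q q'), v), tops =>
      ((some (cond (f v) q q'), v), fun k => (tops k).toList)
    | (some (.goto f), v), tops => ((some (M (f v)), v), fun k => (tops k).toList)
    | (some .halt, v), tops => ((none, v), fun k => (tops k).toList)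
    | (none, v), tops => ((none, v), fun k => (tops k).toList)

variable (M : Λ → TM2.Stmt (fun _ : K => Γ) Λ σ)

/-- A configuration of a `TM2` program as a configuration of the stack machine `ofTM2 M`. -/
def ofCfg (c : TM2.Cfg (fun _ : K => Γ) Λ σ) :
    (Option (TM2.Stmt (fun _ : K => Γ) Λ σ) × σ) × (K → List Γ) := ((c.l.map M, c.var), c.stk)

theorem update_append_tail (T : K → List Γ) (k : K) (w : List Γ) :
    (fun k' => Function.update (fun k => (T k).head?.toList) k w k' ++ (T k').tail) =
      Function.update T k (w ++ (T k).tail) := by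
  funext k'
  obtain rfl | hk := eq_or_ne k' k
  · simp
  · simp [hk, toList_head?_append_tail]

/-- Before control is passed to another label, each step only strips a statement of the program. -/
theorem step_ofTM2 (q : TM2.Stmt (fun _ : K => Γ) Λ σ) (v : σ) (T : K → List Γ) :
    (∃ q' v' T', (ofTM2 M).step ((some q, v), T) = ((some q', v'), T') ∧
      TM2.stepAux q v T = TM2.stepAux q' v' T' ∧ sizeOf q' < sizeOf q) ∨
    (ofTM2 M).step ((some q, v), T) = ofCfg M (TM2.stepAux q v T) := by
  cases q with
  | push k f q =>
    refine .inl ⟨q, v, Function.update T k (f v :: T k), ?_, rfl, by simp⟩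
    simp [step, ofTM2, update_append_tail, toList_head?_append_tail]
  | peek k f q =>
    refine .inl ⟨q, f v (T k).head?, T, ?_, rfl, by simp⟩
    simp [step, ofTM2, toList_head?_append_tail]
  | pop k f q =>
    refine .inl ⟨q, f v (T k).head?, Function.update T k (T k).tail, ?_, rfl, by simp⟩
    simp [step, ofTM2, update_append_tail]
  | load f q =>
    refine .inl ⟨q, f v, T, ?_, rfl, by simp⟩
    simp [step, ofTM2, toList_head?_append_tail]
  | branch f q q' =>
    refine .inl ⟨cond (f v) q q', v, T, ?_, ?_, ?_⟩
    · simp [step, ofTM2, toList_head?_append_tail]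
    · cases hf : f v <;> simp [TM2.stepAux, hf]
    · cases f v <;> grind
  | goto f => exact .inr (by simp [step, ofTM2, ofCfg, TM2.stepAux, toList_head?_append_tail])
  | halt => exact .inr (by simp [step, ofTM2, ofCfg, TM2.stepAux, toList_head?_append_tail])

theorem step_ofTM2_none (v : σ) (T : K → List Γ) :
    (ofTM2 M).step ((none, v), T) = ((none, v), T) := by
  simp [step, ofTM2, toList_head?_append_tail]

theorem exists_iterate_eq_ofCfg_stepAux (q : TM2.Stmt (fun _ : K => Γ) Λ σ) (v : σ)
    (T : K → List Γ) :
    ∃ i, (ofTM2 M).step^[i] ((some q, v), T) = ofCfg M (TM2.stepAux q v T) := by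
  obtain ⟨q', v', T', hstep, haux, _⟩ | hstep := step_ofTM2 M q v T
  · obtain ⟨i, hi⟩ := exists_iterate_eq_ofCfg_stepAux q' v' T'
    exact ⟨i + 1, by rw [Function.iterate_succ_apply, hstep, hi, haux]⟩
  · exact ⟨1, hstep⟩
termination_by sizeOf q

theorem exists_iterate_eq_ofCfg_of_mem_eval {c d : TM2.Cfg (fun _ : K => Γ) Λ σ}
    (h : d ∈ StateTransition.eval (TM2.step M) c) :
    ∃ i, (ofTM2 M).step^[i] (ofCfg M c) = ofCfg M d := by
  have hreach := (StateTransition.mem_eval.1 h).1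
  clear h
  induction hreach with
  | refl => exact ⟨0, rfl⟩
  | @tail b _ _ hstep ih =>
    obtain ⟨i, hi⟩ := ih
    obtain ⟨_ | l, v, T⟩ := b
    · simp [TM2.step] at hstep
    · obtain rfl := Option.some.inj hstep
      obtain ⟨j, hj⟩ := exists_iterate_eq_ofCfg_stepAux M (M l) v T
      exact ⟨j + i, by rw [Function.iterate_add_apply, hi, ← hj]; rfl⟩

theorem eval_some (l : Λ) (v : σ) (T : K → List Γ) :
    StateTransition.eval (TM2.step M) ⟨some l, v, T⟩ =
      StateTransition.eval (TM2.step M) (TM2.stepAux (M l) v T) :=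
  StateTransition.reaches_eval (.single rfl)

theorem eval_dom_of_iterate_eq_none {i : ℕ} {c : TM2.Cfg (fun _ : K => Γ) Λ σ}
    (h : ((ofTM2 M).step^[i] (ofCfg M c)).1.1 = none) :
    (StateTransition.eval (TM2.step M) c).Dom := by
  obtain ⟨_ | l, v, T⟩ := c
  · exact Part.dom_iff_mem.2 ⟨_, StateTransition.mem_eval.2 ⟨.refl, rfl⟩⟩
  rw [eval_some]
  change ((ofTM2 M).step^[i] ((some (M l), v), T)).1.1 = none at h
  generalize M l = q at h
  induction i generalizing q v T with
  | zero => simp at h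
  | succ i ih =>
    rw [Function.iterate_succ_apply] at h
    obtain ⟨q', v', T', hstep, haux, -⟩ | hstep := step_ofTM2 M q v T
    · rw [haux]
      exact ih v' T' q' (hstep ▸ h)
    · rw [hstep] at h
      generalize TM2.stepAux q v T = c at h
      obtain ⟨_ | l, v', T'⟩ := c
      · exact Part.dom_iff_mem.2 ⟨_, StateTransition.mem_eval.2 ⟨.refl, rfl⟩⟩
      · rw [eval_some]
        exact ih v' T' (M l) h

theorem next_ofTM2_mem_stmts {S : Finset Λ} (hS : ∀ l ∈ S, TM2.SupportsStmt S (M l))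
    {q : Option (TM2.Stmt (fun _ : K => Γ) Λ σ)} (hq : q ∈ TM2.stmts M S) (v : σ)
    (tops : K → Option Γ) : ((ofTM2 M).next (q, v) tops).1.1 ∈ TM2.stmts M S := by
  classical
  have hnone : none ∈ TM2.stmts M S := Finset.none_mem_insertNone
  obtain _ | q := q
  · exact hnone
  have hsupports : TM2.SupportsStmt S q := by
    simp only [TM2.stmts, Finset.some_mem_insertNone, Finset.mem_biUnion] at hq
    obtain ⟨l, hl, hql⟩ := hq
    exact TM2.stmts₁_supportsStmt_mono hql (hS l hl)
  have hsub (q') (hq' : q' ∈ TM2.stmts₁ q) : some q' ∈ TM2.stmts M S := TM2.stmts_trans hq' hq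
  cases q with
  | push | peek | pop | load =>
    exact hsub _ (by rw [TM2.stmts₁]; exact Finset.mem_insert_of_mem TM2.stmts₁_self)
  | branch f q q' =>
    refine hsub _ ?_
    rw [TM2.stmts₁]
    cases f v <;> simp [TM2.stmts₁_self]
  | goto f => exact some_mem_stmts M (hsupports v)
  | halt => exact hnone

variable [Fintype Γ] [Finite σ]

/-- The value of the register of the state at the start is `q`. -/
theorem exists_modularMachine_iterate_eq_iff {S : Finset Λ}
    (hS : ∀ l ∈ S, TM2.SupportsStmt S (M l)) {l : Λ} (hl : l ∈ S) (v : σ)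
    (d : TM2.Cfg (fun _ : K => Γ) Λ σ) (hd : d.l = none) :
    ∃ (N : ModularMachine (Option K)) (q : ℕ) (t : Option K → ℕ), N.step t = t ∧
      ∀ T, (∀ c ∈ StateTransition.eval (TM2.step M) ⟨some l, v, T⟩, c = d) →
        ((∃ i, N.step^[i] (fun c => c.elim q fun k => stackValue N.modulus (T k)) = t) ↔
          (StateTransition.eval (TM2.step M) ⟨some l, v, T⟩).Dom) := by
  let s : Set (Option (TM2.Stmt (fun _ : K => Γ) Λ σ) × σ) :=
    (TM2.stmts M S : Set (Option (TM2.Stmt (fun _ : K => Γ) Λ σ))) ×ˢ Set.univ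
  have : Fintype s := ((TM2.stmts M S).finite_toSet.prod Set.finite_univ).fintype
  have hs (q) (hq : q ∈ s) (tops) : ((ofTM2 M).next q tops).1 ∈ s :=
    ⟨next_ofTM2_mem_stmts M hS hq.1 q.2 tops, trivial⟩
  let N := (ofTM2 M).restrict s hs
  let start (T : K → List Γ) : s × (K → List Γ) :=
    (⟨(some (M l), v), some_mem_stmts M hl, trivial⟩, T)
  let final : s × (K → List Γ) := (⟨(none, d.var), Finset.none_mem_insertNone, trivial⟩, d.stk)
  have hfinal : Prod.map Subtype.val id final = ofCfg M d := by simp [final, ofCfg, hd]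
  have hN := (ofTM2 M).semiconj_restrict s hs
  have hinj : Function.Injective (Prod.map (Subtype.val : s → _) (id : (K → List Γ) → _)) :=
    Subtype.val_injective.prodMap Function.injective_id
  have hiter (i : ℕ) (T) := N.semiconj_encode.iterate_right i (start T)
  refine ⟨N.toModularMachine, Fintype.equivFin s (start fun _ => []).1, encode final, ?_,
    fun T hT => ⟨fun ⟨i, hi⟩ => ?_, fun h => ?_⟩⟩
  · have hstep : N.step final = final := hinj ((hN final).trans (step_ofTM2_none M _ _))
    rw [← N.semiconj_encode, hstep]
  · have hstate := fst_eq_of_encode_eq ((hiter i T).trans hi)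
    refine eval_dom_of_iterate_eq_none M (i := i) ?_
    change ((ofTM2 M).step^[i] (Prod.map Subtype.val id (start T))).1.1 = none
    rw [← hN.iterate_right i, Prod.map_fst, hstate]
  · obtain ⟨c, hc⟩ := Part.dom_iff_mem.1 h
    obtain ⟨i, hi⟩ := exists_iterate_eq_ofCfg_of_mem_eval M (hT c hc ▸ hc)
    have hreach : N.step^[i] (start T) = final :=
      hinj ((hN.iterate_right i (start T)).trans (hi.trans hfinal.symm))
    exact ⟨i, (hiter i T).symm.trans (congrArg encode hreach)⟩

end TM2

end StackMachine

open Turing Turing.PartrecToTM2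

/-! ### A modular machine with an undecidable reachability problem -/

theorem trNat_two_mul {n : ℕ} (hn : n ≠ 0) : trNat (2 * n) = Γ'.bit0 :: trNat n := by
  have hbit : ((2 * n : ℕ) : Num) = Num.bit0 (n : Num) := by
    rw [← Num.bit0_of_bit0, Nat.cast_mul, Nat.cast_two, two_mul]
  have hne : (n : Num) ≠ 0 := by exact_mod_cast hn
  rw [trNat, hbit, trNat]
  cases h : (n : Num) with
  | zero => exact absurd h hne
  | pos p => rfl

theorem trNat_two_mul_add_one (n : ℕ) : trNat (2 * n + 1) = Γ'.bit1 :: trNat n := by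
  have hbit : ((2 * n + 1 : ℕ) : Num) = Num.bit1 (n : Num) := by
    rw [← Num.bit1_of_bit1, Nat.cast_add_one, Nat.cast_mul, Nat.cast_two, two_mul]
  rw [trNat, hbit, trNat]
  cases (n : Num) <;> rfl

namespace StackMachine

theorem stackValue_trList_zero (m : ℕ) : stackValue m (trList [0]) = digit Γ'.cons := by
  simp [trList, stackValue]

theorem stackValue_trList_of_ne_zero (m : ℕ) {n : ℕ} (hn : n ≠ 0) :
    stackValue m (trList [n]) =
      (if n % 2 = 0 then digit Γ'.bit0 else digit Γ'.bit1) + m * stackValue m (trList [n / 2]) := by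
  obtain ⟨k, rfl | rfl⟩ := n.even_or_odd'
  · rw [Nat.mul_div_cancel_left _ two_pos]
    simp [trList, stackValue, trNat_two_mul (n := k) (by omega), Nat.ofDigits_cons]
  · rw [show (2 * k + 1) / 2 = k by omega, if_neg (by omega)]
    simp [trList, stackValue, trNat_two_mul_add_one, Nat.ofDigits_cons]

theorem computable_stackValue_trList (m : ℕ) : Computable fun n => stackValue m (trList [n]) := by
  have hprim : Primrec₂ fun (_ : Unit) n => stackValue m (trList [n]) := by
    refine Primrec.nat_strong_rec _ (g := fun _ l => if l.length = 0 then some (digit Γ'.cons) else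
      l[l.length / 2]?.map fun x =>
        (if l.length % 2 = 0 then digit Γ'.bit0 else digit Γ'.bit1) + m * x) ?_ fun _ n => ?_
    · have hlen : Primrec fun p : Unit × List ℕ => p.2.length :=
        Primrec.list_length.comp Primrec.snd
      refine Primrec.ite (Primrec.eq.comp hlen (.const 0)) (.const _) (Primrec.option_map
        (Primrec.list_getElem?.comp .snd (Primrec.nat_div.comp hlen (.const 2))) ?_)
      refine Primrec.nat_add.comp (Primrec.ite (Primrec.eq.comp
        (Primrec.nat_mod.comp (hlen.comp .fst) (.const 2)) (.const 0)) (.const _) (.const _)) ?_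
      exact Primrec.nat_mul.comp (.const m) .snd
    · simp only [List.length_map, List.length_range]
      split_ifs with hn hmod
      · rw [hn, stackValue_trList_zero]
      all_goals rw [stackValue_trList_of_ne_zero m hn]; simp [hmod, show n / 2 < n by omega]
  exact (hprim.comp (.const ()) .id).to_comp

end StackMachine

theorem exists_code_eval_eq {p : ℕ → Prop} (hp : REPred p) :
    ∃ c : ToPartrec.Code, ∀ n, c.eval [n] = Part.assert (p n) fun _ => Part.some [0] := by
  have hzero : Partrec fun n => (Part.assert (p n) fun _ => Part.some ()).map fun _ => 0 :=
    hp.map (Computable.const 0).to₂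
  obtain ⟨c, hc⟩ := ToPartrec.Code.exists_code (Nat.Partrec'.part_iff₁.2 hzero)
  refine ⟨c, fun n => (hc ⟨[n], rfl⟩).trans (Part.ext fun l => ?_)⟩
  simpa [List.Vector.head] using fun _ => eq_comm

open StackMachine in
theorem exists_modularMachine_reaches_iff {p : ℕ → Prop} (hp : REPred p) :
    ∃ (M : ModularMachine (Option K')) (s t : Option K' → ℕ) (c : Option K') (F : ℕ → ℕ),
      M.step t = t ∧ Computable F ∧
        ∀ n, (∃ i, M.step^[i] (Function.update s c (s c + F n)) = t) ↔ p n := by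
  obtain ⟨code, hcode⟩ := exists_code_eval_eq hp
  have heval (n : ℕ) : StateTransition.eval (TM2.step tr) (init code [n]) =
      Part.assert (p n) fun _ => Part.some (halt [0]) := by
    rw [tr_eval, hcode]
    exact Part.ext fun d => by simpa using fun _ => eq_comm
  have hsupports := tr_supports code Cont'.halt
  obtain ⟨M, q, t, ht, hM⟩ := exists_modularMachine_iterate_eq_iff tr hsupports.2 hsupports.1 none
    (halt [0]) rfl
  refine ⟨M, fun c => c.elim q fun _ => 0, t, some K'.main,
    fun n => stackValue M.modulus (trList [n]), ht, computable_stackValue_trList _, fun n => ?_⟩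
  have hstart : Function.update (fun c : Option K' => c.elim q fun _ => 0) (some K'.main)
      (0 + stackValue M.modulus (trList [n])) = fun c => c.elim q fun k =>
        stackValue M.modulus (K'.elim (trList [n]) [] [] [] k) := by
    funext c
    obtain _ | _ | _ | _ | _ := c <;> simp [stackValue]
  have hreach := hM (K'.elim (trList [n]) [] [] []) fun d hd => by
    have hd' : d ∈ StateTransition.eval (TM2.step tr) (init code [n]) := hd
    rw [heval] at hd'
    exact Part.mem_some_iff.1 (Part.mem_assert_iff.1 hd').2
  have hdom : (StateTransition.eval (TM2.step tr) (init code [n])).Dom ↔ p n := by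
    rw [heval]
    simp [Part.assert]
  exact (hstart ▸ hreach).trans hdom

theorem exists_modularMachine_not_computablePred :
    ∃ (M : ModularMachine (Option K')) (s t : Option K' → ℕ) (c : Option K') (F : ℕ → ℕ),
      M.step t = t ∧ Computable F ∧
        ¬ ComputablePred fun n => ∃ i, M.step^[i] (Function.update s c (s c + F n)) = t := by
  obtain ⟨M, s, t, c, F, ht, hF, hM⟩ := exists_modularMachine_reaches_iff
    (p := fun n => (Nat.Partrec.Code.eval (Denumerable.ofNat Nat.Partrec.Code n) 0).Dom)
    (Partrec.comp (ComputablePred.halting_problem_re 0) (Computable.ofNat _))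
  refine ⟨M, s, t, c, F, ht, hF, fun h => ComputablePred.halting_problem 0 ?_⟩
  simp only [hM] at h
  exact ComputablePred.computable_of_manyOneReducible
    ⟨Encodable.encode, Computable.encode, fun code => by rw [Denumerable.ofNat_encode]⟩ h

instance finite_K' : Finite K' :=
  .of_surjective ![K'.main, K'.rev, K'.aux, K'.stack] fun k => by
    cases k
    exacts [⟨0, rfl⟩, ⟨1, rfl⟩, ⟨2, rfl⟩, ⟨3, rfl⟩]

end QuadraticDehn

/-- There is a finitely presented group `G = ⟨Fin a ∣ R⟩` whose Dehn function is
equivalent to `n²` and whose conjugacy problem is undecidable: the set of pairs of words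
over the alphabet `(Fin a)^{±1}` representing conjugate elements of `G` is not
recursive. -/
theorem exists_fp_group_quadratic_dehn_undecidable_conjugacy :
    ∃ (a : ℕ) (R : Finset (FreeGroup (Fin a))),
      FunEquiv (dehn R) (fun n => n ^ 2) ∧
      ¬ ComputablePred (fun p : List (Fin a × Bool) × List (Fin a × Bool) =>
          IsConj
            ((QuotientGroup.mk (FreeGroup.mk p.1) :
              PresentedGroup (R : Set (FreeGroup (Fin a)))))
            (QuotientGroup.mk (FreeGroup.mk p.2))) := by
  classical
  obtain ⟨M, s, t, c, F, ht, hF, hundec⟩ := QuadraticDehn.exists_modularMachine_not_computablePred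
  obtain ⟨a, f, R, hf, hdehn, hconj⟩ := M.toAffineSystem.exists_presentation
  refine ⟨a, R, hdehn, ?_⟩
  simp only [hconj]
  refine QuadraticDehn.not_computablePred_isConj hf hF (g := M.configurationElement s)
    (u := M.unitElement c) (h := M.configurationElement t) ?_
  simpa only [← M.configurationElement_update, M.isConj_configurationElement_iff ht] using hundec
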